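/- arXiv:1402.1585 — 7 statements merged into one kernel-verified Lean document; each statement's English description precedes it below -/
import Mathlib

section
/- For all positive integers r, s, t ≥ 1 with k = r+s+t−1 ≥ 3 and every τ in the complex upper half-plane, one has 0 = Σ_{i+j=k, i,j≥1} C(i−1,t−1)C(j−1,s−1)(−1)^{i+r} (P_{i,j}(τ) − (−1)^j E_{i+j}(τ)) + Σ_{j+h=k, j,h≥1} C(j−1,r−1)C(h−1,t−1)(−1)^{j+s} (P_{j,h}(τ) − (−1)^h E_{j+h}(τ)) + Σ_{h+i=k, h,i≥1} C(h−1,s−1)C(i−1,r−1)(−1)^{h+t} (P_{h,i}(τ) − (−1)^i E_{h+i}(τ)), where C(a,b) denotes the binomial coefficient. -/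
open Complex Finset Filter

/-- The Eisenstein series `E_k` as a `q`-series, defined on `ℂ`
(meaningful on the upper half-plane), with `E_k = 0` for `k` odd and `k < 2`. -/
noncomputable def Eis (k : ℕ) (τ : ℂ) : ℂ :=
  if Even k ∧ 2 ≤ k then
    (2 / (Nat.factorial (k - 1) : ℂ)) *
      (-(bernoulli k : ℂ) / (2 * k) +
        ∑' n : ℕ, (∑ d ∈ (n + 1).divisors, (d : ℂ) ^ (k - 1)) *
          Complex.exp (2 * Real.pi * Complex.I * τ) ^ (n + 1))
  else 0

/-- `E_k'(τ) = (2π√-1)⁻¹ dE_k/dτ`. -/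
noncomputable def Eis' (k : ℕ) (τ : ℂ) : ℂ :=
  (2 * Real.pi * Complex.I)⁻¹ * deriv (Eis k) τ

/-- `P_{r,s} = E_r E_s + δ_{r,2} E_s'/s + δ_{s,2} E_r'/r`. -/
noncomputable def Pf (r s : ℕ) (τ : ℂ) : ℂ :=
  Eis r τ * Eis s τ + (if r = 2 then Eis' s τ / s else 0) +
    (if s = 2 then Eis' r τ / r else 0)

/-!
With `Q_{i,j} = P_{i,j} - (-1)^j E_{i+j}`, the generating function
`V(x, y) = ∑ Q_{i,j} x^(i-1) y^(j-1)` satisfies `V(x, y) + V(y, z) + V(z, x) = 3 E_2` whenever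
`x + y + z = 0`. Substituting `x = x₀ - x₂`, `y = x₁ - x₀`, `z = x₂ - x₁` and reading off the
coefficient of `x₀^(r-1) x₁^(s-1) x₂^(t-1)` gives the relation, since `3 E_2` contributes to the
constant term only.

Up to its pole, the generating function of the `E_k` is the trigonometric expansion of the
Weierstrass zeta function, `∑ (p^d - p^(-d)) q^(d e) - (p + 1) / (2 (p - 1))` with `p = e^x`, and
the cyclic identity becomes its addition formula: a quadratic relation between the series at three
points with product `1`. On coefficients of `q^n` this is Liouville's elementary method: for a
function `F` invariant under `(u, v) ↦ (v, v - u)`, the sums of `F (a, c)` and `F (a, -c)` over the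
positive solutions of `a b + c d = n` are compared through `(a, b, c, d) ↦ (c, b + d, a - c, b)`.
-/

/-- The quadruples `(a, b, c, d)` of positive integers with `a * b + c * d = n`. -/
def bilinearQuads (n : ℕ) : Finset (ℕ × ℕ × ℕ × ℕ) :=
  {v ∈ Icc 1 n ×ˢ Icc 1 n ×ˢ Icc 1 n ×ˢ Icc 1 n | v.1 * v.2.1 + v.2.2.1 * v.2.2.2 = n}

lemma mem_bilinearQuads {n a b c d : ℕ} :
    (a, b, c, d) ∈ bilinearQuads n ↔ 0 < a ∧ 0 < b ∧ 0 < c ∧ 0 < d ∧ a * b + c * d = n := by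
  simp only [bilinearQuads, mem_filter, mem_product, mem_Icc]
  refine ⟨fun h => by omega, fun ⟨ha, hb, hc, hd, _⟩ => ?_⟩
  have := Nat.le_mul_of_pos_right a hb
  have := Nat.le_mul_of_pos_left b ha
  have := Nat.le_mul_of_pos_right c hd
  have := Nat.le_mul_of_pos_left d hc
  omega

lemma sum_antidiagonal_sum_divisors {M : Type*} [AddCommMonoid M] (n : ℕ) (f : ℕ → ℕ → M) :
    ∑ m ∈ antidiagonal n, ∑ a ∈ m.1.divisors, ∑ c ∈ m.2.divisors, f a c =
      ∑ v ∈ bilinearQuads n, f v.1 v.2.2.1 := by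
  have sum_product_divisorsAntidiagonal (m : ℕ × ℕ) :
      ∑ a ∈ m.1.divisors, ∑ c ∈ m.2.divisors, f a c =
        ∑ w ∈ m.1.divisorsAntidiagonal ×ˢ m.2.divisorsAntidiagonal, f w.1.1 w.2.1 := by
    rw [sum_product, ← Nat.sum_divisorsAntidiagonal fun a _ => ∑ c ∈ m.2.divisors, f a c]
    exact sum_congr rfl fun a _ => (Nat.sum_divisorsAntidiagonal fun c _ => f a.1 c).symm
  simp_rw [sum_product_divisorsAntidiagonal]
  rw [sum_sigma']
  refine sum_bij' (fun w _ => (w.2.1.1, w.2.1.2, w.2.2.1, w.2.2.2))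
    (fun v _ => ⟨(v.1 * v.2.1, v.2.2.1 * v.2.2.2), (v.1, v.2.1), v.2.2⟩) ?_ ?_ ?_ ?_ ?_
  · rintro ⟨⟨m₁, m₂⟩, ⟨a, b⟩, c, d⟩ hw
    simp only [mem_sigma, HasAntidiagonal.mem_antidiagonal, mem_product,
      Nat.mem_divisorsAntidiagonal] at hw
    obtain ⟨rfl, ⟨rfl, hab⟩, rfl, hcd⟩ := hw
    simp only [mem_bilinearQuads]
    grind
  · rintro ⟨a, b, c, d⟩ hv
    obtain ⟨ha, hb, hc, hd, h⟩ := mem_bilinearQuads.mp hv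
    simp [h, ha.ne', hb.ne', hc.ne', hd.ne']
  · rintro ⟨⟨m₁, m₂⟩, ⟨a, b⟩, c, d⟩ hw
    simp only [mem_sigma, HasAntidiagonal.mem_antidiagonal, mem_product,
      Nat.mem_divisorsAntidiagonal] at hw
    obtain ⟨-, ⟨rfl, -⟩, rfl, -⟩ := hw
    rfl
  · rintro ⟨a, b, c, d⟩ -
    rfl
  · intros
    rfl

lemma sum_eq_sum_filter_trichotomy {ι κ M : Type*} [LinearOrder κ] [AddCommMonoid M]
    (s : Finset ι) (f : ι → M) (x y : ι → κ) :
    ∑ i ∈ s, f i = ∑ i ∈ s with y i < x i, f i + ∑ i ∈ s with x i < y i, f i +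
      ∑ i ∈ s with x i = y i, f i := by
  simp only [sum_filter, ← sum_add_distrib]
  refine sum_congr rfl fun i _ => ?_
  rcases lt_trichotomy (x i) (y i) with h | h | h
  · simp [h, h.ne, h.not_gt]
  · simp [h]
  · simp [h, h.ne', h.not_gt]

section Liouville

variable {M : Type*} [AddCommMonoid M] {F : ℤ → ℤ → M}

lemma sum_bilinearQuads_fst_gt (hF : ∀ u v, F u v = F v (v - u)) (n : ℕ) :
    ∑ v ∈ bilinearQuads n with v.2.2.1 < v.1, F v.1 v.2.2.1 =
      ∑ v ∈ bilinearQuads n with v.2.2.2 < v.2.1, F v.1 (-v.2.2.1) := by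
  refine sum_nbij' (fun (a, b, c, d) => (c, b + d, a - c, b))
    (fun (a, b, c, d) => (a + c, d, a, b - d)) ?_ ?_ ?_ ?_ ?_ <;>
    rintro ⟨a, b, c, d⟩ hv <;>
    simp only [mem_filter, mem_bilinearQuads, Prod.mk.injEq, true_and, and_true] at hv ⊢ <;>
    obtain ⟨⟨ha, hb, hc, hd, h⟩, hlt⟩ := hv
  · obtain ⟨e, rfl⟩ := Nat.exists_eq_add_of_le hlt.le
    rw [Nat.add_sub_cancel_left]
    grind
  · obtain ⟨e, rfl⟩ := Nat.exists_eq_add_of_le hlt.le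
    rw [Nat.add_sub_cancel_left]
    grind
  · omega
  · omega
  · rw [hF, Nat.cast_sub hlt.le, neg_sub]

lemma sum_bilinearQuads_fst_lt (hF : ∀ u v, F u v = F v (v - u)) (n : ℕ) :
    ∑ v ∈ bilinearQuads n with v.1 < v.2.2.1, F v.1 v.2.2.1 =
      ∑ v ∈ bilinearQuads n with v.2.1 < v.2.2.2, F v.1 (-v.2.2.1) := by
  refine sum_nbij' (fun (a, b, c, d) => (c - a, d, a, b + d))
    (fun (a, b, c, d) => (c, d - b, a + c, b)) ?_ ?_ ?_ ?_ ?_ <;>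
    rintro ⟨a, b, c, d⟩ hv <;>
    simp only [mem_filter, mem_bilinearQuads, Prod.mk.injEq, true_and, and_true] at hv ⊢ <;>
    obtain ⟨⟨ha, hb, hc, hd, h⟩, hlt⟩ := hv
  · obtain ⟨e, rfl⟩ := Nat.exists_eq_add_of_le hlt.le
    rw [Nat.add_sub_cancel_left]
    grind
  · obtain ⟨e, rfl⟩ := Nat.exists_eq_add_of_le hlt.le
    rw [Nat.add_sub_cancel_left]
    grind
  · omega
  · omega
  · rw [hF, hF, Nat.cast_sub hlt.le, sub_sub_cancel_left]

end Liouville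

lemma sum_bilinearQuads_fst_eq {M : Type*} [AddCommMonoid M] (n : ℕ) (f : ℕ → ℕ → M) :
    ∑ v ∈ bilinearQuads n with v.1 = v.2.2.1, f v.1 v.2.1 =
      ∑ m ∈ n.divisors, ∑ b ∈ Ico 1 (n / m), f m b := by
  rw [sum_sigma']
  refine sum_bij' (fun v _ => ⟨v.1, v.2.1⟩) (fun w _ => (w.1, w.2, w.1, n / w.1 - w.2))
    ?_ ?_ ?_ ?_ ?_
  · rintro ⟨a, b, c, d⟩ hv
    simp only [mem_filter, mem_bilinearQuads] at hv
    obtain ⟨⟨ha, hb, -, hd, rfl⟩, rfl⟩ := hv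
    rw [← mul_add]
    simp only [mem_sigma, Nat.mem_divisors, mem_Ico, Nat.mul_div_cancel_left _ ha]
    exact ⟨⟨dvd_mul_right .., by positivity⟩, by omega⟩
  · rintro ⟨m, b⟩ hw
    simp only [mem_sigma, Nat.mem_divisors, mem_Ico] at hw
    obtain ⟨⟨⟨e, rfl⟩, h0⟩, hb, hbe⟩ := hw
    have hm : 0 < m := Nat.pos_of_ne_zero (left_ne_zero_of_mul h0)
    rw [Nat.mul_div_cancel_left _ hm] at hbe ⊢
    simp only [mem_filter, mem_bilinearQuads, ← mul_add, Nat.add_sub_cancel' hbe.le,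
      and_true]
    exact ⟨hm, hb, hm, Nat.sub_pos_of_lt hbe⟩
  · rintro ⟨a, b, c, d⟩ hv
    simp only [mem_filter, mem_bilinearQuads] at hv
    obtain ⟨⟨ha, -, -, -, rfl⟩, rfl⟩ := hv
    simp only [← mul_add, Nat.mul_div_cancel_left _ ha, Nat.add_sub_cancel_left]
  · intros
    rfl
  · intros
    rfl

lemma sum_bilinearQuads_snd_eq {M : Type*} [AddCommMonoid M] (n : ℕ) (f : ℕ → ℕ → M) :
    ∑ v ∈ bilinearQuads n with v.2.1 = v.2.2.2, f v.1 v.2.2.1 =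
      ∑ m ∈ n.divisors, ∑ a ∈ Ico 1 m, f a (m - a) := by
  have transpose : ∑ v ∈ bilinearQuads n with v.2.1 = v.2.2.2, f v.1 v.2.2.1 =
      ∑ v ∈ bilinearQuads n with v.1 = v.2.2.1, f v.2.1 v.2.2.2 := by
    refine sum_nbij' (fun (a, b, c, d) => (b, a, d, c)) (fun (a, b, c, d) => (b, a, d, c))
      ?_ ?_ ?_ ?_ ?_ <;>
      simp only [mem_filter, mem_bilinearQuads, Prod.forall] <;> grind
  have snd_eq : ∀ v ∈ bilinearQuads n, v.1 = v.2.2.1 → v.2.2.2 = n / v.1 - v.2.1 := by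
    rintro ⟨a, b, c, d⟩ hv (rfl : a = c)
    obtain ⟨ha, -, -, -, rfl⟩ := mem_bilinearQuads.mp hv
    simp only [← mul_add, Nat.mul_div_cancel_left _ ha, Nat.add_sub_cancel_left]
  rw [transpose, ← Nat.sum_div_divisors n fun m => ∑ a ∈ Ico 1 m, f a (m - a),
    ← sum_bilinearQuads_fst_eq n fun m a => f a (n / m - a)]
  exact sum_congr rfl fun v hv => by rw [snd_eq v (mem_filter.mp hv).1 (mem_filter.mp hv).2]

theorem liouville_sum_bilinearQuads {M : Type*} [AddCommGroup M] {F : ℤ → ℤ → M}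
    (hF : ∀ u v, F u v = F v (v - u)) (n : ℕ) :
    ∑ v ∈ bilinearQuads n, (F v.1 v.2.2.1 - F v.1 (-v.2.2.1)) =
      ∑ m ∈ n.divisors, ((n / m) • F m 0 - ∑ a ∈ range m, F m a) := by
  have fst_diagonal : ∑ v ∈ bilinearQuads n with v.1 = v.2.2.1, F v.1 v.2.2.1 =
      ∑ m ∈ n.divisors, ((n / m) • F m 0 - F m 0) := by
    rw [sum_congr rfl fun v hv => by rw [← (mem_filter.mp hv).2, hF, sub_self],
      sum_bilinearQuads_fst_eq n fun a _ => F a 0]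
    refine sum_congr rfl fun m hm => ?_
    rw [sum_const, Nat.card_Ico, sub_nsmul _ (Nat.div_pos (Nat.divisor_le hm)
      (Nat.pos_of_mem_divisors hm)), one_nsmul, sub_eq_add_neg]
  have snd_diagonal : ∑ v ∈ bilinearQuads n with v.2.1 = v.2.2.2, F v.1 (-v.2.2.1) =
      ∑ m ∈ n.divisors, ∑ a ∈ Ico 1 m, F m a := by
    rw [sum_bilinearQuads_snd_eq n fun a c => F a (-c)]
    refine sum_congr rfl fun m _ => sum_congr rfl fun a ha => ?_
    rw [Nat.cast_sub (mem_Ico.mp ha).2.le, neg_sub, ← hF]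
  have range_eq : ∀ m ∈ n.divisors, ∑ a ∈ range m, F m a = F m 0 + ∑ a ∈ Ico 1 m, F m a :=
    fun m hm => by
      rw [range_eq_Ico, sum_eq_sum_Ico_succ_bot (Nat.pos_of_mem_divisors hm), Nat.cast_zero]
  rw [sum_sub_distrib,
    sum_eq_sum_filter_trichotomy _ (fun v : ℕ × ℕ × ℕ × ℕ => F v.1 v.2.2.1) (fun v => v.1)
      (fun v => v.2.2.1),
    sum_eq_sum_filter_trichotomy _ (fun v : ℕ × ℕ × ℕ × ℕ => F v.1 (-v.2.2.1))
      (fun v => v.2.1) (fun v => v.2.2.2),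
    sum_bilinearQuads_fst_gt hF, sum_bilinearQuads_fst_lt hF, fst_diagonal, snd_diagonal,
    add_sub_add_left_eq_sub, ← sum_sub_distrib]
  exact sum_congr rfl fun m hm => by rw [range_eq m hm, sub_sub]

section TrigonometricSeries

open PowerSeries

variable {K : Type*} [Field K]

/-- The monomial `p ^ u * q ^ v` symmetrised under inversion: `2 * cosh (u * x + v * y)` for
`p = exp x` and `q = exp y`. -/
def coshMonomial (p q : K) (u v : ℤ) : K :=
  p ^ u * q ^ v + p ^ (-u) * q ^ (-v)

lemma coshMonomial_eq_of_mul_eq_one {p q r : K} (h : p * q * r = 1) (u v : ℤ) :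
    coshMonomial p q v (v - u) = coshMonomial q r u v := by
  have hp : p ≠ 0 := by rintro rfl; simp at h
  have hq : q ≠ 0 := by rintro rfl; simp at h
  obtain rfl : r = (p * q)⁻¹ := eq_inv_of_mul_eq_one_right h
  simp only [coshMonomial, inv_zpow', mul_zpow, neg_sub, zpow_sub₀ hq, zpow_neg]
  field_simp
  ring

lemma pow_sub_inv_pow_mul_eq_coshMonomial_sub (p q : K) (a c : ℕ) :
    (p ^ a - p⁻¹ ^ a) * (q ^ c - q⁻¹ ^ c) =
      coshMonomial p q a c - coshMonomial p q a (-c) := by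
  simp only [coshMonomial, zpow_neg, zpow_natCast, inv_pow, neg_neg]
  ring

/-- For `p = exp x` this is `coth (x / 2) / 2`. -/
def halfCoth (p : K) : K := (p + 1) / (2 * (p - 1))

lemma halfCoth_mul_cyclic [NeZero (2 : K)] {p q r : K} (h : p * q * r = 1) (hp : p ≠ 1)
    (hq : q ≠ 1) (hr : r ≠ 1) :
    halfCoth p * halfCoth q + halfCoth q * halfCoth r + halfCoth r * halfCoth p = -1 / 4 := by
  have hp' : p - 1 ≠ 0 := sub_ne_zero.mpr hp
  have hq' : q - 1 ≠ 0 := sub_ne_zero.mpr hq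
  have hr' : r - 1 ≠ 0 := sub_ne_zero.mpr hr
  have h2 : (2 : K) ≠ 0 := two_ne_zero
  have h4 : (4 : K) = 2 * 2 := by norm_num
  simp only [halfCoth, h4]
  field_simp
  linear_combination 4 * h

lemma sum_range_coshMonomial [NeZero (2 : K)] {p q r : K} (h : p * q * r = 1) (hq : q ≠ 1)
    (m : ℕ) :
    ∑ a ∈ range m, coshMonomial p q m a =
      -halfCoth q * ((p ^ m - p⁻¹ ^ m) + (r ^ m - r⁻¹ ^ m)) +
        ((p ^ m + p⁻¹ ^ m) - (r ^ m + r⁻¹ ^ m)) / 2 := by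
  have hq₀ : q ≠ 0 := by rintro rfl; simp at h
  have hq' : q - 1 ≠ 0 := sub_ne_zero.mpr hq
  have hq'' : 1 - q ≠ 0 := sub_ne_zero.mpr hq.symm
  have h2 : (2 : K) ≠ 0 := two_ne_zero
  obtain rfl : r = (p * q)⁻¹ := eq_inv_of_mul_eq_one_right h
  simp only [coshMonomial, zpow_neg, zpow_natCast, ← inv_pow, sum_add_distrib, ← mul_sum,
    geom_sum_eq hq, geom_sum_eq (inv_ne_one.mpr hq), halfCoth, inv_inv, mul_pow]
  field_simp
  ring

/-- The `q`-series with coefficients `∑_{d ∣ n} (p ^ d - p ^ (-d))`; for `p = exp x` it generates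
the non-constant terms of the Eisenstein series. -/
def divisorSinhSeries (p : K) : K⟦X⟧ :=
  mk fun n => ∑ d ∈ n.divisors, (p ^ d - p⁻¹ ^ d)

/-- The `q`-series with coefficients `∑_{d ∣ n} (n / d) * (p ^ d + p ^ (-d))`; for `p = exp x` it
generates the `q`-derivatives of the Eisenstein series. -/
def divisorCoshSeries (p : K) : K⟦X⟧ :=
  mk fun n => ∑ d ∈ n.divisors, (n / d) • (p ^ d + p⁻¹ ^ d)

lemma coeff_divisorSinhSeries_mul (p q : K) (n : ℕ) :
    coeff n (divisorSinhSeries p * divisorSinhSeries q) =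
      ∑ v ∈ bilinearQuads n, (coshMonomial p q v.1 v.2.2.1 - coshMonomial p q v.1 (-v.2.2.1)) := by
  rw [← sum_antidiagonal_sum_divisors n fun a c =>
    coshMonomial p q a c - coshMonomial p q a (-c)]
  simp only [coeff_mul, divisorSinhSeries, coeff_mk, sum_mul_sum,
    pow_sub_inv_pow_mul_eq_coshMonomial_sub]

lemma divisorSinhSeries_mul_cyclic [NeZero (2 : K)] {p q r : K} (h : p * q * r = 1) (hp : p ≠ 1)
    (hq : q ≠ 1) (hr : r ≠ 1) :
    divisorSinhSeries p * divisorSinhSeries q + divisorSinhSeries q * divisorSinhSeries r +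
        divisorSinhSeries r * divisorSinhSeries p =
      divisorCoshSeries p + divisorCoshSeries q + divisorCoshSeries r +
        C (halfCoth p) * (divisorSinhSeries q + divisorSinhSeries r) +
        C (halfCoth q) * (divisorSinhSeries r + divisorSinhSeries p) +
        C (halfCoth r) * (divisorSinhSeries p + divisorSinhSeries q) := by
  have hqrp : q * r * p = 1 := by linear_combination h
  have hrpq : r * p * q = 1 := by linear_combination h
  ext n
  have liouville := liouville_sum_bilinearQuads
    (F := fun u v => coshMonomial p q u v + coshMonomial q r u v + coshMonomial r p u v)
    (fun u v => by
      rw [coshMonomial_eq_of_mul_eq_one h, coshMonomial_eq_of_mul_eq_one hqrp,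
        coshMonomial_eq_of_mul_eq_one hrpq]
      ring) n
  have coshMonomial_zero (p q : K) (m : ℕ) : coshMonomial p q m 0 = p ^ m + p⁻¹ ^ m := by
    simp [coshMonomial]
  simp only [map_add, coeff_divisorSinhSeries_mul, coeff_C_mul, ← sum_add_distrib]
  simp only [divisorSinhSeries, divisorCoshSeries, coeff_mk, mul_sum, mul_add,
    ← sum_add_distrib]
  convert liouville using 1
  · exact sum_congr rfl fun v _ => by ring
  · refine sum_congr rfl fun m _ => ?_
    rw [sum_add_distrib, sum_add_distrib, sum_range_coshMonomial h hq,
      sum_range_coshMonomial hqrp hr, sum_range_coshMonomial hrpq hp]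
    simp only [coshMonomial_zero, nsmul_eq_mul]
    ring

/-- The trigonometric expansion in `q` of (a normalisation of) the Weierstrass zeta function at `x`,
where `p = exp x`. -/
noncomputable def zetaQSeries (p : K) : K⟦X⟧ :=
  divisorSinhSeries p - C (halfCoth p)

theorem zetaQSeries_mul_cyclic [NeZero (2 : K)] {p q r : K} (h : p * q * r = 1) (hp : p ≠ 1)
    (hq : q ≠ 1) (hr : r ≠ 1) :
    zetaQSeries p * zetaQSeries q + zetaQSeries q * zetaQSeries r +
        zetaQSeries r * zetaQSeries p =
      divisorCoshSeries p + divisorCoshSeries q + divisorCoshSeries r - C (1 / 4) := by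
  have coth_relation := congr_arg (C (R := K)) (halfCoth_mul_cyclic h hp hq hr)
  simp only [map_add, map_mul, neg_div, map_neg] at coth_relation
  simp only [zetaQSeries]
  linear_combination divisorSinhSeries_mul_cyclic h hp hq hr + coth_relation

end TrigonometricSeries

section FormalEisenstein

open PowerSeries Nat

/-- The derivation `q d/dq` on formal `q`-series. -/
noncomputable def qDeriv (f : ℚ⟦X⟧) : ℚ⟦X⟧ := mk fun n => n * coeff n f

/-- The `q`-expansion of the Eisenstein series `Eis k`. -/
noncomputable def eisensteinQExp (k : ℕ) : ℚ⟦X⟧ :=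
  if Even k ∧ 2 ≤ k then
    C (2 / ((k - 1)! : ℚ)) *
      (C (-bernoulli k / (2 * k)) + mk fun n => (ArithmeticFunction.sigma (k - 1) n : ℚ))
  else 0

/-- The `q`-expansion of `P_{i,j} - (-1) ^ j * E_{i+j}`. -/
noncomputable def modifiedProductQExp (i j : ℕ) : ℚ⟦X⟧ :=
  eisensteinQExp i * eisensteinQExp j + (if i = 2 then (j : ℚ)⁻¹ • qDeriv (eisensteinQExp j) else 0)
    + (if j = 2 then (i : ℚ)⁻¹ • qDeriv (eisensteinQExp i) else 0)
    - (-1) ^ j * eisensteinQExp (i + j)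

lemma eisensteinQExp_of_odd {k : ℕ} (hk : Odd k) : eisensteinQExp k = 0 :=
  if_neg fun h => Nat.not_even_iff_odd.mpr hk h.1

lemma coeff_eisensteinQExp_succ {n : ℕ} (hn : n ≠ 0) (m : ℕ) :
    coeff n (eisensteinQExp (m + 1)) = ∑ d ∈ n.divisors, ((d : ℚ) ^ m - (-d) ^ m) / m ! := by
  rcases Nat.even_or_odd m with hm | hm
  · simp [eisensteinQExp_of_odd hm.add_one, hm.neg_pow]
  · have hm' : Even (m + 1) ∧ 2 ≤ m + 1 := ⟨hm.add_one, Nat.succ_le_succ hm.pos⟩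
    simp only [eisensteinQExp, if_pos hm', hm.neg_pow, coeff_C_mul, map_add, coeff_C, if_neg hn,
      coeff_mk, ArithmeticFunction.sigma_apply, Nat.add_sub_cancel, zero_add]
    push_cast
    rw [mul_sum]
    exact sum_congr rfl fun d _ => by ring

lemma coeff_inv_smul_qDeriv_eisensteinQExp_succ (n m : ℕ) :
    coeff n (((m + 1 : ℕ) : ℚ)⁻¹ • qDeriv (eisensteinQExp (m + 1))) =
      ∑ d ∈ n.divisors, ((n / d : ℕ) : ℚ) * ((d ^ (m + 1) + (-d) ^ (m + 1)) / (m + 1)!) := by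
  rcases eq_or_ne n 0 with rfl | hn
  · simp [qDeriv]
  rw [map_smul, qDeriv, coeff_mk, coeff_eisensteinQExp_succ hn, smul_eq_mul, mul_sum, mul_sum]
  refine sum_congr rfl fun d hd => ?_
  obtain ⟨c, rfl⟩ := Nat.dvd_of_mem_divisors hd
  rw [Nat.mul_div_cancel_left _ (Nat.pos_of_mem_divisors hd), Nat.factorial_succ]
  push_cast
  field_simp
  ring

lemma coeff_zero_eisensteinQExp_succ {m : ℕ} (hm : m ≠ 0) :
    coeff 0 (eisensteinQExp (m + 1)) = -bernoulli (m + 1) / (m + 1)! := by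
  rcases Nat.even_or_odd m with hm' | hm'
  · simp [eisensteinQExp_of_odd hm'.add_one, bernoulli_eq_zero_of_odd hm'.add_one (by omega)]
  · have h : Even (m + 1) ∧ 2 ≤ m + 1 := ⟨hm'.add_one, by omega⟩
    simp only [eisensteinQExp, if_pos h, coeff_C_mul, map_add, coeff_C, if_true, coeff_mk,
      ArithmeticFunction.map_zero, Nat.add_sub_cancel, Nat.factorial_succ]
    push_cast
    field_simp
    ring

lemma three_mul_eisensteinQExp_two :
    3 * eisensteinQExp 2 = 6 * (mk fun n => (ArithmeticFunction.sigma 1 n : ℚ)) - C (1 / 4) := by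
  have h : C (2 / ((2 - 1)! : ℚ)) = 2 :=
    (congr_arg C (by simp)).trans (map_ofNat C 2)
  have h' : (6 : ℚ⟦X⟧) * C (-bernoulli 2 / (2 * (2 : ℕ))) = -C (1 / 4) := by
    rw [← map_neg, bernoulli_two, ← map_ofNat (C (R := ℚ)), ← map_mul]
    norm_num
  rw [eisensteinQExp, if_pos (by decide), h]
  linear_combination h'

end FormalEisenstein

section GeneratingFunctions

open PowerSeries Nat

variable {A : Type*} [CommRing A] [Algebra ℚ A]

/-- The generating function `∑ m, f m * x ^ m` of a sequence of `q`-series. The outer variable is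
`q`; the inner one records the degree in `x`, so that `x` may be any element of `A`. -/
noncomputable def genSeries (f : ℕ → ℚ⟦X⟧) (x : A) : A⟦X⟧⟦X⟧ :=
  mk fun n => mk fun m => coeff n (f m) • x ^ m

/-- The generating function `∑ i j, f i j * x ^ i * y ^ j` of a double sequence of `q`-series. The
outer variable is `q`; the inner one records the total degree in `x` and `y`. -/
noncomputable def genSeries₂ (f : ℕ → ℕ → ℚ⟦X⟧) (x y : A) : A⟦X⟧⟦X⟧ :=
  mk fun n => mk fun N => ∑ p ∈ antidiagonal N, coeff n (f p.1 p.2) • (x ^ p.1 * y ^ p.2)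

lemma coeff_genSeries (f : ℕ → ℚ⟦X⟧) (x : A) (n m : ℕ) :
    coeff m (coeff n (genSeries f x)) = coeff n (f m) • x ^ m := by
  simp only [genSeries, coeff_mk]

lemma coeff_genSeries₂ (f : ℕ → ℕ → ℚ⟦X⟧) (x y : A) (n N : ℕ) :
    coeff N (coeff n (genSeries₂ f x y)) =
      ∑ p ∈ antidiagonal N, coeff n (f p.1 p.2) • (x ^ p.1 * y ^ p.2) := by
  simp only [genSeries₂, coeff_mk]

lemma genSeries₂_add (f g : ℕ → ℕ → ℚ⟦X⟧) (x y : A) :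
    genSeries₂ (fun i j => f i j + g i j) x y = genSeries₂ f x y + genSeries₂ g x y := by
  ext n N
  simp only [coeff_genSeries₂, map_add, add_smul, sum_add_distrib]

lemma genSeries₂_sub (f g : ℕ → ℕ → ℚ⟦X⟧) (x y : A) :
    genSeries₂ (fun i j => f i j - g i j) x y = genSeries₂ f x y - genSeries₂ g x y := by
  ext n N
  simp only [coeff_genSeries₂, map_sub, sub_smul, sum_sub_distrib]

lemma genSeries₂_mul (f g : ℕ → ℚ⟦X⟧) (x y : A) :
    genSeries₂ (fun i j => f i * g j) x y = genSeries f x * genSeries g y := by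
  ext n N
  simp only [coeff_genSeries₂, coeff_mul, map_sum, coeff_genSeries, smul_mul_smul_comm, sum_smul]
  exact sum_comm

lemma genSeries_ite_eq_one (x : A) :
    genSeries (fun m => if m = 1 then 1 else 0) x = C (C x * X) := by
  ext n m
  rw [coeff_genSeries, coeff_C]
  rcases eq_or_ne m 1 with rfl | hm <;> rcases eq_or_ne n 0 with rfl | hn <;>
    simp [coeff_one, coeff_X, *]

/-- `exp (x * T)`, where `T` is the variable of `A⟦X⟧`. -/
noncomputable def scaledExp (x : A) : A⟦X⟧ := rescale x (exp A)

lemma scaledExp_zero : scaledExp (0 : A) = 1 := by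
  simp [scaledExp]

lemma scaledExp_add (x y : A) : scaledExp (x + y) = scaledExp x * scaledExp y :=
  (exp_mul_exp_eq_exp_add x y).symm

lemma scaledExp_pow (x : A) (d : ℕ) : scaledExp x ^ d = scaledExp ((d : ℚ) • x) := by
  rw [scaledExp, ← map_pow, exp_pow_eq_rescale_exp, rescale_rescale, scaledExp,
    Nat.cast_smul_eq_nsmul, nsmul_eq_mul]

lemma scaledExp_neg_pow (x : A) (d : ℕ) : scaledExp (-x) ^ d = scaledExp ((-d : ℚ) • x) := by
  rw [scaledExp_pow, smul_neg, neg_smul]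

lemma coeff_scaledExp_smul (c : ℚ) (x : A) (m : ℕ) :
    coeff m (scaledExp (c • x)) = (c ^ m / m !) • x ^ m := by
  rw [scaledExp, coeff_rescale, coeff_exp, smul_pow, smul_mul_assoc, mul_comm, ← Algebra.smul_def,
    smul_smul, mul_one_div]

/-- The generating function `∑ m, E_{m+1} * x ^ m`. -/
noncomputable def eisensteinGen (x : A) : A⟦X⟧⟦X⟧ :=
  genSeries (fun m => eisensteinQExp (m + 1)) x

/-- The generating function `∑ m, E'_{m+1} / (m + 1) * x ^ m`. -/
noncomputable def eisensteinDerivGen (x : A) : A⟦X⟧⟦X⟧ :=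
  genSeries (fun m => ((m + 1 : ℕ) : ℚ)⁻¹ • qDeriv (eisensteinQExp (m + 1))) x

/-- The generating function `∑ i j, (-1) ^ (j + 1) * E_{i+j+2} * x ^ i * y ^ j`. -/
noncomputable def eisensteinSumGen (x y : A) : A⟦X⟧⟦X⟧ :=
  genSeries₂ (fun i j => (-1) ^ (j + 1) * eisensteinQExp (i + 1 + (j + 1))) x y

/-- The generating function `∑ i j, (P_{i+1,j+1} - (-1) ^ (j + 1) * E_{i+j+2}) * x ^ i * y ^ j`. -/
noncomputable def modifiedProductGen (x y : A) : A⟦X⟧⟦X⟧ :=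
  genSeries₂ (fun i j => modifiedProductQExp (i + 1) (j + 1)) x y

lemma modifiedProductGen_eq (x y : A) :
    modifiedProductGen x y = eisensteinGen x * eisensteinGen y +
      C (C x * X) * eisensteinDerivGen y + eisensteinDerivGen x * C (C y * X) -
        eisensteinSumGen x y := by
  simp only [modifiedProductGen, eisensteinGen, eisensteinDerivGen, eisensteinSumGen,
    ← genSeries_ite_eq_one, ← genSeries₂_mul, ← genSeries₂_add, ← genSeries₂_sub,
    modifiedProductQExp, ite_mul, mul_ite, one_mul, mul_one, zero_mul, mul_zero,
    Nat.reduceEqDiff]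

lemma coeff_eisensteinGen {n : ℕ} (hn : n ≠ 0) (x : A) :
    coeff n (eisensteinGen x) =
      ∑ d ∈ n.divisors, (scaledExp x ^ d - scaledExp (-x) ^ d) := by
  ext m
  simp only [eisensteinGen, coeff_genSeries, coeff_eisensteinQExp_succ hn, map_sum, map_sub,
    scaledExp_pow x, scaledExp_neg_pow, coeff_scaledExp_smul, sum_smul, sub_div, sub_smul]

lemma mul_coeff_zero_eisensteinGen (x : A) :
    C x * X * coeff 0 (eisensteinGen x) =
      1 - C (algebraMap ℚ A (1 / 2)) * (C x * X) - rescale x (bernoulliPowerSeries A) := by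
  ext m
  rw [mul_assoc, coeff_C_mul, map_sub, map_sub, coeff_C_mul, coeff_C_mul, coeff_rescale,
    bernoulliPowerSeries, coeff_mk, coeff_one, coeff_X]
  rcases m with _ | _ | m
  · simp
  · rw [coeff_succ_X_mul, eisensteinGen, coeff_genSeries, zero_add, eisensteinQExp_of_odd odd_one,
      map_zero, zero_smul]
    simp [neg_div, mul_comm x]
  · rw [coeff_succ_X_mul, eisensteinGen, coeff_genSeries,
      coeff_zero_eisensteinQExp_succ m.succ_ne_zero, Algebra.smul_def, neg_div, map_neg,
      if_neg (by simp), if_neg (by simp)]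
    ring

lemma mul_coeff_eisensteinDerivGen (n : ℕ) (x : A) :
    C x * X * coeff n (eisensteinDerivGen x) =
      ∑ d ∈ n.divisors, (n / d) • (scaledExp x ^ d + scaledExp (-x) ^ d) -
        C (algebraMap ℚ A (2 * ArithmeticFunction.sigma 1 n)) := by
  have coeff_sum (m : ℕ) :
      coeff m (∑ d ∈ n.divisors, (n / d) • (scaledExp x ^ d + scaledExp (-x) ^ d)) =
        (∑ d ∈ n.divisors, ((n / d : ℕ) : ℚ) * ((d ^ m + (-d) ^ m) / m !)) • x ^ m := by
    rw [map_sum, sum_smul]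
    refine sum_congr rfl fun d _ => ?_
    rw [map_nsmul, map_add, scaledExp_neg_pow, scaledExp_pow, coeff_scaledExp_smul,
      coeff_scaledExp_smul, ← add_smul, ← add_div, mul_smul, Nat.cast_smul_eq_nsmul]
  ext m
  rw [mul_assoc, coeff_C_mul, map_sub, coeff_C, coeff_sum]
  rcases m with _ | m
  · rw [coeff_zero_X_mul, mul_zero, if_pos rfl, ArithmeticFunction.sigma_one_apply,
      ← Nat.sum_div_divisors n fun d => d, pow_zero, ← Algebra.algebraMap_eq_smul_one, ← map_sub]
    simp only [pow_zero, Nat.factorial_zero, Nat.cast_one, div_one, one_add_one_eq_two, ← sum_mul,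
      mul_comm (2 : ℚ), Nat.cast_sum, sub_self, map_zero]
  · rw [coeff_succ_X_mul, eisensteinDerivGen, coeff_genSeries,
      coeff_inv_smul_qDeriv_eisensteinQExp_succ, mul_smul_comm, ← _root_.pow_succ',
      if_neg m.succ_ne_zero, sub_zero]

lemma rescale_bernoulliPowerSeries_mul_scaledExp_sub_one (x : A) :
    rescale x (bernoulliPowerSeries A) * (scaledExp x - 1) = C x * X := by
  rw [scaledExp, ← map_one (rescale x), ← map_sub, ← map_mul,
    bernoulliPowerSeries_mul_exp_sub_one, rescale_X]

lemma mul_eisensteinSumGen (x y : A) :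
    C (C x * X + C y * X) * eisensteinSumGen x y = -(eisensteinGen x + eisensteinGen y) := by
  have parity (n N : ℕ) : coeff n (eisensteinQExp (N + 2)) • (x ^ (N + 1) - (-y) ^ (N + 1)) =
      coeff n (eisensteinQExp (N + 2)) • (x ^ (N + 1) + y ^ (N + 1)) := by
    rcases Nat.even_or_odd N with hN | hN
    · rw [hN.add_one.neg_pow, sub_neg_eq_add]
    · rw [eisensteinQExp_of_odd (hN.add_even even_two), map_zero, zero_smul, zero_smul]
  ext n N
  rw [coeff_C_mul, ← add_mul, ← map_add, mul_assoc, coeff_C_mul]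
  rcases N with _ | N
  · simp only [coeff_zero_X_mul, mul_zero, map_neg, map_add, eisensteinGen, coeff_genSeries,
      zero_add, eisensteinQExp_of_odd odd_one, map_zero, zero_smul, neg_zero, add_zero]
  · have signed (p : ℕ × ℕ) (hp : p ∈ antidiagonal N) :
        coeff n ((-1) ^ (p.2 + 1) * eisensteinQExp (p.1 + 1 + (p.2 + 1))) • (x ^ p.1 * y ^ p.2) =
          -(coeff n (eisensteinQExp (N + 2)) • (x ^ p.1 * (-y) ^ p.2)) := by
      rw [show p.1 + 1 + (p.2 + 1) = N + 2 by rw [← mem_antidiagonal.mp hp]; ring]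
      rcases Nat.even_or_odd p.2 with h | h <;> simp [_root_.pow_succ, h.neg_pow]
    rw [coeff_succ_X_mul, eisensteinSumGen, coeff_genSeries₂, sum_congr rfl signed,
      sum_neg_distrib, ← smul_sum, Nat.sum_antidiagonal_eq_sum_range_succ_mk]
    have geom := (Commute.all x (-y)).mul_geom_sum₂ (N + 1)
    rw [sub_neg_eq_add] at geom
    simp only [Nat.add_sub_cancel] at geom
    simp only [mul_neg, mul_smul_comm, Nat.succ_eq_add_one, geom, parity, map_neg, map_add,
      eisensteinGen, coeff_genSeries, smul_add]

end GeneratingFunctions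

section CyclicIdentity

open PowerSeries

lemma scaledExp_ne_one {A : Type*} [CommRing A] [Algebra ℚ A] {x : A} (hx : x ≠ 0) :
    scaledExp x ≠ 1 := by
  intro h
  have coeff_one_eq := congr_arg (coeff 1) h
  rw [scaledExp, coeff_rescale, coeff_exp, coeff_one] at coeff_one_eq
  exact hx (by simpa using coeff_one_eq)

section Embedding

variable {A K : Type*} [CommRing A] [Field K]

lemma map_C_mul_X_ne_zero {ι : A⟦X⟧ →+* K} (hι : Function.Injective ι) {x : A} (hx : x ≠ 0) :
    ι (C x * X) ≠ 0 := by
  refine (map_ne_zero_iff ι hι).mpr fun h => hx ?_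
  simpa using congr_arg (coeff 1) h

variable [Algebra ℚ A] (ι : A⟦X⟧ →+* K)

lemma map_scaledExp_neg (x : A) : ι (scaledExp (-x)) = (ι (scaledExp x))⁻¹ := by
  refine eq_inv_of_mul_eq_one_right ?_
  rw [← map_mul, ← scaledExp_add, add_neg_cancel, scaledExp_zero, map_one]

lemma map_scaledExp_ne_one {ι : A⟦X⟧ →+* K} (hι : Function.Injective ι) {x : A} (hx : x ≠ 0) :
    ι (scaledExp x) ≠ 1 :=
  fun h => scaledExp_ne_one hx (hι (h.trans (map_one ι).symm))

lemma map_coeff_zero_eisensteinGen [CharZero K] {ι : A⟦X⟧ →+* K} (hι : Function.Injective ι) {x : A}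
    (hx : x ≠ 0) :
    ι (coeff 0 (eisensteinGen x)) = (ι (C x * X))⁻¹ - halfCoth (ι (scaledExp x)) := by
  have hx₀ := map_C_mul_X_ne_zero hι hx
  have hx₁ := sub_ne_zero.mpr (map_scaledExp_ne_one hι hx)
  have half : ι (C (algebraMap ℚ A (1 / 2))) = 1 / 2 := by
    rw [← RingHom.comp_apply C, ← RingHom.comp_apply ι, eq_ratCast]
    norm_num
  have bernoulli := congr_arg ι (rescale_bernoulliPowerSeries_mul_scaledExp_sub_one x)
  rw [map_mul ι, map_sub, map_one] at bernoulli
  have constant := congr_arg ι (mul_coeff_zero_eisensteinGen x)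
  rw [map_mul ι, map_sub, map_sub, map_mul ι _ (C x * X), map_one, half,
    eq_div_of_mul_eq hx₁ bernoulli] at constant
  refine mul_left_cancel₀ hx₀ (constant.trans ?_)
  rw [halfCoth]
  field_simp
  ring

lemma map_eisensteinGen [CharZero K] {ι : A⟦X⟧ →+* K} (hι : Function.Injective ι) {x : A}
    (hx : x ≠ 0) :
    PowerSeries.map ι (eisensteinGen x) =
      C (ι (C x * X))⁻¹ + zetaQSeries (ι (scaledExp x)) := by
  ext n
  rw [coeff_map, zetaQSeries, map_add, map_sub, divisorSinhSeries, coeff_mk, coeff_C, coeff_C]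
  rcases eq_or_ne n 0 with rfl | hn
  · rw [map_coeff_zero_eisensteinGen hι hx, if_pos rfl, if_pos rfl, Nat.divisors_zero, sum_empty]
    ring
  · simp only [coeff_eisensteinGen hn, map_sum, map_sub, map_pow, map_scaledExp_neg, if_neg hn,
      sub_zero, zero_add]

lemma map_eisensteinDerivGen (x : A) :
    C (ι (C x * X)) * PowerSeries.map ι (eisensteinDerivGen x) =
      divisorCoshSeries (ι (scaledExp x)) - 2 * mk fun n => (ArithmeticFunction.sigma 1 n : K) := by
  ext n
  rw [coeff_C_mul, coeff_map, ← map_mul, mul_coeff_eisensteinDerivGen, map_sub, map_sub,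
    divisorCoshSeries, coeff_mk, ← map_ofNat C 2, coeff_C_mul, coeff_mk]
  simp only [map_sum, map_nsmul, map_add, map_pow, map_scaledExp_neg, map_mul, map_natCast,
    map_ofNat]

lemma map_eisensteinSumGen {ι : A⟦X⟧ →+* K} (hι : Function.Injective ι) {x y z : A}
    (h : x + y + z = 0) (hz : z ≠ 0) :
    PowerSeries.map ι (eisensteinSumGen x y) = C (ι (C z * X))⁻¹ *
      (PowerSeries.map ι (eisensteinGen x) + PowerSeries.map ι (eisensteinGen y)) := by
  have key := congr_arg (PowerSeries.map ι) (mul_eisensteinSumGen x y)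
  rw [← add_mul, ← map_add C x, eq_neg_of_add_eq_zero_left h, map_neg C, neg_mul, map_neg C,
    neg_mul, map_neg, map_neg, neg_inj, map_mul, map_add, map_C] at key
  rw [← key, ← mul_assoc, ← map_mul, inv_mul_cancel₀ (map_C_mul_X_ne_zero hι hz), map_one, one_mul]

lemma map_modifiedProductGen [CharZero K] {ι : A⟦X⟧ →+* K} (hι : Function.Injective ι) {x y z : A}
    (h : x + y + z = 0) (hx : x ≠ 0) (hy : y ≠ 0) (hz : z ≠ 0) :
    PowerSeries.map ι (modifiedProductGen x y) =
      (C (ι (C x * X))⁻¹ + zetaQSeries (ι (scaledExp x))) *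
          (C (ι (C y * X))⁻¹ + zetaQSeries (ι (scaledExp y))) +
        C (ι (C x * X)) * PowerSeries.map ι (eisensteinDerivGen y) +
        PowerSeries.map ι (eisensteinDerivGen x) * C (ι (C y * X)) -
        C (ι (C z * X))⁻¹ * (C (ι (C x * X))⁻¹ + zetaQSeries (ι (scaledExp x)) +
          (C (ι (C y * X))⁻¹ + zetaQSeries (ι (scaledExp y)))) := by
  rw [modifiedProductGen_eq, map_sub, map_add, map_add, map_mul, map_mul _ (C _),
    map_mul _ (eisensteinDerivGen _), map_C, map_C, map_eisensteinSumGen hι h hz,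
    map_eisensteinGen hι hx, map_eisensteinGen hι hy]

lemma map_three_mul_eisensteinQExp_two [CharZero K] :
    PowerSeries.map ι (PowerSeries.map (algebraMap ℚ A⟦X⟧) (3 * eisensteinQExp 2)) =
      6 * (mk fun n => (ArithmeticFunction.sigma 1 n : K)) - C (1 / 4) := by
  rw [← RingHom.comp_apply, ← PowerSeries.map_comp, three_mul_eisensteinQExp_two, map_sub,
    map_mul, map_ofNat, map_C, eq_ratCast]
  congr 2
  · ext n
    simp
  · norm_num

end Embedding

theorem modifiedProductGen_cyclic {A : Type*} [CommRing A] [IsDomain A] [Algebra ℚ A] {x y z : A}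
    (h : x + y + z = 0) (hx : x ≠ 0) (hy : y ≠ 0) (hz : z ≠ 0) :
    modifiedProductGen x y + modifiedProductGen y z + modifiedProductGen z x =
      PowerSeries.map (algebraMap ℚ A⟦X⟧) (3 * eisensteinQExp 2) := by
  set ι := algebraMap A⟦X⟧ (FractionRing A⟦X⟧)
  have hι : Function.Injective ι := IsFractionRing.injective _ _
  have : CharZero (FractionRing A⟦X⟧) :=
    charZero_of_injective_ringHom (ι.comp (algebraMap ℚ A⟦X⟧)).injective
  have exp_mul : ι (scaledExp x) * ι (scaledExp y) * ι (scaledExp z) = 1 := by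
    rw [← map_mul, ← map_mul, ← scaledExp_add, ← scaledExp_add, h, scaledExp_zero, map_one]
  have zeta_mul := zetaQSeries_mul_cyclic exp_mul (map_scaledExp_ne_one hι hx)
    (map_scaledExp_ne_one hι hy) (map_scaledExp_ne_one hι hz)
  set a := ι (C x * X)
  set b := ι (C y * X)
  set c := ι (C z * X)
  have sum_eq_zero : a + b + c = 0 := by
    rw [← map_add, ← map_add, ← add_mul, ← add_mul, ← map_add, ← map_add, h, map_zero, zero_mul,
      map_zero]
  have sum_inv_eq_zero : a⁻¹ * b⁻¹ + b⁻¹ * c⁻¹ + c⁻¹ * a⁻¹ = 0 := by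
    have ha : a ≠ 0 := map_C_mul_X_ne_zero hι hx
    have hb : b ≠ 0 := map_C_mul_X_ne_zero hι hy
    have hc : c ≠ 0 := map_C_mul_X_ne_zero hι hz
    field_simp
    linear_combination sum_eq_zero
  replace sum_eq_zero := congr_arg C sum_eq_zero
  replace sum_inv_eq_zero := congr_arg C sum_inv_eq_zero
  simp only [map_add, map_mul, map_zero] at sum_eq_zero sum_inv_eq_zero
  refine PowerSeries.map_injective ι hι ?_
  rw [map_three_mul_eisensteinQExp_two, map_add, map_add, map_modifiedProductGen hι h hx hy hz,
    map_modifiedProductGen hι ((add_rotate x y z).symm.trans h) hy hz hx,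
    map_modifiedProductGen hι ((add_rotate z x y).trans h) hz hx hy]
  linear_combination zeta_mul - sum_inv_eq_zero - map_eisensteinDerivGen ι x -
    map_eisensteinDerivGen ι y - map_eisensteinDerivGen ι z +
      (PowerSeries.map ι (eisensteinDerivGen x) + PowerSeries.map ι (eisensteinDerivGen y) +
        PowerSeries.map ι (eisensteinDerivGen z)) * sum_eq_zero

end CyclicIdentity

section BinomialSums

/-- The sum of `(-1) ^ (i + p) * (i.choose q) * (j.choose l) * P i j` over `i + j = p + q + l`. -/
def binomialSum {M : Type*} [AddCommGroup M] (P : ℕ → ℕ → M) (p q l : ℕ) : M :=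
  ∑ x ∈ antidiagonal (p + q + l), ((-1) ^ (x.1 + p) * x.1.choose q * x.2.choose l : ℤ) • P x.1 x.2

section MvPolynomial

open MvPolynomial Finsupp

variable {σ S : Type*} [CommRing S]

lemma X_sub_X_pow (a b : σ) (m : ℕ) :
    (X a - X b : MvPolynomial σ S) ^ m = ∑ u ∈ range (m + 1),
      monomial (single a (m - u) + single b u) ((-1 : S) ^ u * (m.choose u : S)) := by
  rw [sub_eq_neg_add, add_pow]
  refine sum_congr rfl fun u _ => ?_
  rw [neg_pow, monomial_single_add, ← C_mul_X_pow_eq_monomial]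
  simp only [map_mul, map_pow, map_neg, map_one, map_natCast]
  ring

lemma coeff_X_sub_X_pow_mul {a b c : σ} (hab : a ≠ b) (hac : a ≠ c) (hbc : b ≠ c)
    {m n p q l : ℕ} (h : m + n = p + q + l) :
    coeff (single a p + single b q + single c l)
      ((X a - X b : MvPolynomial σ S) ^ m * (X c - X a) ^ n) =
        (-1 : S) ^ (m + p) * (m.choose q : S) * (n.choose l : S) := by
  classical
  have exponent_eq_iff {w : ℕ × ℕ} (hw : w ∈ range (m + 1) ×ˢ range (n + 1)) :
      single a (m - w.1) + single b w.1 + (single a (n - w.2) + single c w.2) =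
        single a p + single b q + single c l ↔ w = (q, l) := by
    rw [mem_product, mem_range, mem_range] at hw
    rw [Prod.ext_iff]
    constructor
    · intro heq
      have hb := DFunLike.congr_fun heq b
      have hc := DFunLike.congr_fun heq c
      simp only [Finsupp.add_apply, single_eq_same, single_eq_of_ne hab.symm,
        single_eq_of_ne hac.symm, single_eq_of_ne hbc, single_eq_of_ne hbc.symm, zero_add,
        add_zero] at hb hc
      exact ⟨hb, hc⟩
    · obtain ⟨u, v⟩ := w
      rintro ⟨rfl, rfl⟩
      rw [show p = (m - u) + (n - v) by omega, single_add]
      abel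
  have sign : (-1 : S) ^ (m + p) = (-1) ^ n * ((-1) ^ q * (-1) ^ l) := by
    rw [← pow_add, ← pow_add]
    refine neg_one_pow_congr ?_
    rw [Nat.even_iff, Nat.even_iff]
    omega
  rw [← neg_sub (X a), neg_pow, mul_left_comm, X_sub_X_pow, X_sub_X_pow, sum_mul_sum,
    ← sum_product', ← map_one C, ← map_neg C, ← map_pow, coeff_C_mul]
  simp only [monomial_mul, coeff_sum, coeff_monomial]
  rw [sum_congr rfl fun w hw => if_congr (exponent_eq_iff hw) rfl rfl, Finset.sum_ite_eq']
  split_ifs with hql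
  · rw [sign]
    ring
  · rw [mem_product, mem_range, mem_range, not_and_or, not_lt, not_lt] at hql
    rcases hql with hq | hl
    · rw [Nat.choose_eq_zero_of_lt hq, Nat.cast_zero, mul_zero, mul_zero, zero_mul]
    · rw [Nat.choose_eq_zero_of_lt hl, Nat.cast_zero, mul_zero, mul_zero]

end MvPolynomial

open PowerSeries in
lemma coeff_coeff_coeff_genSeries₂ (f : ℕ → ℕ → ℚ⟦X⟧) {σ : Type*} {a b c : σ} (hab : a ≠ b)
    (hac : a ≠ c) (hbc : b ≠ c) (p q l n : ℕ) :
    MvPolynomial.coeff (Finsupp.single a p + Finsupp.single b q + Finsupp.single c l)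
      (coeff (p + q + l) (coeff n
        (genSeries₂ (A := MvPolynomial σ ℚ) f (.X a - .X b) (.X c - .X a)))) =
        coeff n (binomialSum f p q l) := by
  rw [coeff_genSeries₂, binomialSum, MvPolynomial.coeff_sum, map_sum]
  refine sum_congr rfl fun x hx => ?_
  rw [MvPolynomial.coeff_smul, coeff_X_sub_X_pow_mul hab hac hbc (mem_antidiagonal.mp hx),
    map_zsmul, zsmul_eq_mul, smul_eq_mul, mul_comm]
  push_cast
  rfl

open PowerSeries in
theorem binomialSum_modifiedProductQExp_cyclic {r s t : ℕ} (h : r + s + t ≠ 0) :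
    binomialSum (fun i j => modifiedProductQExp (i + 1) (j + 1)) r t s +
      binomialSum (fun i j => modifiedProductQExp (i + 1) (j + 1)) s r t +
      binomialSum (fun i j => modifiedProductQExp (i + 1) (j + 1)) t s r = 0 := by
  have X_sub_X_ne_zero {i j : Fin 3} (hij : i ≠ j) : (.X i - .X j : MvPolynomial (Fin 3) ℚ) ≠ 0 :=
    sub_ne_zero.mpr fun h => hij (MvPolynomial.X_injective h)
  have cyclic := modifiedProductGen_cyclic (A := MvPolynomial (Fin 3) ℚ)
    (x := .X 0 - .X 2) (y := .X 1 - .X 0) (z := .X 2 - .X 1) (by ring)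
    (X_sub_X_ne_zero (by decide)) (X_sub_X_ne_zero (by decide)) (X_sub_X_ne_zero (by decide))
  ext n
  have coeff_gen {a b c : Fin 3} (hab : a ≠ b) (hac : a ≠ c) (hbc : b ≠ c) {p q l : ℕ}
      (exponent : Finsupp.single a p + Finsupp.single b q + Finsupp.single c l =
        Finsupp.single 0 r + Finsupp.single 1 s + Finsupp.single 2 t)
      (degree : p + q + l = r + s + t) :=
    exponent ▸ degree ▸ coeff_coeff_coeff_genSeries₂
      (fun i j => modifiedProductQExp (i + 1) (j + 1)) hab hac hbc p q l n
  have coeff_cyclic := congr_arg (fun F => MvPolynomial.coeff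
    (Finsupp.single 0 r + Finsupp.single 1 s + Finsupp.single 2 t)
    (coeff (r + s + t) (coeff n F))) cyclic
  simp only [map_add, MvPolynomial.coeff_add, coeff_map, PowerSeries.algebraMap_apply,
    modifiedProductGen, coeff_C, if_neg h, MvPolynomial.coeff_zero] at coeff_cyclic
  rw [coeff_gen (by decide) (by decide) (by decide) (by abel) (by ring),
    coeff_gen (by decide) (by decide) (by decide) (by abel) (by ring),
    coeff_gen (by decide) (by decide) (by decide) (by abel) (by ring)] at coeff_cyclic
  rw [map_add, map_add, coeff_cyclic, map_zero]

end BinomialSums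

section QExpansion

open PowerSeries
open scoped Real

/-- `F` is, on the upper half-plane, the sum of the `q`-series `f` at `q = exp (2πiτ)`. -/
def HasQExpansion (f : ℚ⟦X⟧) (F : ℂ → ℂ) : Prop :=
  ∀ τ : ℂ, 0 < τ.im → HasSum (fun n => ((coeff n f : ℚ) : ℂ) * cexp (2 * π * I * τ) ^ n) (F τ)

variable {f g : ℚ⟦X⟧} {F G : ℂ → ℂ}

lemma hasQExpansion_zero : HasQExpansion 0 0 := fun τ _ => by
  simpa only [map_zero, Rat.cast_zero, zero_mul, Pi.zero_apply] using hasSum_zero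

namespace HasQExpansion

lemma add (hf : HasQExpansion f F) (hg : HasQExpansion g G) : HasQExpansion (f + g) (F + G) :=
  fun τ hτ => by
    simpa only [map_add, Rat.cast_add, add_mul, Pi.add_apply] using (hf τ hτ).add (hg τ hτ)

lemma sub (hf : HasQExpansion f F) (hg : HasQExpansion g G) : HasQExpansion (f - g) (F - G) :=
  fun τ hτ => by
    simpa only [map_sub, Rat.cast_sub, sub_mul, Pi.sub_apply] using (hf τ hτ).sub (hg τ hτ)

lemma smul (hf : HasQExpansion f F) (c : ℚ) : HasQExpansion (c • f) fun τ => c * F τ :=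
  fun τ hτ => by
    simpa only [map_smul, smul_eq_mul, Rat.cast_mul, mul_assoc] using (hf τ hτ).mul_left (c : ℂ)

lemma mul (hf : HasQExpansion f F) (hg : HasQExpansion g G) : HasQExpansion (f * g) (F * G) := by
  intro τ hτ
  have hf' := (hf τ hτ).summable.norm
  have hg' := (hg τ hτ).summable.norm
  have product := (summable_norm_sum_mul_antidiagonal_of_summable_norm hf' hg').of_norm.hasSum
  rw [← tsum_mul_tsum_eq_tsum_sum_antidiagonal_of_summable_norm hf' hg', (hf τ hτ).tsum_eq,
    (hg τ hτ).tsum_eq] at product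
  refine product.congr_fun fun n => ?_
  rw [coeff_mul, Rat.cast_sum, sum_mul]
  refine sum_congr rfl fun m hm => ?_
  rw [← mem_antidiagonal.mp hm, pow_add, Rat.cast_mul]
  ring

lemma binomialSum {f : ℕ → ℕ → ℚ⟦X⟧} {F : ℕ → ℕ → ℂ → ℂ} (h : ∀ i j, HasQExpansion (f i j) (F i j))
    (p q l : ℕ) :
    HasQExpansion (binomialSum f p q l) fun τ => binomialSum (fun i j => F i j τ) p q l := by
  intro τ hτ
  refine (hasSum_sum fun x _ => (h x.1 x.2 τ hτ).const_smul _).congr_fun fun n => ?_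
  rw [_root_.binomialSum, map_sum, Rat.cast_sum, sum_mul]
  refine sum_congr rfl fun x _ => ?_
  rw [map_zsmul, zsmul_eq_mul, zsmul_eq_mul, Rat.cast_mul, Rat.cast_intCast, mul_assoc]

lemma qDeriv (hf : HasQExpansion f F) :
    HasQExpansion (qDeriv f) fun τ => (2 * π * I)⁻¹ * deriv F τ := by
  intro τ hτ
  set U : Set ℂ := {w | τ.im / 2 < w.im}
  have hU : IsOpen U := isOpen_lt continuous_const continuous_im
  have hτU : τ ∈ U := half_lt_self hτ
  have norm_exp_le (w : ℂ) (hw : w ∈ U) :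
      ‖cexp (2 * π * I * w)‖ ≤ ‖cexp (2 * π * I * ((τ.im / 2 : ℝ) * I))‖ := by
    rw [norm_exp, norm_exp, Real.exp_le_exp]
    simpa using mul_le_mul_of_nonneg_left (le_of_lt hw) Real.two_pi_pos.le
  have norm_term_le (n : ℕ) (w : ℂ) (hw : w ∈ U) :
      ‖((coeff n f : ℚ) : ℂ) * cexp (2 * π * I * w) ^ n‖ ≤
        ‖((coeff n f : ℚ) : ℂ) * cexp (2 * π * I * ((τ.im / 2 : ℝ) * I)) ^ n‖ := by
    rw [norm_mul, norm_mul, norm_pow, norm_pow]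
    gcongr
    exact norm_exp_le w hw
  have hasDerivAt_term (n : ℕ) : HasDerivAt
      (fun w => ((coeff n f : ℚ) : ℂ) * cexp (2 * π * I * w) ^ n)
      (2 * π * I * (n * coeff n f * cexp (2 * π * I * τ) ^ n)) τ := by
    simp only [← exp_nat_mul, ← mul_assoc _ (2 * π * I : ℂ)]
    refine (((hasDerivAt_id τ).const_mul (n * (2 * π * I))).cexp.const_mul _).congr_deriv ?_
    simp only [id, mul_one]
    ring
  have deriv_sum := hasSum_deriv_of_summable_norm
    (hf ((τ.im / 2 : ℝ) * I) (by simpa using hτ)).summable.norm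
    (fun n => by fun_prop) hU norm_term_le hτU
  have deriv_eq : deriv F τ =
      deriv (fun w => ∑' n, ((coeff n f : ℚ) : ℂ) * cexp (2 * π * I * w) ^ n) τ :=
    EventuallyEq.deriv_eq <| eventually_of_mem (hU.mem_nhds hτU) fun w hw =>
      (hf w ((half_pos hτ).trans hw)).tsum_eq.symm
  refine (deriv_eq ▸ deriv_sum.mul_left (2 * π * I)⁻¹).congr_fun fun n => ?_
  rw [(hasDerivAt_term n).deriv, inv_mul_cancel_left₀ two_pi_I_ne_zero, _root_.qDeriv, coeff_mk,
    Rat.cast_mul, Rat.cast_natCast]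

end HasQExpansion

lemma hasQExpansion_Eis (k : ℕ) : HasQExpansion (eisensteinQExp k) (Eis k) := by
  intro τ hτ
  by_cases hk : Even k ∧ 2 ≤ k
  swap
  · rw [Eis, eisensteinQExp, if_neg hk, if_neg hk]
    exact hasQExpansion_zero τ hτ
  have constant : HasSum
      (fun n => ((coeff n (C (-bernoulli k / (2 * k)) : ℚ⟦X⟧) : ℚ) : ℂ) * cexp (2 * π * I * τ) ^ n)
      (-bernoulli k / (2 * k)) := by
    refine (hasSum_ite_eq 0 (-bernoulli k / (2 * k) : ℂ)).congr_fun fun n => ?_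
    rcases eq_or_ne n 0 with rfl | hn
    · simp
    · simp [coeff_C, hn]
  have sigma_sum : HasSum
      (fun n => (ArithmeticFunction.sigma (k - 1) n : ℂ) * cexp (2 * π * I * τ) ^ n)
      (∑' n : ℕ, (∑ d ∈ (n + 1).divisors, (d : ℂ) ^ (k - 1)) * cexp (2 * π * I * τ) ^ (n + 1)) := by
    have summable :=
      EisensteinSeries.summable_sigma_mul_cexp_pow (one_le_two.trans hk.2) ⟨τ, hτ⟩
    have sum := summable.hasSum
    rw [summable.tsum_eq_zero_add] at sum
    simpa [ArithmeticFunction.sigma_apply] using sum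
  rw [Eis, eisensteinQExp, if_pos hk, if_pos hk]
  refine ((constant.add sigma_sum).mul_left (2 / ((k - 1).factorial : ℂ))).congr_fun fun n => ?_
  rw [coeff_C_mul, map_add, coeff_mk]
  push_cast
  ring

lemma hasQExpansion_Eis' (k : ℕ) : HasQExpansion (qDeriv (eisensteinQExp k)) (Eis' k) :=
  (hasQExpansion_Eis k).qDeriv

lemma hasQExpansion_modifiedProductQExp (i j : ℕ) :
    HasQExpansion (modifiedProductQExp i j) fun τ => Pf i j τ - (-1) ^ j * Eis (i + j) τ := by
  have derivTerm (i j : ℕ) :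
      HasQExpansion (if i = 2 then (j : ℚ)⁻¹ • qDeriv (eisensteinQExp j) else 0)
        fun τ => if i = 2 then Eis' j τ / j else 0 := by
    split_ifs
    · simpa [div_eq_inv_mul] using (hasQExpansion_Eis' j).smul (j : ℚ)⁻¹
    · exact hasQExpansion_zero
  have sumTerm : HasQExpansion ((-1) ^ j * eisensteinQExp (i + j))
      fun τ => (-1) ^ j * Eis (i + j) τ := by
    simpa [smul_eq_C_mul] using (hasQExpansion_Eis (i + j)).smul ((-1) ^ j)
  exact ((((hasQExpansion_Eis i).mul (hasQExpansion_Eis j)).add (derivTerm i j)).add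
    (derivTerm j i)).sub sumTerm

end QExpansion

section Reindexing

lemma sum_Icc_one_eq_sum_antidiagonal {M : Type*} [AddCommMonoid M] (f : ℕ → M) (n : ℕ) :
    ∑ i ∈ Icc 1 (n + 1), f i = ∑ x ∈ antidiagonal n, f (x.1 + 1) := by
  rw [Nat.sum_antidiagonal_eq_sum_range_succ_mk, range_eq_Ico,
    sum_Ico_add' f 0 (n + 1) 1, zero_add]
  rfl

lemma sum_Icc_eq_binomialSum {A : Type*} [Ring A] (P : ℕ → ℕ → A) {p q l k : ℕ} (hp : 1 ≤ p)
    (hq : 1 ≤ q) (hl : 1 ≤ l) (hk : k = p + q + l - 1) :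
    ∑ i ∈ Icc 1 (k - 1), ((i - 1).choose (q - 1) : A) * ((k - i - 1).choose (l - 1) : A) *
        (-1) ^ (i + p) * P i (k - i) =
      binomialSum (fun i j => P (i + 1) (j + 1)) (p - 1) (q - 1) (l - 1) := by
  rw [binomialSum, show k - 1 = p - 1 + (q - 1) + (l - 1) + 1 by omega,
    sum_Icc_one_eq_sum_antidiagonal]
  refine sum_congr rfl fun x hx => ?_
  have complement : k - (x.1 + 1) = x.2 + 1 := by
    have := mem_antidiagonal.mp hx
    omega
  have sign : (-1 : A) ^ (x.1 + 1 + p) = (-1) ^ (x.1 + (p - 1)) := by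
    refine neg_one_pow_congr ?_
    rw [Nat.even_iff, Nat.even_iff]
    omega
  rw [complement, sign, Nat.add_sub_cancel, Nat.add_sub_cancel, zsmul_eq_mul]
  push_cast
  simp only [mul_assoc, ((Commute.neg_one_left _).pow_left _).eq]

end Reindexing

/-- Theorem 1 of Hirose–Sato–Tasaka: for positive integers `r, s, t ≥ 1` with
`k = r + s + t - 1 ≥ 3` and `τ` in the upper half-plane, the three alternating
binomial sums of `P_{i,j} - (-1)^j E_{i+j}` vanish. -/
theorem eisenstein_product_relation (r s t : ℕ) (hr : 1 ≤ r) (hs : 1 ≤ s) (ht : 1 ≤ t)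
    (k : ℕ) (hk : k = r + s + t - 1) (hk3 : 3 ≤ k) (τ : ℂ) (hτ : 0 < τ.im) :
    0 = (∑ i ∈ Finset.Icc 1 (k - 1), ((i - 1).choose (t - 1) : ℂ) *
          ((k - i - 1).choose (s - 1) : ℂ) * (-1) ^ (i + r) *
          (Pf i (k - i) τ - (-1) ^ (k - i) * Eis (i + (k - i)) τ))
      + (∑ j ∈ Finset.Icc 1 (k - 1), ((j - 1).choose (r - 1) : ℂ) *
          ((k - j - 1).choose (t - 1) : ℂ) * (-1) ^ (j + s) *
          (Pf j (k - j) τ - (-1) ^ (k - j) * Eis (j + (k - j)) τ))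
      + (∑ h ∈ Finset.Icc 1 (k - 1), ((h - 1).choose (s - 1) : ℂ) *
          ((k - h - 1).choose (r - 1) : ℂ) * (-1) ^ (h + t) *
          (Pf h (k - h) τ - (-1) ^ (k - h) * Eis (h + (k - h)) τ)) := by
  let P (i j : ℕ) (τ : ℂ) : ℂ := Pf i j τ - (-1) ^ j * Eis (i + j) τ
  have expansion (p q l : ℕ) := HasQExpansion.binomialSum
    (fun i j => hasQExpansion_modifiedProductQExp (i + 1) (j + 1)) p q l
  have cyclic_expansion := ((expansion (r - 1) (t - 1) (s - 1)).add
    (expansion (s - 1) (r - 1) (t - 1))).add (expansion (t - 1) (s - 1) (r - 1))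
  rw [binomialSum_modifiedProductQExp_cyclic (by omega)] at cyclic_expansion
  rw [sum_Icc_eq_binomialSum (fun i j => P i j τ) hr ht hs (by omega),
    sum_Icc_eq_binomialSum (fun i j => P i j τ) hs hr ht (by omega),
    sum_Icc_eq_binomialSum (fun i j => P i j τ) ht hs hr (by omega)]
  exact (hasQExpansion_zero τ hτ).unique (cyclic_expansion τ hτ)
end

section
/- For all integers r, s, t ≥ 3 with k = r+s+t−1 and every τ in the complex upper half-plane, 0 = Σ_{i+j=k, i,j≥3} C(i−1,t−1)C(j−1,s−1)(−1)^{i+r} (E_i(τ)E_j(τ) − (−1)^j E_{i+j}(τ)) + Σ_{j+h=k, j,h≥3} C(j−1,r−1)C(h−1,t−1)(−1)^{j+s} (E_j(τ)E_h(τ) − (−1)^h E_{j+h}(τ)) + Σ_{h+i=k, h,i≥3} C(h−1,s−1)C(i−1,r−1)(−1)^{h+t} (E_h(τ)E_i(τ) − (−1)^i E_{h+i}(τ)), where C(a,b) denotes the binomial coefficient. -/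
open Complex Finset Filter

/-!
If `u + v + w = 0` then `1/(uv) + 1/(vw) + 1/(wu) = 0`. The relation persists when `(u, v, w)` is
replaced by `(u - x + z, v - y + x, w - z + y)`, whose entries still sum to zero, and comparing
coefficients of `x^(r-1) y^(s-1) z^(t-1)` turns it into a cyclic relation among alternating binomial
sums of `u⁻ⁱ v⁻ʲ`, `v⁻ⁱ w⁻ʲ` and `w⁻ⁱ u⁻ʲ`.

Now sum over all `u, v, w ≠ 0` in the lattice `ℤτ + ℤ` with `u + v + w = 0`. Only pairs with
`u + v ≠ 0` occur, so `u⁻ⁱ v⁻ʲ` sums to `G_i G_j - (-1)^j G_{i+j}`, where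
`G_k = ∑ u⁻ᵏ = (2πi)^k E_k` is the lattice sum for `k ≥ 3`; dividing by `(2πi)^(i+j)` gives the
relation among the `E_k`.
-/

section AltBinomSum

variable {A : Type*} [CommRing A]

/-- The sum `∑_{i+j=k} C(i-1,t-1) C(j-1,s-1) (-1)^(i+r) f(i,j)` over `i, j ≥ 1`, `k = r+s+t-1`.
All indices are shifted down by one to avoid truncated subtraction: `(l, m, n)` stands for
`(r-1, s-1, t-1)` and `p` for `(i-1, j-1)`. -/
def altBinomSum (l m n : ℕ) (f : ℕ → ℕ → A) : A :=
  ∑ p ∈ antidiagonal (l + m + n),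
    (p.1.choose n : A) * (p.2.choose m : A) * (-1) ^ (p.1 + l) * f (p.1 + 1) (p.2 + 1)

lemma altBinomSum_congr {l m n : ℕ} {f g : ℕ → ℕ → A}
    (h : ∀ i j, n < i → m < j → f i j = g i j) :
    altBinomSum l m n f = altBinomSum l m n g := by
  refine sum_congr rfl fun p _ ↦ ?_
  rcases lt_or_ge p.1 n with hi | hi
  · simp [Nat.choose_eq_zero_of_lt hi]
  rcases lt_or_ge p.2 m with hj | hj
  · simp [Nat.choose_eq_zero_of_lt hj]
  rw [h _ _ (Nat.lt_succ_of_le hi) (Nat.lt_succ_of_le hj)]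

lemma altBinomSum_pow_mul (l m n : ℕ) (c : A) (f : ℕ → ℕ → A) :
    altBinomSum l m n (fun i j ↦ c ^ (i + j) * f i j) =
      c ^ (l + m + n + 2) * altBinomSum l m n f := by
  rw [altBinomSum, altBinomSum, mul_sum]
  refine sum_congr rfl fun p hp ↦ ?_
  rw [← HasAntidiagonal.mem_antidiagonal.mp hp]
  ring

lemma hasSum_altBinomSum [TopologicalSpace A] [IsTopologicalRing A] {ι : Type*} {l m n : ℕ}
    {f : ι → ℕ → ℕ → A} {g : ℕ → ℕ → A}
    (h : ∀ i j, n < i → m < j → HasSum (f · i j) (g i j)) :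
    HasSum (fun x ↦ altBinomSum l m n (f x)) (altBinomSum l m n g) := by
  refine hasSum_sum fun p _ ↦ ?_
  rcases lt_or_ge p.1 n with hi | hi
  · simp [Nat.choose_eq_zero_of_lt hi]
  rcases lt_or_ge p.2 m with hj | hj
  · simp [Nat.choose_eq_zero_of_lt hj]
  exact (h _ _ (Nat.lt_succ_of_le hi) (Nat.lt_succ_of_le hj)).mul_left _

/-- The terms with `i < d` or `k - i < d` vanish because a binomial coefficient does. -/
lemma sum_Icc_eq_altBinomSum {d r s t k : ℕ} (hd : 1 ≤ d) (hr : 1 ≤ r) (hs : d ≤ s) (ht : d ≤ t)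
    (hk : k = r + s + t - 1) (f : ℕ → ℕ → A) :
    ∑ i ∈ Icc d (k - d), ((i - 1).choose (t - 1) : A) * ((k - i - 1).choose (s - 1) : A) *
      (-1) ^ (i + r) * f i (k - i) = altBinomSum (r - 1) (s - 1) (t - 1) f := by
  refine sum_of_injOn (fun i ↦ (i - 1, k - i - 1)) ?_ ?_ ?_ ?_
  · intro i hi i' hi' h
    simp only [coe_Icc, Set.mem_Icc, Prod.mk.injEq] at hi hi' h
    omega
  · intro i hi
    simp only [coe_Icc, Set.mem_Icc, mem_coe, HasAntidiagonal.mem_antidiagonal] at hi ⊢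
    omega
  · rintro ⟨i, j⟩ hij hout
    rw [HasAntidiagonal.mem_antidiagonal] at hij
    have hsmall : i < t - 1 ∨ j < s - 1 := by
      by_contra! hlarge
      refine hout ⟨i + 1, ?_, ?_⟩
      · simp only [coe_Icc, Set.mem_Icc]
        omega
      · simp only [Prod.mk.injEq]
        omega
    rcases hsmall with hi | hj
    · simp [Nat.choose_eq_zero_of_lt hi]
    · simp [Nat.choose_eq_zero_of_lt hj]
  · intro i hi
    rw [mem_Icc] at hi
    have hsign : (-1 : A) ^ (i + r) = (-1) ^ (i - 1 + (r - 1)) := by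
      rw [show i + r = i - 1 + (r - 1) + 2 by omega, pow_add, neg_one_sq, mul_one]
    simp only [hsign, Nat.sub_add_cancel (show 1 ≤ i by omega),
      Nat.sub_add_cancel (show 1 ≤ k - i by omega)]

open PowerSeries in
lemma sum_antidiagonal_pow_mul_pow_cyclic {α β γ P Q W : A} (h₀ : α + β + γ = 0)
    (h₁ : α * W + β * P + γ * Q = 0) (N : ℕ) :
    α * ∑ p ∈ antidiagonal N, P ^ p.1 * Q ^ p.2 + β * ∑ p ∈ antidiagonal N, Q ^ p.1 * W ^ p.2 +
      γ * ∑ p ∈ antidiagonal N, W ^ p.1 * P ^ p.2 = 0 := by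
  let geom (x : A) : PowerSeries A := PowerSeries.mk (x ^ ·)
  have geom_mul (x : A) : geom x * (1 - C x * X) = 1 := by
    ext (_ | n) <;> simp [geom, mul_sub, ← mul_assoc, coeff_succ_mul_X, coeff_one, pow_succ]
  have coeff_geom_mul (x y : A) :
      coeff N (geom x * geom y) = ∑ p ∈ antidiagonal N, x ^ p.1 * y ^ p.2 := by
    simp [geom, coeff_mul]
  have hC₀ : C α + C β + C γ = 0 := by simp only [← map_add, h₀, map_zero]
  have hC₁ : C α * C W + C β * C P + C γ * C Q = 0 := by
    simp only [← map_add, ← map_mul, h₁, map_zero]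
  -- Complete each product of two geometric series to the product of all three.
  have hgeom : C α * (geom P * geom Q) + C β * (geom Q * geom W) + C γ * (geom W * geom P) = 0 := by
    linear_combination geom P * geom Q * geom W * (hC₀ - X * hC₁)
      - C α * geom P * geom Q * geom_mul W - C β * geom Q * geom W * geom_mul P
      - C γ * geom W * geom P * geom_mul Q
  simpa only [map_add, map_zero, coeff_C_mul, coeff_geom_mul] using congrArg (coeff N) hgeom

open MvPolynomial

variable {σ : Type*}

lemma X_sub_X_pow_s5 (p q : σ) (N : ℕ) :
    (X p - X q : MvPolynomial σ A) ^ N = ∑ e ∈ antidiagonal N,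
      monomial (Finsupp.single p e.1 + Finsupp.single q e.2) ((-1) ^ e.2 * (N.choose e.1 : A)) := by
  rw [sub_eq_add_neg, (Commute.all _ _).add_pow']
  refine sum_congr rfl fun e _ ↦ ?_
  rw [neg_pow, X_pow_eq_monomial, X_pow_eq_monomial, mul_left_comm, monomial_mul, nsmul_eq_mul,
    ← C_eq_coe_nat, ← C_1, ← C_neg, ← C_pow, C_mul_monomial, C_mul_monomial]
  congr 1
  ring

lemma single_add_single_eq_iff {p q r : σ} (hpq : p ≠ q) (hqr : q ≠ r) (hpr : p ≠ r)
    {l m n : ℕ} {e f : ℕ × ℕ} (h : e.1 + e.2 + (f.1 + f.2) = l + m + n) :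
    Finsupp.single p e.1 + Finsupp.single r e.2 + (Finsupp.single q f.1 + Finsupp.single p f.2) =
      Finsupp.single p l + Finsupp.single q m + Finsupp.single r n ↔ e.2 = n ∧ f.1 = m := by
  classical
  constructor
  · intro heq
    exact ⟨by simpa [hqr.symm, hpr.symm] using DFunLike.congr_fun heq r,
      by simpa [hqr, hpq.symm] using DFunLike.congr_fun heq q⟩
  · rintro ⟨rfl, rfl⟩
    rw [show l = e.1 + f.2 by omega, Finsupp.single_add]
    abel

lemma coeff_X_sub_X_pow_mul_X_sub_X_pow {p q r : σ} (hpq : p ≠ q) (hqr : q ≠ r) (hpr : p ≠ r)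
    {l m n i j : ℕ} (h : i + j = l + m + n) :
    coeff (Finsupp.single p l + Finsupp.single q m + Finsupp.single r n)
        ((X p - X r : MvPolynomial σ A) ^ i * (X q - X p) ^ j) =
      (i.choose n : A) * (j.choose m : A) * (-1) ^ (i + l) := by
  classical
  have exponent_eq_iff {e f : ℕ × ℕ} (he : e.1 + e.2 = i) (hf : f.1 + f.2 = j) :=
    single_add_single_eq_iff (l := l) (m := m) (n := n) (e := e) (f := f) hpq hqr hpr
      (by rw [he, hf, h])
  rw [X_sub_X_pow_s5, X_sub_X_pow_s5, sum_mul_sum, ← sum_product', coeff_sum]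
  simp_rw [monomial_mul, coeff_monomial]
  by_cases hle : n ≤ i ∧ m ≤ j
  · have hin : i - n + n = i := Nat.sub_add_cancel hle.1
    have hjm : m + (j - m) = j := Nat.add_sub_cancel' hle.2
    rw [sum_eq_single ((i - n, n), (m, j - m))]
    · have hsign : (-1 : A) ^ (i + l) = (-1) ^ n * (-1) ^ (j - m) := by
        rw [show i + l = 2 * (i - n) + (n + (j - m)) by omega, pow_add, pow_mul, neg_one_sq,
          one_pow, one_mul, pow_add]
      rw [if_pos ((exponent_eq_iff hin hjm).mpr ⟨rfl, rfl⟩), Nat.choose_symm hle.1, hsign]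
      ring
    · rintro ⟨⟨e₁, e₂⟩, f₁, f₂⟩ hef hne
      simp only [mem_product, HasAntidiagonal.mem_antidiagonal] at hef
      refine if_neg ((exponent_eq_iff hef.1 hef.2).not.mpr fun heq ↦ hne ?_)
      simp only [Prod.mk.injEq] at heq ⊢
      omega
    · simp [hin, hjm]
  · have hzero : (i.choose n : A) * (j.choose m : A) = 0 := by
      rcases not_and_or.mp hle with h | h <;> simp [Nat.choose_eq_zero_of_lt (not_le.mp h)]
    rw [hzero, zero_mul, sum_eq_zero]
    rintro ⟨e, f⟩ hef
    rw [mem_product, HasAntidiagonal.mem_antidiagonal, HasAntidiagonal.mem_antidiagonal] at hef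
    refine if_neg ((exponent_eq_iff hef.1 hef.2).not.mpr ?_)
    rintro ⟨rfl, rfl⟩
    omega

lemma coeff_sum_antidiagonal_X_sub_X {p q r : σ} (hpq : p ≠ q) (hqr : q ≠ r) (hpr : p ≠ r)
    {l m n N : ℕ} (hN : N = l + m + n) (a b : A) :
    coeff (Finsupp.single p l + Finsupp.single q m + Finsupp.single r n)
        (C (a * b) * ∑ e ∈ antidiagonal N,
          (C a * (X p - X r : MvPolynomial σ A)) ^ e.1 * (C b * (X q - X p)) ^ e.2) =
      altBinomSum l m n (fun i j ↦ a ^ i * b ^ j) := by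
  rw [mul_sum, coeff_sum, altBinomSum, hN]
  refine sum_congr rfl fun e he ↦ ?_
  have hC : C (a * b) * ((C a * (X p - X r : MvPolynomial σ A)) ^ e.1 *
      (C b * (X q - X p)) ^ e.2) =
      C (a ^ (e.1 + 1) * b ^ (e.2 + 1)) * ((X p - X r) ^ e.1 * (X q - X p) ^ e.2) := by
    simp only [C_mul, C_pow, mul_pow]
    ring
  rw [hC, coeff_C_mul, coeff_X_sub_X_pow_mul_X_sub_X_pow hpq hqr hpr
    (HasAntidiagonal.mem_antidiagonal.mp he), mul_comm]

theorem altBinomSum_pow_mul_pow_cyclic (l m n : ℕ) {a b c : A} (h : a * b + b * c + c * a = 0) :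
    altBinomSum l m n (fun i j ↦ a ^ i * b ^ j) + altBinomSum m n l (fun i j ↦ b ^ i * c ^ j) +
      altBinomSum n l m (fun i j ↦ c ^ i * a ^ j) = 0 := by
  rw [← coeff_sum_antidiagonal_X_sub_X (p := (0 : Fin 3)) (q := 1) (r := 2)
      (by decide) (by decide) (by decide) rfl,
    ← coeff_sum_antidiagonal_X_sub_X (p := (1 : Fin 3)) (q := 2) (r := 0)
      (by decide) (by decide) (by decide) (show l + m + n = m + n + l by ring),
    ← coeff_sum_antidiagonal_X_sub_X (p := (2 : Fin 3)) (q := 0) (r := 1)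
      (by decide) (by decide) (by decide) (show l + m + n = n + l + m by ring),
    ← add_rotate (Finsupp.single 0 l), add_rotate (Finsupp.single 2 n), ← coeff_add, ← coeff_add,
    sum_antidiagonal_pow_mul_pow_cyclic, coeff_zero]
  · rw [← C_add, ← C_add, h, C_0]
  · simp only [C_mul]
    ring

end AltBinomSum

section ZeroSumTriples

variable (Λ : Type*) [AddCommGroup Λ]

/-- The triples `(u, v, w)` of nonzero elements with `u + v + w = 0`, encoded by `(u, v)`. -/
def zeroSumTriples : Set (Λ × Λ) := {p | p.1 ≠ 0 ∧ p.2 ≠ 0 ∧ p.1 + p.2 ≠ 0}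

variable {Λ}

lemma neg_sub_ne_zero_of_mem_zeroSumTriples {p : Λ × Λ} (hp : p ∈ zeroSumTriples Λ) :
    -p.1 - p.2 ≠ 0 := by
  rw [← neg_add', neg_ne_zero]
  exact hp.2.2

/-- The rotation `(u, v, w) ↦ (v, w, u)`. -/
def rotateTriple : zeroSumTriples Λ ≃ zeroSumTriples Λ where
  toFun p := ⟨(p.1.2, -p.1.1 - p.1.2), p.2.2.1,
    neg_sub_ne_zero_of_mem_zeroSumTriples p.2, by simpa using p.2.1⟩
  invFun p := ⟨(-p.1.1 - p.1.2, p.1.1),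
    neg_sub_ne_zero_of_mem_zeroSumTriples p.2, p.2.1, by simpa [sub_add_eq_add_sub] using p.2.2.1⟩
  left_inv p := by ext <;> simp [sub_sub_eq_add_sub]
  right_inv p := by ext <;> simp

end ZeroSumTriples

section InvPowSum

/-- The combination `G_i G_j - (-1)^j G_{i+j}` of a sequence `G`. If `G_k = ∑ u⁻ᵏ`, it is the sum of
`u⁻ⁱ v⁻ʲ` over the pairs with `u + v ≠ 0`. -/
def reducedProd {K : Type*} [CommRing K] (G : ℕ → K) (i j : ℕ) : K :=
  G i * G j - (-1) ^ j * G (i + j)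

variable {Λ K : Type*} [AddCommGroup Λ] [NormedField K]

/-- The sum of the `k`-th inverse powers of the image of `φ`, counted with multiplicity. Since
`0⁻¹ = 0`, the kernel does not contribute when `k ≠ 0`. -/
noncomputable def invPowSum (φ : Λ →+ K) (k : ℕ) : K := ∑' u, (φ u)⁻¹ ^ k

lemma invPowSum_eq_zero_of_odd [CharZero K] (φ : Λ →+ K) {k : ℕ} (hk : Odd k) :
    invPowSum φ k = 0 := by
  have h := (Equiv.neg Λ).tsum_eq fun u ↦ (φ u)⁻¹ ^ k
  simp only [Equiv.neg_apply, map_neg, inv_neg, hk.neg_pow, tsum_neg] at h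
  exact neg_eq_self.mp h

variable [CompleteSpace K] {φ : Λ →+ K} {i j : ℕ}

lemma hasSum_inv_pow_mul_inv_pow (hi : Summable fun u ↦ ‖(φ u)⁻¹ ^ i‖)
    (hj : Summable fun u ↦ ‖(φ u)⁻¹ ^ j‖) :
    HasSum (fun p : Λ × Λ ↦ (φ p.1)⁻¹ ^ i * (φ p.2)⁻¹ ^ j) (invPowSum φ i * invPowSum φ j) := by
  rw [invPowSum, invPowSum, tsum_mul_tsum_of_summable_norm hi hj]
  exact (summable_mul_of_summable_norm hi hj).hasSum

lemma hasSum_indicator_add_eq_zero (hij : Summable fun u ↦ ‖(φ u)⁻¹ ^ (i + j)‖) :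
    HasSum ({p : Λ × Λ | p.1 + p.2 = 0}.indicator fun p ↦ (φ p.1)⁻¹ ^ i * (φ p.2)⁻¹ ^ j)
      ((-1) ^ j * invPowSum φ (i + j)) := by
  have hinj : Function.Injective fun u : Λ ↦ (u, -u) := fun _ _ h ↦ congrArg Prod.fst h
  refine (hinj.hasSum_iff fun p hp ↦ Set.indicator_of_notMem (fun hp₀ ↦ hp ⟨p.1, ?_⟩) _).mp ?_
  · exact Prod.ext rfl (neg_eq_of_add_eq_zero_right hp₀)
  · convert! hij.of_norm.hasSum.mul_left ((-1) ^ j) using 2 with u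
    simp only [Function.comp_apply, Set.indicator, Set.mem_ofPred_eq, add_neg_cancel, if_true,
      map_neg, inv_neg, neg_pow (φ u)⁻¹, pow_add]
    ring

lemma hasSum_zeroSumTriples (hi₀ : i ≠ 0) (hj₀ : j ≠ 0) (hi : Summable fun u ↦ ‖(φ u)⁻¹ ^ i‖)
    (hj : Summable fun u ↦ ‖(φ u)⁻¹ ^ j‖) (hij : Summable fun u ↦ ‖(φ u)⁻¹ ^ (i + j)‖) :
    HasSum (fun p : zeroSumTriples Λ ↦ (φ p.1.1)⁻¹ ^ i * (φ p.1.2)⁻¹ ^ j)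
      (reducedProd (invPowSum φ) i j) := by
  let f (p : Λ × Λ) : K := (φ p.1)⁻¹ ^ i * (φ p.2)⁻¹ ^ j
  refine (hasSum_subtype_iff_indicator (f := f)).mpr ?_
  convert! (hasSum_inv_pow_mul_inv_pow hi hj).sub (hasSum_indicator_add_eq_zero hij) using 2 with p
  by_cases h₁ : p.1 = 0
  · simp [zeroSumTriples, Set.indicator, h₁, hi₀]
  by_cases h₂ : p.2 = 0
  · simp [zeroSumTriples, Set.indicator, h₂, hj₀]
  by_cases h : p.1 + p.2 = 0 <;> simp [zeroSumTriples, f, h₁, h₂, h]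

theorem altBinomSum_reducedProd_invPowSum_cyclic (hφ : Function.Injective φ) {d : ℕ}
    (hsum : ∀ k, d < k → Summable fun u ↦ ‖(φ u)⁻¹ ^ k‖) {l m n : ℕ}
    (hl : d ≤ l) (hm : d ≤ m) (hn : d ≤ n) :
    altBinomSum l m n (reducedProd (invPowSum φ)) + altBinomSum m n l (reducedProd (invPowSum φ)) +
      altBinomSum n l m (reducedProd (invPowSum φ)) = 0 := by
  have hT (i j : ℕ) (hi : d < i) (hj : d < j) := hasSum_zeroSumTriples (by omega) (by omega)
    (hsum i hi) (hsum j hj) (hsum (i + j) (by omega))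
  have hT₁ (i j : ℕ) (hi : d < i) (hj : d < j) := rotateTriple.hasSum_iff.mpr (hT i j hi hj)
  have hT₂ (i j : ℕ) (hi : d < i) (hj : d < j) := rotateTriple.symm.hasSum_iff.mpr (hT i j hi hj)
  have h₀ := hasSum_altBinomSum (l := l) (m := m) (n := n)
    fun i j hi hj ↦ hT i j (hn.trans_lt hi) (hm.trans_lt hj)
  have h₁ := hasSum_altBinomSum (l := m) (m := n) (n := l)
    fun i j hi hj ↦ hT₁ i j (hl.trans_lt hi) (hn.trans_lt hj)
  have h₂ := hasSum_altBinomSum (l := n) (m := l) (n := m)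
    fun i j hi hj ↦ hT₂ i j (hm.trans_lt hi) (hl.trans_lt hj)
  refine ((h₀.add h₁).add h₂).unique ?_
  convert! hasSum_zero using 2 with p
  obtain ⟨⟨u, v⟩, huv⟩ := p
  have hu₀ : φ u ≠ 0 := (map_ne_zero_iff φ hφ).mpr huv.1
  have hv₀ : φ v ≠ 0 := (map_ne_zero_iff φ hφ).mpr huv.2.1
  have hw₀ : φ (-u - v) ≠ 0 := (map_ne_zero_iff φ hφ).mpr
    (neg_sub_ne_zero_of_mem_zeroSumTriples huv)
  have hrel : (φ u)⁻¹ * (φ v)⁻¹ + (φ v)⁻¹ * (φ (-u - v))⁻¹ + (φ (-u - v))⁻¹ * (φ u)⁻¹ = 0 := by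
    field_simp
    rw [map_sub, map_neg]
    ring
  have h := altBinomSum_pow_mul_pow_cyclic l m n hrel
  simpa [rotateTriple] using h

end InvPowSum

section Eisenstein

open UpperHalfPlane hiding I
open EisensteinSeries

/-- The embedding `(c, d) ↦ c τ + d` with image the lattice `ℤ τ + ℤ`. -/
def latticeEmbedding (τ : ℍ) : (Fin 2 → ℤ) →+ ℂ where
  toFun v := v 0 * τ + v 1
  map_zero' := by simp
  map_add' u v := by
    simp only [Pi.add_apply, Int.cast_add]
    ring

lemma latticeEmbedding_injective (τ : ℍ) : Function.Injective (latticeEmbedding τ) := by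
  rw [injective_iff_map_eq_zero]
  intro v hv
  by_contra hne
  have hne' : (fun i ↦ (v i : ℝ)) ≠ 0 := fun h ↦
    hne (funext fun i ↦ by simpa using congrFun h i)
  exact linear_ne_zero τ hne' (by simpa [latticeEmbedding] using hv)

lemma inv_latticeEmbedding_pow (τ : ℍ) (k : ℕ) (v : Fin 2 → ℤ) :
    (latticeEmbedding τ v)⁻¹ ^ k = eisSummand k v τ := by
  simp [eisSummand, latticeEmbedding]

lemma two_mul_riemannZeta_eq_bernoulli {k : ℕ} (hk : Even k) (hk₀ : k ≠ 0) :
    2 * riemannZeta k = -((2 * Real.pi * I) ^ k * bernoulli k / (k.factorial : ℂ)) := by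
  obtain ⟨m, rfl⟩ := hk.two_dvd
  have hm : m ≠ 0 := by rintro rfl; exact hk₀ rfl
  have hpow : (2 : ℂ) ^ (2 * m) = 2 * 2 ^ (2 * m - 1) := by
    rw [← pow_succ', Nat.sub_add_cancel (by omega)]
  have hI : I ^ (2 * m) = (-1) ^ m := by rw [pow_mul, I_sq]
  rw [Nat.cast_mul, Nat.cast_two, riemannZeta_two_mul_nat hm, mul_pow, mul_pow, hI, hpow]
  ring

lemma Eis_of_even {k : ℕ} (hk : Even k) (hk₂ : 2 ≤ k) (τ : ℂ) :
    Eis k τ = -(bernoulli k / (k.factorial : ℂ)) + 2 / ((k - 1).factorial : ℂ) *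
      ∑' n : ℕ+, (ArithmeticFunction.sigma (k - 1) n : ℂ) *
        exp (2 * Real.pi * I * τ) ^ (n : ℕ) := by
  have hfact : (k.factorial : ℂ) = k * ((k - 1).factorial : ℂ) := by
    exact_mod_cast (Nat.mul_factorial_pred (by omega)).symm
  have hk₀ : (k : ℂ) ≠ 0 := by exact_mod_cast (show k ≠ 0 by omega)
  have hfact₀ : ((k - 1).factorial : ℂ) ≠ 0 := by exact_mod_cast Nat.factorial_ne_zero _
  rw [Eis, if_pos ⟨hk, hk₂⟩, hfact, tsum_pnat_eq_tsum_succ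
    (f := fun n ↦ (ArithmeticFunction.sigma (k - 1) n : ℂ) * exp (2 * Real.pi * I * τ) ^ n)]
  simp only [ArithmeticFunction.sigma_apply, Nat.cast_sum, Nat.cast_pow]
  field_simp

lemma invPowSum_latticeEmbedding (τ : ℍ) {k : ℕ} (hk : 2 < k) :
    invPowSum (latticeEmbedding τ) k = (2 * Real.pi * I) ^ k * Eis k τ := by
  rcases Nat.even_or_odd k with heven | hodd
  · have hneg : (-2 * Real.pi * I : ℂ) ^ k = (2 * Real.pi * I) ^ k := by
      rw [neg_mul, neg_mul, heven.neg_pow]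
    simp only [invPowSum, inv_latticeEmbedding_pow]
    rw [tsum_eisSummand_eq_tsum_sigma_mul_cexp_pow hk heven, hneg,
      two_mul_riemannZeta_eq_bernoulli heven (by omega), Eis_of_even heven hk.le]
    ring
  · rw [invPowSum_eq_zero_of_odd _ hodd, Eis, if_neg fun h ↦ Nat.not_even_iff_odd.mpr hodd h.1,
      mul_zero]

theorem altBinomSum_reducedProd_Eis_cyclic (τ : ℍ) {l m n : ℕ} (hl : 2 ≤ l) (hm : 2 ≤ m)
    (hn : 2 ≤ n) :
    altBinomSum l m n (reducedProd (Eis · τ)) + altBinomSum m n l (reducedProd (Eis · τ)) +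
      altBinomSum n l m (reducedProd (Eis · τ)) = 0 := by
  have hsum (k : ℕ) (hk : 2 < k) : Summable fun v ↦ ‖(latticeEmbedding τ v)⁻¹ ^ k‖ := by
    simpa only [inv_latticeEmbedding_pow] using
      summable_norm_eisSummand (k := k) (by exact_mod_cast hk) τ
  have hscale {l m n : ℕ} (hm : 2 ≤ m) (hn : 2 ≤ n) :
      altBinomSum l m n (reducedProd (invPowSum (latticeEmbedding τ))) =
        (2 * Real.pi * I) ^ (l + m + n + 2) * altBinomSum l m n (reducedProd (Eis · τ)) := by
    rw [← altBinomSum_pow_mul]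
    refine altBinomSum_congr fun i j hi hj ↦ ?_
    simp only [reducedProd, invPowSum_latticeEmbedding τ (hn.trans_lt hi),
      invPowSum_latticeEmbedding τ (hm.trans_lt hj),
      invPowSum_latticeEmbedding τ (show 2 < i + j by omega)]
    ring
  have h := altBinomSum_reducedProd_invPowSum_cyclic (latticeEmbedding_injective τ) hsum hl hm hn
  rw [hscale hm hn, hscale hn hl, hscale hl hm, show m + n + l = l + m + n by ring,
    show n + l + m = l + m + n by ring, ← mul_add, ← mul_add] at h
  exact (mul_eq_zero.mp h).resolve_left (pow_ne_zero _ two_pi_I_ne_zero)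

end Eisenstein

/-- Equation (4) of Hirose–Sato–Tasaka: for integers `r, s, t ≥ 3` with
`k = r + s + t - 1` and `τ` in the upper half-plane, the three alternating binomial
sums (over indices `≥ 3`) of `E_i E_j - (-1)^j E_{i+j}` vanish. -/
theorem eisenstein_relation_high_weight (r s t : ℕ) (hr : 3 ≤ r) (hs : 3 ≤ s) (ht : 3 ≤ t)
    (k : ℕ) (hk : k = r + s + t - 1) (τ : ℂ) (hτ : 0 < τ.im) :
    0 = (∑ i ∈ Finset.Icc 3 (k - 3), ((i - 1).choose (t - 1) : ℂ) *
          ((k - i - 1).choose (s - 1) : ℂ) * (-1) ^ (i + r) *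
          (Eis i τ * Eis (k - i) τ - (-1) ^ (k - i) * Eis (i + (k - i)) τ))
      + (∑ j ∈ Finset.Icc 3 (k - 3), ((j - 1).choose (r - 1) : ℂ) *
          ((k - j - 1).choose (t - 1) : ℂ) * (-1) ^ (j + s) *
          (Eis j τ * Eis (k - j) τ - (-1) ^ (k - j) * Eis (j + (k - j)) τ))
      + (∑ h ∈ Finset.Icc 3 (k - 3), ((h - 1).choose (s - 1) : ℂ) *
          ((k - h - 1).choose (r - 1) : ℂ) * (-1) ^ (h + t) *
          (Eis h τ * Eis (k - h) τ - (-1) ^ (k - h) * Eis (h + (k - h)) τ)) := by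
  have h := altBinomSum_reducedProd_Eis_cyclic ⟨τ, hτ⟩ (l := r - 1) (m := s - 1) (n := t - 1)
    (by omega) (by omega) (by omega)
  rw [← sum_Icc_eq_altBinomSum (by norm_num) (by omega) hs ht hk,
    ← sum_Icc_eq_altBinomSum (k := k) (by norm_num) (by omega) ht hr (by omega),
    ← sum_Icc_eq_altBinomSum (k := k) (by norm_num) (by omega) hr hs (by omega)] at h
  exact h.symm
end

section
/- For every even integer k ≥ 2 and every τ in the complex upper half-plane, the q-series Eisenstein series satisfies E_k(τ) = lim_{M→∞} Σ_{m=−M}^{M} F_k(m,τ), i.e. (2/(k−1)!)(−B_k/(2k) + Σ_{n≥1} σ_{k−1}(n) q^n) equals the symmetric iterated lattice sum lim_{M→∞} Σ_{m=−M}^{M} (2π√−1)^{−k} lim_{N→∞} Σ_{n=−N,…,N, (m,n)≠(0,0)} (mτ+n)^{−k}. -/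
open Complex Finset Filter

/-!
Write `q = exp (2πiτ)`. Since `k` is even, the row `m` of the lattice sum equals the row `-m`. The
row `m = 0` is `2 (2πi)⁻ᵏ ζ(k)`, which Euler's formula turns into the constant term of `E_k`, and
for `m > 0` Lipschitz's formula evaluates the row as
`(1 / (k - 1)!) ∑_{n ≥ 1} n ^ (k - 1) q ^ (mn)`. Collecting equal powers of `q` turns the sum of
these over `m` into the divisor sums of `E_k`. This also shows that the rows are absolutely
summable, although for `k = 2` the double series is not.
-/

section

open scoped Real Nat Topology ArithmeticFunction.sigma

theorem tendsto_sum_Icc_neg_of_hasSum {M : Type*} [AddCommMonoid M] [TopologicalSpace M]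
    {f : ℤ → M} {a : M} (hf : HasSum f a) :
    Tendsto (fun N : ℕ ↦ ∑ n ∈ Icc (-(N : ℤ)) N, f n) atTop (𝓝 a) :=
  SummationFilter.hasSum_symmetricIcc_iff.mp (hf.mono_left SummationFilter.LeAtTop.le_atTop)

theorem hasSum_int_of_even {M : Type*} [AddCommMonoid M] [TopologicalSpace M] [ContinuousAdd M]
    {f : ℤ → M} {a : M} (hf : f.Even) (ha : HasSum (fun n : ℕ+ ↦ f n) a) :
    HasSum f (f 0 + 2 • a) := by
  have hpos : HasSum (fun n : ℕ ↦ f (n + 1)) a := by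
    simpa using (hasSum_pnat_iff_hasSum_succ (f := fun n : ℕ ↦ f n)).mp ha
  have hneg : HasSum (fun n : ℕ ↦ f (-(n + 1))) a := by simpa only [hf _] using hpos
  convert! HasSum.of_add_one_of_neg_add_one hpos hneg using 1
  rw [two_nsmul, add_left_comm, add_assoc]

theorem sum_filter_ne_zero_linear_zpow {K : Type*} [DivisionRing K] (x : K) (m : ℤ)
    (s : Finset ℤ) {a : ℤ} (ha : a ≠ 0) :
    ∑ n ∈ s with (m, n) ≠ (0, 0), (m * x + n) ^ a = ∑ n ∈ s, (m * x + n) ^ a := by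
  refine sum_filter_of_ne fun n _ hterm hmn ↦ hterm ?_
  obtain ⟨rfl, rfl⟩ := Prod.mk.inj hmn
  simp [zero_zpow a ha]

theorem hasSum_tsum_pow_mul_pow_sigma {𝕜 : Type*} [NontriviallyNormedField 𝕜] [CompleteSpace 𝕜]
    [NormSMulClass ℤ 𝕜] (k : ℕ) {r : 𝕜} (hr : ‖r‖ < 1) :
    HasSum (fun m : ℕ+ ↦ ∑' n : ℕ+, (n : 𝕜) ^ k * r ^ (m * n : ℕ))
      (∑' n : ℕ+, (σ k n : 𝕜) * r ^ (n : ℕ)) := by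
  rw [← tsum_prod_pow_eq_tsum_sigma k hr]
  exact (summable_prod_mul_pow k hr).prod.hasSum

theorem riemannZeta_natCast_of_even {k : ℕ} (hk : Even k) :
    riemannZeta k = -(2 * π * I) ^ k * bernoulli k / (2 * k !) := by
  obtain ⟨m, rfl⟩ := hk.exists_two_nsmul
  have hpow : (2 : ℂ) ^ (2 * m - 1 : ℤ) = 2 ^ (2 * m) / 2 := by
    rw [zpow_sub_one₀ two_ne_zero, div_eq_mul_inv]
    norm_cast
  simp only [smul_eq_mul, Nat.cast_mul, Nat.cast_ofNat]
  rw [riemannZeta_two_mul_nat', hpow, mul_pow, mul_pow, pow_mul I, I_sq]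
  field_simp
  ring

/-- The row sum `F_k(m, τ)` of the lattice `ℤτ + ℤ`, for `k ≥ 2`, where the series over `n` is
absolutely convergent and the order of summation is irrelevant. The term `(m, n) = (0, 0)` need not
be excluded, because `0 ^ (-k) = 0` in `ℂ`. -/
noncomputable def latticeRow (k : ℕ) (τ : ℂ) (m : ℤ) : ℂ :=
  (2 * π * I) ^ (-(k : ℤ)) * ∑' n : ℤ, (m * τ + n) ^ (-(k : ℤ))

theorem hasSum_latticeRow_terms {k : ℕ} (hk2 : 2 ≤ k) (τ : ℂ) (m : ℤ) :
    HasSum (fun n : ℤ ↦ (2 * π * I) ^ (-(k : ℤ)) * (m * τ + n) ^ (-(k : ℤ)))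
      (latticeRow k τ m) := by
  refine Summable.hasSum ?_ |>.mul_left _
  simpa only [zpow_neg] using
    EisensteinSeries.linear_right_summable τ m (k := k) (by exact_mod_cast hk2)

theorem latticeRow_even {k : ℕ} (hk : Even k) (τ : ℂ) : (latticeRow k τ).Even := by
  intro m
  have hk' : Even (-(k : ℤ)) := by simpa using hk
  rw [latticeRow, latticeRow, ← tsum_comp_neg]
  congr! 3 with n
  have hneg : ((-m : ℤ) : ℂ) * τ + (-n : ℤ) = -(m * τ + n) := by push_cast; ring
  rw [hneg, hk'.neg_zpow]

theorem latticeRow_zero {k : ℕ} (hk : Even k) (hk2 : 2 ≤ k) (τ : ℂ) :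
    latticeRow k τ 0 = 2 / ((k - 1)! : ℂ) * (-(bernoulli k : ℂ) / (2 * k)) := by
  have hzeta : ∑' n : ℤ, ((0 : ℤ) * τ + n) ^ (-(k : ℤ)) = 2 * riemannZeta k := by
    simpa using (two_mul_riemannZeta_eq_tsum_int_inv_pow_of_even hk2 hk).symm
  have hfact : (k ! : ℂ) = k * (k - 1)! := by exact_mod_cast (Nat.mul_factorial_pred (by lia)).symm
  have h_two_pi_I := two_pi_I_ne_zero
  rw [latticeRow, hzeta, riemannZeta_natCast_of_even hk, hfact, zpow_neg, zpow_natCast]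
  field_simp

theorem latticeRow_pnat {k : ℕ} (hk2 : 2 ≤ k) {τ : ℂ} (hτ : 0 < τ.im) (m : ℕ+) :
    latticeRow k τ m =
      (-1) ^ k / (k - 1)! * ∑' n : ℕ+, (n : ℂ) ^ (k - 1) * exp (2 * π * I * τ) ^ (m * n : ℕ) := by
  have hmτ : 0 < ((m : ℂ) * τ).im := by simpa using hτ
  have lipschitz := EisensteinSeries.qExpansion_identity_pnat (k := k - 1) (by lia) ⟨m * τ, hmτ⟩
  have hexp (n : ℕ+) : exp (2 * π * I * (m * τ)) ^ (n : ℕ) = exp (2 * π * I * τ) ^ (m * n : ℕ) := by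
    rw [pow_mul, ← exp_nat_mul _ m]
    ring_nf
  simp only [Nat.sub_add_cancel (one_le_two.trans hk2), one_div, hexp] at lipschitz
  have h_two_pi_I := two_pi_I_ne_zero
  simp only [latticeRow, Int.cast_natCast, zpow_neg, zpow_natCast, lipschitz]
  rw [neg_mul, neg_mul, neg_pow]
  field_simp

theorem Eis_eq_tsum_sigma {k : ℕ} (hk : Even k) (hk2 : 2 ≤ k) (τ : ℂ) :
    Eis k τ = 2 / ((k - 1)! : ℂ) * (-(bernoulli k : ℂ) / (2 * k) +
      ∑' n : ℕ+, (σ (k - 1) n : ℂ) * exp (2 * π * I * τ) ^ (n : ℕ)) := by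
  rw [Eis, if_pos ⟨hk, hk2⟩,
    tsum_pnat_eq_tsum_succ (f := fun n ↦ (σ (k - 1) n : ℂ) * exp (2 * π * I * τ) ^ n)]
  simp only [ArithmeticFunction.sigma_apply, Nat.cast_sum, Nat.cast_pow]

theorem hasSum_latticeRow {k : ℕ} (hk : Even k) (hk2 : 2 ≤ k) {τ : ℂ} (hτ : 0 < τ.im) :
    HasSum (latticeRow k τ) (Eis k τ) := by
  have hq : ‖exp (2 * π * I * τ)‖ < 1 := UpperHalfPlane.norm_exp_two_pi_I_lt_one ⟨τ, hτ⟩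
  have hpos : HasSum (fun m : ℕ+ ↦ latticeRow k τ m) (1 / ((k - 1)! : ℂ) *
      ∑' n : ℕ+, (σ (k - 1) n : ℂ) * exp (2 * π * I * τ) ^ (n : ℕ)) := by
    simp only [latticeRow_pnat hk2 hτ, hk.neg_one_pow]
    exact (hasSum_tsum_pow_mul_pow_sigma (k - 1) hq).mul_left _
  convert hasSum_int_of_even (latticeRow_even hk τ) hpos using 1
  rw [Eis_eq_tsum_sigma hk hk2, latticeRow_zero hk hk2, nsmul_eq_mul]
  push_cast
  ring

end

/-- The Eisenstein series `E_k` (as a `q`-series) equals the symmetric iterated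
lattice sum `lim_{M→∞} Σ_{m=-M}^{M} F_k(m,τ)`, where
`F_k(m,τ) = (2π√-1)^{-k} lim_{N→∞} Σ_{n=-N,…,N, (m,n)≠(0,0)} (mτ+n)^{-k}`. -/
theorem eisenstein_eq_lattice_sum (k : ℕ) (hk : Even k) (hk2 : 2 ≤ k)
    (τ : ℂ) (hτ : 0 < τ.im) :
    ∃ F : ℤ → ℂ,
      (∀ m : ℤ, Filter.Tendsto
        (fun N : ℕ => (2 * Real.pi * Complex.I) ^ (-(k : ℤ)) *
          ∑ n ∈ (Finset.Icc (-(N : ℤ)) N).filter (fun n => (m, n) ≠ (0, 0)),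
            ((m : ℂ) * τ + n) ^ (-(k : ℤ)))
        Filter.atTop (nhds (F m))) ∧
      Filter.Tendsto (fun M : ℕ => ∑ m ∈ Finset.Icc (-(M : ℤ)) M, F m)
        Filter.atTop (nhds (Eis k τ)) := by
  refine ⟨latticeRow k τ, fun m ↦ ?_, tendsto_sum_Icc_neg_of_hasSum (hasSum_latticeRow hk hk2 hτ)⟩
  have hexponent : -(k : ℤ) ≠ 0 := by lia
  simp only [sum_filter_ne_zero_linear_zpow τ m _ hexponent, mul_sum]
  exact tendsto_sum_Icc_neg_of_hasSum (hasSum_latticeRow_terms hk2 τ m)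
end

section
/- For every integer k ≥ 3 and every τ in the complex upper half-plane, lim_{M→∞} Σ_{m=−M}^{M} m·F_k(m,τ) = −E_{k−1}'(τ)/(k−1). -/
open Complex Finset Filter

/-!
For `m ≥ 1` and `q = e^{2πiτ}`, Lipschitz' formula gives
`F_k(m, τ) = (-1)^k / (k-1)! · ∑_{n ≥ 1} n^{k-1} q^{mn}`, while `F_k(-m, τ) = (-1)^k F_k(m, τ)`.
Hence the weighted sum over all `m` vanishes for even `k` and equals
`-2 / (k-1)! · ∑_{m, n ≥ 1} m n^{k-1} q^{mn}` for odd `k`. Since `m n^{k-1} = mn · n^{k-2}`, the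
double series is `q d/dq` of `∑_{m, n ≥ 1} n^{k-2} q^{mn} = ∑ σ_{k-2}(N) q^N`, the nonconstant part
of `E_{k-1}` up to the factor `2 / (k-2)!`.
-/

/-- The row sum `F_k(m, τ)` as an unrestricted sum over `n : ℤ`, which converges for `2 ≤ k`.
The pair `(m, n) = (0, 0)` is not excluded: it contributes `0⁻¹ = 0`. -/
noncomputable def latticeRowSum (k : ℕ) (m : ℤ) (τ : ℂ) : ℂ :=
  (2 * Real.pi * I) ^ (-(k : ℤ)) * ∑' n : ℤ, ((m : ℂ) * τ + n) ^ (-(k : ℤ))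

/-- The series `∑ σ_p(n) q^n` at `q = e^{2πiτ}`, written as the double series `∑ n^p q^{mn}` over
`m, n ≥ 1`. -/
noncomputable def divisorSeries (p : ℕ) (τ : ℂ) : ℂ :=
  ∑' c : ℕ+ × ℕ+, (c.2 : ℂ) ^ p * cexp (2 * Real.pi * I * τ) ^ (c.1 * c.2 : ℕ)

section LatticeRowSum

variable {k : ℕ}

lemma tendsto_latticeRowSum (hk : 2 ≤ k) (m : ℤ) (τ : ℂ) :
    Tendsto
      (fun N : ℕ => (2 * Real.pi * I) ^ (-(k : ℤ)) *
        ∑ n ∈ (Icc (-(N : ℤ)) N).filter (fun n => (m, n) ≠ (0, 0)),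
          ((m : ℂ) * τ + n) ^ (-(k : ℤ)))
      atTop (nhds (latticeRowSum k m τ)) := by
  have hsummable : Summable fun n : ℤ ↦ ((m : ℂ) * τ + n) ^ (-(k : ℤ)) := by
    simpa only [zpow_neg] using
      EisensteinSeries.linear_right_summable τ m (k := (k : ℤ)) (by exact_mod_cast hk)
  have hzero (n : ℤ) (hn : ((m : ℂ) * τ + n) ^ (-(k : ℤ)) ≠ 0) : (m, n) ≠ (0, 0) := by
    rintro ⟨rfl, rfl⟩
    exact hn (by simp [show k ≠ 0 by lia])
  refine ((hsummable.hasSum.comp tendsto_Icc_neg).const_mul _).congr fun N ↦ ?_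
  rw [sum_filter_of_ne fun n _ ↦ hzero n, Function.comp_apply]

lemma latticeRowSum_neg (k : ℕ) (m : ℤ) (τ : ℂ) :
    latticeRowSum k (-m) τ = (-1) ^ k * latticeRowSum k m τ := by
  have hterm (n : ℤ) : (((-m : ℤ) : ℂ) * τ + (-n : ℤ)) ^ (-(k : ℤ)) =
      (-1) ^ k * ((m : ℂ) * τ + n) ^ (-(k : ℤ)) := by
    rw [show ((-m : ℤ) : ℂ) * τ + (-n : ℤ) = -1 * (m * τ + n) by push_cast; ring, mul_zpow,
      zpow_neg (-1 : ℂ), zpow_natCast, ← inv_pow, inv_neg_one]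
  rw [latticeRowSum, ← tsum_comp_neg, tsum_congr hterm, tsum_mul_left, latticeRowSum,
    mul_left_comm]

lemma latticeRowSum_eq_tsum_exp (hk : 2 ≤ k) (m : ℕ+) {τ : ℂ} (hτ : 0 < τ.im) :
    latticeRowSum k m τ = (-1) ^ k / (k - 1).factorial *
      ∑' n : ℕ+, (n : ℂ) ^ (k - 1) * cexp (2 * Real.pi * I * τ) ^ (m * n : ℕ) := by
  have hmτ : 0 < ((m : ℂ) * τ).im := by
    simpa using hτ
  have hlipschitz :=
    EisensteinSeries.qExpansion_identity_pnat (k := k - 1) (by lia) ⟨m * τ, hmτ⟩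
  rw [Nat.sub_add_cancel (by lia)] at hlipschitz
  have hrow : ∑' n : ℤ, (((m : ℤ) : ℂ) * τ + n) ^ (-(k : ℤ)) =
      (-2 * Real.pi * I) ^ k / (k - 1).factorial *
        ∑' n : ℕ+, (n : ℂ) ^ (k - 1) * cexp (2 * Real.pi * I * (m * τ)) ^ (n : ℕ) := by
    simpa [zpow_neg] using hlipschitz
  have hexp (n : ℕ+) : cexp (2 * Real.pi * I * (m * τ)) ^ (n : ℕ) =
      cexp (2 * Real.pi * I * τ) ^ (m * n : ℕ) := by
    rw [pow_mul, ← exp_nat_mul _ (m : ℕ), mul_left_comm]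
  have hsign : (-2 * Real.pi * I : ℂ) ^ k = (2 * Real.pi * I) ^ k * (-1) ^ k := by
    rw [← mul_pow]
    ring
  simp_rw [latticeRowSum, hrow, hexp, hsign, zpow_neg, zpow_natCast]
  rw [← mul_assoc, mul_div_assoc, inv_mul_cancel_left₀ (pow_ne_zero k two_pi_I_ne_zero)]

end LatticeRowSum

lemma hasSum_deriv_tsum_mul_exp_pow {ι : Type*} {a : ι → ℂ} {e : ι → ℕ} {s : ℝ}
    (ha : Summable fun i ↦ ‖a i‖ * s ^ e i) {τ : ℂ} (hτ : ‖cexp (2 * Real.pi * I * τ)‖ < s) :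
    HasSum (fun i ↦ e i * (a i * cexp (2 * Real.pi * I * τ) ^ e i))
      ((2 * Real.pi * I)⁻¹ *
        deriv (fun z ↦ ∑' i, a i * cexp (2 * Real.pi * I * z) ^ e i) τ) := by
  have hopen : IsOpen {z : ℂ | ‖cexp (2 * Real.pi * I * z)‖ < s} :=
    isOpen_lt (by fun_prop) continuous_const
  have hderiv (i : ι) : deriv (fun z ↦ a i * cexp (2 * Real.pi * I * z) ^ e i) τ =
      2 * Real.pi * I * (e i * (a i * cexp (2 * Real.pi * I * τ) ^ e i)) := by
    have hlinear : HasDerivAt (fun z : ℂ ↦ e i * (2 * Real.pi * I * z))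
        (e i * (2 * Real.pi * I)) τ := by
      simpa using ((hasDerivAt_id τ).const_mul (2 * Real.pi * I)).const_mul (e i : ℂ)
    simp_rw [← exp_nat_mul]
    rw [(hlinear.cexp.const_mul (a i)).deriv]
    ring
  have hsum := hasSum_deriv_of_summable_norm ha
    (F := fun i z ↦ a i * cexp (2 * Real.pi * I * z) ^ e i) (fun i ↦ by fun_prop) hopen
    (fun i z hz ↦ by rw [norm_mul, norm_pow]; gcongr; exact hz.le) hτ
  simp_rw [hderiv] at hsum
  simpa only [inv_mul_cancel_left₀ two_pi_I_ne_zero] using hsum.mul_left (2 * Real.pi * I)⁻¹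

section DivisorSeries

variable (p : ℕ) {τ : ℂ}

lemma hasSum_deriv_divisorSeries (hτ : 0 < τ.im) :
    HasSum (fun c : ℕ+ × ℕ+ ↦
        (c.1 : ℂ) * ((c.2 : ℂ) ^ (p + 1) * cexp (2 * Real.pi * I * τ) ^ (c.1 * c.2 : ℕ)))
      ((2 * Real.pi * I)⁻¹ * deriv (divisorSeries p) τ) := by
  obtain ⟨s, hqs, hs⟩ := exists_between (UpperHalfPlane.norm_exp_two_pi_I_lt_one ⟨τ, hτ⟩)
  have hs_norm : ‖s‖ < 1 := by
    rwa [Real.norm_of_nonneg ((norm_nonneg _).trans hqs.le)]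
  have hsummable : Summable fun c : ℕ+ × ℕ+ ↦ ‖(c.2 : ℂ) ^ p‖ * s ^ (c.1 * c.2 : ℕ) := by
    simpa using summable_prod_mul_pow p hs_norm
  refine (hasSum_deriv_tsum_mul_exp_pow hsummable hqs).congr_fun fun c ↦ ?_
  push_cast
  ring

lemma hasSum_mul_tsum_divisorSeries (hτ : 0 < τ.im) :
    HasSum (fun m : ℕ+ ↦
        (m : ℂ) * ∑' n : ℕ+, (n : ℂ) ^ (p + 1) * cexp (2 * Real.pi * I * τ) ^ (m * n : ℕ))
      ((2 * Real.pi * I)⁻¹ * deriv (divisorSeries p) τ) := by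
  have hsum := hasSum_deriv_divisorSeries p hτ
  simpa only [tsum_mul_left] using
    hsum.prod_fiberwise fun m ↦ (hsum.summable.prod_factor m).hasSum

lemma tsum_sum_divisors_eq_divisorSeries (hτ : 0 < τ.im) :
    ∑' n : ℕ, (∑ d ∈ (n + 1).divisors, (d : ℂ) ^ p) * cexp (2 * Real.pi * I * τ) ^ (n + 1) =
      divisorSeries p τ := by
  have hq := UpperHalfPlane.norm_exp_two_pi_I_lt_one ⟨τ, hτ⟩
  rw [divisorSeries, (summable_prod_mul_pow p hq).tsum_prod, tsum_prod_pow_eq_tsum_sigma p hq,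
    tsum_pnat_eq_tsum_succ (f := fun n ↦ (ArithmeticFunction.sigma p n : ℂ) *
      cexp (2 * Real.pi * I * τ) ^ n)]
  simp only [ArithmeticFunction.sigma_apply, Nat.cast_sum, Nat.cast_pow]

-- The factor `1 - (-1) ^ p` encodes the vanishing of `E_{p+1}` for even `p`.
lemma Eis'_succ (hτ : 0 < τ.im) :
    Eis' (p + 1) τ = (1 - (-1) ^ p) / p.factorial *
      ((2 * Real.pi * I)⁻¹ * deriv (divisorSeries p) τ) := by
  rcases p.even_or_odd with hp | hp
  · have hEis : Eis (p + 1) = fun _ ↦ 0 :=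
      funext fun _ ↦ if_neg fun h ↦ Nat.not_even_iff_odd.mpr hp.add_one h.1
    simp [Eis', hEis, hp.neg_one_pow]
  · have hEis : Eis (p + 1) =ᶠ[nhds τ] fun z ↦ 2 / p.factorial *
        (-(bernoulli (p + 1) : ℂ) / (2 * (p + 1 : ℕ)) + divisorSeries p z) := by
      filter_upwards [(isOpen_lt continuous_const continuous_im).mem_nhds hτ] with z hz
      rw [Eis, if_pos ⟨hp.add_one, by have := hp.pos; lia⟩, Nat.add_sub_cancel,
        tsum_sum_divisors_eq_divisorSeries p hz]
    rw [Eis', hEis.deriv_eq, deriv_const_mul_field, deriv_const_add, hp.neg_one_pow]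
    ring

end DivisorSeries

lemma hasSum_int_of_pnat_of_neg {R : Type*} [Ring R] [TopologicalSpace R] [IsTopologicalRing R]
    {f : ℤ → R} {c S : R} (hzero : f 0 = 0) (hneg : ∀ m, f (-m) = c * f m)
    (hpos : HasSum (fun m : ℕ+ ↦ f m) S) : HasSum f ((1 + c) * S) := by
  have hnat : HasSum (fun m : ℕ ↦ f m) S := by
    simpa [hzero] using (hasSum_pnat_iff (f := fun m : ℕ ↦ f m)).mp hpos
  have hnat_neg : HasSum (fun m : ℕ ↦ f (-m)) (c * S) := by
    simpa only [hneg] using hnat.mul_left c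
  simpa only [hzero, sub_zero, one_add_mul] using hnat.of_nat_of_neg hnat_neg

lemma hasSum_mul_latticeRowSum {k : ℕ} (hk : 2 ≤ k) {τ : ℂ} (hτ : 0 < τ.im) :
    HasSum (fun m : ℤ ↦ (m : ℂ) * latticeRowSum k m τ)
      (-(Eis' (k - 1) τ / ((k : ℂ) - 1))) := by
  obtain ⟨p, rfl⟩ := Nat.exists_eq_add_of_le' hk
  have hpred : p + 2 - 1 = p + 1 := rfl
  have hpos : HasSum (fun m : ℕ+ ↦ ((m : ℤ) : ℂ) * latticeRowSum (p + 2) m τ)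
      ((-1) ^ p / (p + 1).factorial * ((2 * Real.pi * I)⁻¹ * deriv (divisorSeries p) τ)) := by
    refine ((hasSum_mul_tsum_divisorSeries p hτ).mul_left _).congr_fun fun m ↦ ?_
    rw [latticeRowSum_eq_tsum_exp hk m hτ, hpred, pow_add]
    push_cast
    ring
  have hneg (m : ℤ) : ((-m : ℤ) : ℂ) * latticeRowSum (p + 2) (-m) τ =
      -(-1) ^ p * (m * latticeRowSum (p + 2) m τ) := by
    rw [latticeRowSum_neg]
    push_cast
    ring
  have hvalue : -(Eis' (p + 1) τ / (((p + 2 : ℕ) : ℂ) - 1)) = (1 + -(-1) ^ p) *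
      ((-1) ^ p / (p + 1).factorial * ((2 * Real.pi * I)⁻¹ * deriv (divisorSeries p) τ)) := by
    have hsq : ((-1 : ℂ) ^ p) ^ 2 = 1 := by rw [pow_right_comm, neg_one_sq, one_pow]
    have hfact : (p.factorial : ℂ) ≠ 0 := by exact_mod_cast p.factorial_ne_zero
    have hp : (p : ℂ) + 1 ≠ 0 := p.cast_add_one_ne_zero
    rw [Eis'_succ p hτ, Nat.factorial_succ, show ((p + 2 : ℕ) : ℂ) - 1 = p + 1 by push_cast; ring]
    push_cast
    field_simp
    linear_combination (deriv (divisorSeries p) τ) * hsq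
  rw [hpred, hvalue]
  exact hasSum_int_of_pnat_of_neg (by simp) hneg hpos

/-- For every integer `k ≥ 3` and `τ` in the upper half-plane,
`lim_{M→∞} Σ_{m=-M}^{M} m F_k(m,τ) = -E_{k-1}'(τ)/(k-1)`, where
`F_k(m,τ) = (2π√-1)^{-k} lim_{N→∞} Σ_{n=-N,…,N, (m,n)≠(0,0)} (mτ+n)^{-k}`. -/
theorem weighted_lattice_sum (k : ℕ) (hk : 3 ≤ k) (τ : ℂ) (hτ : 0 < τ.im) :
    ∃ F : ℤ → ℂ,
      (∀ m : ℤ, Filter.Tendsto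
        (fun N : ℕ => (2 * Real.pi * Complex.I) ^ (-(k : ℤ)) *
          ∑ n ∈ (Finset.Icc (-(N : ℤ)) N).filter (fun n => (m, n) ≠ (0, 0)),
            ((m : ℂ) * τ + n) ^ (-(k : ℤ)))
        Filter.atTop (nhds (F m))) ∧
      Filter.Tendsto (fun M : ℕ => ∑ m ∈ Finset.Icc (-(M : ℤ)) M, (m : ℂ) * F m)
        Filter.atTop (nhds (-(Eis' (k - 1) τ / ((k : ℂ) - 1)))) := by
  have hk2 : 2 ≤ k := by lia
  exact ⟨fun m ↦ latticeRowSum k m τ, fun m ↦ tendsto_latticeRowSum hk2 m τ,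
    (hasSum_mul_latticeRowSum hk2 hτ).comp tendsto_Icc_neg⟩
end

section
/- For all integers r, s ≥ 1 with r + s ≥ 4 even and every τ in the complex upper half-plane, 0 = Σ_{i+j=r+s, i,j≥1} (C(i−1,r−1) + C(i−1,s−1)) (P_{i,j}(τ) − E_{i+j}(τ)) − P_{r,s}(τ) + (−1)^s E_{r+s}(τ), where C(a,b) denotes the binomial coefficient. -/
/-!
Let `θ(u) = (u^{1/2} - u^{-1/2}) ∏ (1 - q^m u)(1 - q^m / u)`, and put `J(u) = -u ∂_u log θ(u)` and
`P(u) = -q ∂_q log (q^{1/12} θ(u))`. For `u v w = 1` these satisfy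

  `J(u) J(v) + J(v) J(w) + J(w) J(u) = P(u) + P(v) + P(w)`.

Indeed, the coefficient of `q^N` on the left is built from the sums `∑ x^d y^e` over the
representations `N = m d + n e`. Splitting such a sum by the sign of `m - n` (stuffle) or by that of
`d - e` (shuffle) makes the off-diagonal parts cancel, and the diagonal ones are divisor sums.

At `u = e^{a x}`, `v = e^{b x}`, `w = e^{c x}` with `a + b + c = 0` the series become generating
functions of Eisenstein series: `J(e^{a x}) = ∑ E_{k+1} (a x)^k - 1 / (a x)` and
`P(e^{a x}) = E_2 + ∑_{k ≥ 1} (E_k' / k) (a x)^k`. The coefficient of `x^n` is then, as a polynomial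
in `a` and `b`, the generating function of Popa's relations with `r + s = n + 2`.
-/

open Complex Finset Filter

section DoubleDivisorSums

/-- The representations `N = m * d + n * e` with positive `m, d, n, e`, stored as
`((m, d), (n, e))`. -/
def divisorQuadruples (N : ℕ) : Finset ((ℕ × ℕ) × ℕ × ℕ) :=
  (antidiagonal N).biUnion fun p => p.1.divisorsAntidiagonal ×ˢ p.2.divisorsAntidiagonal

theorem mem_divisorQuadruples {N m d n e : ℕ} :
    ((m, d), (n, e)) ∈ divisorQuadruples N ↔
      m * d + n * e = N ∧ 0 < m ∧ 0 < d ∧ 0 < n ∧ 0 < e := by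
  simp [divisorQuadruples, Nat.pos_iff_ne_zero, and_assoc]

variable {R : Type*} [CommSemiring R]

/-- The generating polynomial `∑ x ^ d * y ^ e` of the representations `N = m * d + n * e`. -/
def doubleDivisorSum (N : ℕ) (x y : R) : R :=
  ∑ q ∈ divisorQuadruples N, x ^ q.1.2 * y ^ q.2.2

/-- The part `m < n` of `doubleDivisorSum`. -/
def doubleDivisorSumLT (N : ℕ) (x y : R) : R :=
  ∑ q ∈ divisorQuadruples N with q.1.1 < q.2.1, x ^ q.1.2 * y ^ q.2.2

/-- The part `m = n` of `doubleDivisorSum`, where `d + e` is a divisor of `N`. -/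
def stuffleDiagonal (N : ℕ) (x y : R) : R :=
  ∑ l ∈ N.divisors, ∑ d ∈ Ico 1 l, x ^ d * y ^ (l - d)

/-- The part `d = e` of `doubleDivisorSum`, as a function of `z = x * y`: a divisor `d = e` of `N`
occurs once for each way of writing `N / d` as `m + n`. -/
def shuffleDiagonal (N : ℕ) (z : R) : R :=
  ∑ p ∈ N.divisorsAntidiagonal, (p.1 - 1 : ℕ) * z ^ p.2

/-- The generating polynomial `∑ x ^ d` of the divisors of `N`. -/
def divisorPowSum (N : ℕ) (x : R) : R := ∑ d ∈ N.divisors, x ^ d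

theorem sum_eq_sum_lt_add_sum_gt_add_sum_eq {ι α M : Type*} [LinearOrder α] [AddCommMonoid M]
    (s : Finset ι) (f g : ι → α) (F : ι → M) :
    ∑ i ∈ s, F i = ∑ i ∈ s with f i < g i, F i + ∑ i ∈ s with g i < f i, F i +
      ∑ i ∈ s with f i = g i, F i := by
  simp only [sum_filter, ← sum_add_distrib]
  refine sum_congr rfl fun i _ => ?_
  rcases lt_trichotomy (f i) (g i) with h | h | h
  · simp [h, h.ne, h.not_gt]
  · simp [h]
  · simp [h, h.ne', h.not_gt]

theorem divisorPowSum_mul_divisorPowSum (N : ℕ) (x y : R) :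
    ∑ p ∈ antidiagonal N, divisorPowSum p.1 x * divisorPowSum p.2 y = doubleDivisorSum N x y := by
  rw [doubleDivisorSum, divisorQuadruples, sum_biUnion]
  · refine sum_congr rfl fun p _ => ?_
    rw [sum_product, divisorPowSum, divisorPowSum, sum_mul_sum,
      ← Nat.sum_divisorsAntidiagonal' fun _ d => ∑ e ∈ p.2.divisors, x ^ d * y ^ e]
    refine sum_congr rfl fun q _ => ?_
    rw [← Nat.sum_divisorsAntidiagonal' fun _ e => x ^ q.2 * y ^ e]
  · rintro ⟨a, b⟩ - ⟨a', b'⟩ - hne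
    rw [Function.onFun, disjoint_left]
    rintro ⟨⟨m, d⟩, n, e⟩
    grind [Nat.mem_divisorsAntidiagonal]

theorem sum_gt_eq_doubleDivisorSumLT_swap (N : ℕ) (x y : R) :
    ∑ q ∈ divisorQuadruples N with q.2.1 < q.1.1, x ^ q.1.2 * y ^ q.2.2 =
      doubleDivisorSumLT N y x := by
  refine sum_nbij' Prod.swap Prod.swap ?_ ?_ (fun _ _ => rfl) (fun _ _ => rfl)
      fun _ _ => mul_comm _ _ <;>
    · rintro ⟨⟨m, d⟩, n, e⟩
      grind [mem_divisorQuadruples]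

theorem sum_eq_eq_stuffleDiagonal (N : ℕ) (x y : R) :
    ∑ q ∈ divisorQuadruples N with q.1.1 = q.2.1, x ^ q.1.2 * y ^ q.2.2 =
      stuffleDiagonal N x y := by
  rw [stuffleDiagonal,
    ← Nat.sum_divisorsAntidiagonal' fun _ l => ∑ d ∈ Ico 1 l, x ^ d * y ^ (l - d), sum_sigma']
  refine sum_nbij' (fun q => ⟨(q.1.1, q.1.2 + q.2.2), q.1.2⟩)
    (fun p => ((p.1.1, p.2), (p.1.1, p.1.2 - p.2))) ?_ ?_ ?_ ?_ ?_
  · rintro ⟨⟨m, d⟩, n, e⟩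
    simp only [mem_filter, mem_divisorQuadruples, mem_sigma, Nat.mem_divisorsAntidiagonal, mem_Ico]
    rintro ⟨⟨rfl, hm, hd, hn, he⟩, rfl⟩
    exact ⟨⟨mul_add _ _ _, by positivity⟩, by omega⟩
  · rintro ⟨⟨m, l⟩, d⟩
    simp only [mem_filter, mem_divisorQuadruples, mem_sigma, Nat.mem_divisorsAntidiagonal, mem_Ico]
    rintro ⟨⟨rfl, hN⟩, hd, hdl⟩
    refine ⟨⟨?_, ?_⟩, trivial⟩
    · rw [← mul_add, Nat.add_sub_cancel' hdl.le]
    · have := Nat.pos_of_ne_zero (left_ne_zero_of_mul hN)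
      omega
  · rintro ⟨⟨m, d⟩, n, e⟩
    grind [mem_divisorQuadruples]
  · rintro ⟨⟨m, l⟩, d⟩
    grind [Nat.mem_divisorsAntidiagonal]
  · rintro ⟨⟨m, d⟩, n, e⟩
    simp

theorem doubleDivisorSum_comm (N : ℕ) (x y : R) :
    doubleDivisorSum N x y = doubleDivisorSum N y x := by
  simp only [← divisorPowSum_mul_divisorPowSum]
  rw [← Nat.sum_antidiagonal_swap]
  exact sum_congr rfl fun _ _ => mul_comm _ _

theorem doubleDivisorSum_eq_stuffle (N : ℕ) (x y : R) :
    doubleDivisorSum N x y =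
      doubleDivisorSumLT N x y + doubleDivisorSumLT N y x + stuffleDiagonal N x y := by
  rw [doubleDivisorSum, sum_eq_sum_lt_add_sum_gt_add_sum_eq _ (fun q => q.1.1) fun q => q.2.1,
    sum_gt_eq_doubleDivisorSumLT_swap, sum_eq_eq_stuffleDiagonal]
  rfl

/- `m * (d + e) + n * e = m * d + (m + n) * e`. -/
theorem sum_gt_eq_doubleDivisorSumLT_mul (N : ℕ) (x y : R) :
    ∑ q ∈ divisorQuadruples N with q.2.2 < q.1.2, x ^ q.1.2 * y ^ q.2.2 =
      doubleDivisorSumLT N x (x * y) := by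
  refine sum_nbij' (fun q => ((q.1.1, q.1.2 - q.2.2), (q.1.1 + q.2.1, q.2.2)))
    (fun q => ((q.1.1, q.1.2 + q.2.2), (q.2.1 - q.1.1, q.2.2))) ?_ ?_ ?_ ?_ ?_
  · rintro ⟨⟨m, d⟩, n, e⟩
    simp only [mem_filter, mem_divisorQuadruples]
    rintro ⟨⟨rfl, h⟩, hlt⟩
    obtain ⟨f, rfl⟩ := Nat.exists_eq_add_of_lt hlt
    rw [show e + f + 1 - e = f + 1 by omega]
    exact ⟨⟨by ring, by omega⟩, by omega⟩
  · rintro ⟨⟨m, d⟩, n, e⟩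
    simp only [mem_filter, mem_divisorQuadruples]
    rintro ⟨⟨rfl, h⟩, hlt⟩
    obtain ⟨f, rfl⟩ := Nat.exists_eq_add_of_lt hlt
    rw [show m + f + 1 - m = f + 1 by omega]
    exact ⟨⟨by ring, by omega⟩, by omega⟩
  · rintro ⟨⟨m, d⟩, n, e⟩
    grind
  · rintro ⟨⟨m, d⟩, n, e⟩
    grind
  · rintro ⟨⟨m, d⟩, n, e⟩ h
    have hed : e < d := (mem_filter.mp h).2
    rw [mul_pow, ← mul_assoc, ← pow_add, Nat.sub_add_cancel hed.le]

theorem sum_eq_eq_shuffleDiagonal (N : ℕ) (x y : R) :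
    ∑ q ∈ divisorQuadruples N with q.1.2 = q.2.2, x ^ q.1.2 * y ^ q.2.2 =
      shuffleDiagonal N (x * y) := by
  have key : shuffleDiagonal N (x * y) =
      ∑ p ∈ N.divisorsAntidiagonal, ∑ _m ∈ Ico 1 p.1, (x * y) ^ p.2 := by
    simp [shuffleDiagonal]
  rw [key, sum_sigma']
  refine sum_nbij' (fun q => ⟨(q.1.1 + q.2.1, q.1.2), q.1.1⟩)
    (fun p => ((p.2, p.1.2), (p.1.1 - p.2, p.1.2))) ?_ ?_ ?_ ?_ ?_
  · rintro ⟨⟨m, d⟩, n, e⟩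
    simp only [mem_filter, mem_divisorQuadruples, mem_sigma, Nat.mem_divisorsAntidiagonal, mem_Ico]
    rintro ⟨⟨rfl, hm, hd, hn, he⟩, rfl⟩
    exact ⟨⟨add_mul _ _ _, by positivity⟩, by omega⟩
  · rintro ⟨⟨k, d⟩, m⟩
    simp only [mem_filter, mem_divisorQuadruples, mem_sigma, Nat.mem_divisorsAntidiagonal, mem_Ico]
    rintro ⟨⟨rfl, hN⟩, hm, hmk⟩
    refine ⟨⟨?_, ?_⟩, trivial⟩
    · rw [← add_mul, Nat.add_sub_cancel' hmk.le]
    · have := Nat.pos_of_ne_zero (right_ne_zero_of_mul hN)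
      omega
  · rintro ⟨⟨m, d⟩, n, e⟩
    grind [mem_divisorQuadruples]
  · rintro ⟨⟨m, l⟩, d⟩
    grind [Nat.mem_divisorsAntidiagonal]
  · rintro ⟨⟨m, d⟩, n, e⟩ h
    rw [mul_pow, (mem_filter.mp h).2]

theorem doubleDivisorSum_eq_shuffle (N : ℕ) (x y : R) :
    doubleDivisorSum N x y =
      doubleDivisorSumLT N x (x * y) + doubleDivisorSumLT N y (x * y) +
        shuffleDiagonal N (x * y) := by
  have swap : ∑ q ∈ divisorQuadruples N with q.1.2 < q.2.2, x ^ q.1.2 * y ^ q.2.2 =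
      ∑ q ∈ divisorQuadruples N with q.2.2 < q.1.2, y ^ q.1.2 * x ^ q.2.2 := by
    refine sum_nbij' Prod.swap Prod.swap ?_ ?_ (fun _ _ => rfl) (fun _ _ => rfl)
        fun _ _ => mul_comm _ _ <;>
      · rintro ⟨⟨m, d⟩, n, e⟩
        grind [mem_divisorQuadruples]
  rw [doubleDivisorSum, sum_eq_sum_lt_add_sum_gt_add_sum_eq _ (fun q => q.2.2) fun q => q.1.2,
    swap, sum_gt_eq_doubleDivisorSumLT_mul, sum_gt_eq_doubleDivisorSumLT_mul, mul_comm y x,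
    sum_congr (filter_congr fun q _ => eq_comm) fun _ _ => rfl, sum_eq_eq_shuffleDiagonal]

end DoubleDivisorSums

noncomputable section Theta

open PowerSeries

variable {K : Type*} [Field K]

/-- The rational function of `u` whose value at `u = exp (I * t)` is `I / 2 * cot (t / 2)`. -/
def halfCot (u : K) : K := (1 + u) / (2 * (1 - u))

/-- The power series `∑ q ^ (m * d) * (u ^ d - u ^ (-d))` in `q`, over all `m, d ≥ 1`. -/
def oddDivisorSeries (u : K) : K⟦X⟧ :=
  mk fun N => divisorPowSum N u - divisorPowSum N u⁻¹

/-- The logarithmic derivative `-u * ∂/∂u` of the theta function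
`(u ^ (1/2) - u ^ (-1/2)) * ∏ (1 - q ^ m * u) * (1 - q ^ m / u)`, as a power series in `q`. -/
def thetaLogDerivU (u : K) : K⟦X⟧ := C (halfCot u) + oddDivisorSeries u

/-- The logarithmic derivative `-q * ∂/∂q` of `q ^ (1/12)` times the same theta function, as a power
series in `q`. -/
def thetaLogDerivQ (u : K) : K⟦X⟧ :=
  C (-1 / 12) + mk fun N => ∑ p ∈ N.divisorsAntidiagonal, p.1 * (u ^ p.2 + u⁻¹ ^ p.2)

theorem shuffleDiagonal_add_divisorPowSum (N : ℕ) (z : K) :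
    shuffleDiagonal N z + divisorPowSum N z = ∑ p ∈ N.divisorsAntidiagonal, p.1 * z ^ p.2 := by
  rw [shuffleDiagonal, divisorPowSum, ← Nat.sum_divisorsAntidiagonal' fun _ d => z ^ d,
    ← sum_add_distrib]
  refine sum_congr rfl fun p hp => ?_
  rw [Nat.cast_pred (Nat.pos_of_ne_zero (Nat.ne_zero_of_mem_divisorsAntidiagonal hp).1)]
  ring

theorem coeff_oddDivisorSeries_mul (N : ℕ) (u v : K) :
    coeff N (oddDivisorSeries u * oddDivisorSeries v) =
      doubleDivisorSum N u v + doubleDivisorSum N u⁻¹ v⁻¹ - doubleDivisorSum N u v⁻¹ -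
        doubleDivisorSum N v u⁻¹ := by
  rw [doubleDivisorSum_comm N v]
  simp only [oddDivisorSeries, coeff_mul, coeff_mk, ← divisorPowSum_mul_divisorPowSum,
    ← sum_add_distrib, ← sum_sub_distrib]
  exact sum_congr rfl fun p _ => by ring

theorem coeff_thetaLogDerivU_mul (N : ℕ) (u v : K) :
    coeff N (thetaLogDerivU u * thetaLogDerivU v) =
      coeff N (C (halfCot u * halfCot v)) + halfCot u * coeff N (oddDivisorSeries v) +
        halfCot v * coeff N (oddDivisorSeries u) +
        coeff N (oddDivisorSeries u * oddDivisorSeries v) := by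
  simp only [thetaLogDerivU, add_mul, mul_add, map_add, map_mul, coeff_C_mul, coeff_mul_C]
  ring

theorem coeff_oddDivisorSeries_mul_of_mul_eq_one {u v w : K} (h : u * v * w = 1) (N : ℕ) :
    coeff N (oddDivisorSeries u * oddDivisorSeries v) =
      doubleDivisorSumLT N u w⁻¹ + doubleDivisorSumLT N v w⁻¹ + shuffleDiagonal N w⁻¹ +
        (doubleDivisorSumLT N u⁻¹ w + doubleDivisorSumLT N v⁻¹ w + shuffleDiagonal N w) -
        (doubleDivisorSumLT N u v⁻¹ + doubleDivisorSumLT N v⁻¹ u + stuffleDiagonal N u v⁻¹) -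
        (doubleDivisorSumLT N v u⁻¹ + doubleDivisorSumLT N u⁻¹ v + stuffleDiagonal N v u⁻¹) := by
  have huv : u * v = w⁻¹ := eq_inv_of_mul_eq_one_left h
  have huv' : u⁻¹ * v⁻¹ = w := by rw [← mul_inv, huv, inv_inv]
  rw [coeff_oddDivisorSeries_mul, doubleDivisorSum_eq_shuffle, doubleDivisorSum_eq_shuffle N u⁻¹,
    huv, huv', doubleDivisorSum_eq_stuffle, doubleDivisorSum_eq_stuffle]

theorem coeff_thetaLogDerivQ (N : ℕ) (u : K) :
    coeff N (thetaLogDerivQ u) = coeff N (C (-1 / 12 : K)) +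
      (shuffleDiagonal N u + divisorPowSum N u + shuffleDiagonal N u⁻¹ + divisorPowSum N u⁻¹) := by
  simp only [thetaLogDerivQ, map_add, coeff_mk, mul_add, sum_add_distrib,
    ← shuffleDiagonal_add_divisorPowSum, add_assoc]

variable [CharZero K]

theorem add_div_sub_mul_pow_sub_pow {x y : K} (hxy : x ≠ y) {l : ℕ} (hl : l ≠ 0) :
    (x + y) / (2 * (x - y)) * (x ^ l - y ^ l) =
      (x ^ l + y ^ l) / 2 + ∑ d ∈ Ico 1 l, x ^ d * y ^ (l - d) := by
  have geom : (x - y) * ∑ d ∈ Ico 1 l, x ^ d * y ^ (l - d) = y * x ^ l - x * y ^ l := by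
    have shift : ∑ d ∈ Ico 1 l, x ^ d * y ^ (l - d) =
        y * ∑ d ∈ Ico 1 l, x ^ d * y ^ (l - 1 - d) := by
      rw [mul_sum]
      refine sum_congr rfl fun d hd => ?_
      rw [show l - d = l - 1 - d + 1 by grind]
      ring
    obtain ⟨k, rfl⟩ := Nat.exists_eq_add_one_of_ne_zero hl
    rw [shift, mul_left_comm, mul_geom_sum₂_Ico x y (by omega), Nat.add_sub_cancel]
    ring
  have := sub_ne_zero.mpr hxy
  field_simp
  linear_combination -2 * geom

theorem add_div_sub_mul_divisorPowSum_sub {x y : K} (hxy : x ≠ y) (N : ℕ) :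
    (x + y) / (2 * (x - y)) * (divisorPowSum N x - divisorPowSum N y) =
      (divisorPowSum N x + divisorPowSum N y) / 2 + stuffleDiagonal N x y := by
  simp only [divisorPowSum, stuffleDiagonal, ← sum_sub_distrib, ← sum_add_distrib, mul_sum,
    sum_div]
  exact sum_congr rfl fun l hl => add_div_sub_mul_pow_sub_pow hxy (Nat.pos_of_mem_divisors hl).ne'

theorem halfCot_mul_divisorPowSum_sub {u v w : K} (h : u * v * w = 1) (hu : u ≠ 1)
    (N : ℕ) :
    halfCot u * (divisorPowSum N v - divisorPowSum N w⁻¹) =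
      (divisorPowSum N v + divisorPowSum N w⁻¹) / 2 + stuffleDiagonal N v w⁻¹ := by
  have hw : w ≠ 0 := right_ne_zero_of_mul_eq_one h
  have hvw : v ≠ w⁻¹ := by
    rintro rfl
    exact hu (by simpa [hw] using h)
  rw [← add_div_sub_mul_divisorPowSum_sub hvw, halfCot]
  congr 1
  have hu' := sub_ne_zero.mpr hu.symm
  have hvw' := sub_ne_zero.mpr hvw
  rw [div_eq_div_iff (mul_ne_zero two_ne_zero hu') (mul_ne_zero two_ne_zero hvw')]
  field_simp
  linear_combination 2 * h

theorem halfCot_mul_cyclic {u v w : K} (h : u * v * w = 1) (hu : u ≠ 1) (hv : v ≠ 1)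
    (hw : w ≠ 1) :
    halfCot u * halfCot v + halfCot v * halfCot w + halfCot w * halfCot u = -1 / 4 := by
  have := sub_ne_zero.mpr hu.symm
  have := sub_ne_zero.mpr hv.symm
  have := sub_ne_zero.mpr hw.symm
  simp only [halfCot]
  field_simp
  linear_combination -16 * h

theorem halfCot_mul_coeff_oddDivisorSeries {u v w : K} (h : u * v * w = 1) (hu : u ≠ 1) (N : ℕ) :
    halfCot u * (coeff N (oddDivisorSeries v) + coeff N (oddDivisorSeries w)) =
      (divisorPowSum N v + divisorPowSum N v⁻¹ + divisorPowSum N w + divisorPowSum N w⁻¹) / 2 +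
        stuffleDiagonal N v w⁻¹ + stuffleDiagonal N w v⁻¹ := by
  have h' : u * w * v = 1 := by rw [← h, mul_right_comm]
  simp only [oddDivisorSeries, coeff_mk]
  linear_combination halfCot_mul_divisorPowSum_sub h hu N + halfCot_mul_divisorPowSum_sub h' hu N

theorem thetaLogDerivU_mul_cyclic {u v w : K} (h : u * v * w = 1) (hu : u ≠ 1) (hv : v ≠ 1)
    (hw : w ≠ 1) :
    thetaLogDerivU u * thetaLogDerivU v + thetaLogDerivU v * thetaLogDerivU w +
        thetaLogDerivU w * thetaLogDerivU u =
      thetaLogDerivQ u + thetaLogDerivQ v + thetaLogDerivQ w := by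
  have hvwu : v * w * u = 1 := by rw [← h]; ring
  have hwuv : w * u * v = 1 := by rw [← h]; ring
  ext N
  have const := congrArg (fun z : K => coeff N (C z)) (halfCot_mul_cyclic h hu hv hw)
  have const' : coeff N (C (-1 / 4 : K)) = 3 * coeff N (C (-1 / 12 : K)) := by
    rw [← coeff_C_mul, ← map_mul]
    norm_num
  simp only [map_add] at const
  -- The parts `doubleDivisorSumLT` cancel over the three products, and only the diagonals remain.
  simp only [map_add, coeff_thetaLogDerivU_mul, coeff_oddDivisorSeries_mul_of_mul_eq_one h,
    coeff_oddDivisorSeries_mul_of_mul_eq_one hvwu, coeff_oddDivisorSeries_mul_of_mul_eq_one hwuv,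
    coeff_thetaLogDerivQ]
  linear_combination const + const' + halfCot_mul_coeff_oddDivisorSeries h hu N +
    halfCot_mul_coeff_oddDivisorSeries hvwu hv N + halfCot_mul_coeff_oddDivisorSeries hwuv hw N

end Theta

noncomputable section FormalEisensteinSeries

open PowerSeries

/-- The `q`-expansion of the Eisenstein series `Eis k`. -/
def eisSeries (k : ℕ) : ℂ⟦X⟧ :=
  if Even k ∧ 2 ≤ k then
    C (2 / ((k - 1).factorial : ℂ)) *
      (C (-(bernoulli k : ℂ) / (2 * k)) + mk fun N => ∑ d ∈ N.divisors, (d : ℂ) ^ (k - 1))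
  else 0

/-- The `q`-expansion of the derivative `Eis' k`, that is, `q * d/dq` of `eisSeries k`. -/
def eisDerivSeries (k : ℕ) : ℂ⟦X⟧ := X * d⁄dX ℂ (eisSeries k)

/-- The generating series `∑ E_{n+1} * (a * x) ^ n`, as a power series in `q` whose coefficients are
power series in `x`. -/
def eisGenSeries (a : ℂ) : ℂ⟦X⟧⟦X⟧ :=
  mk fun N => mk fun n => a ^ n * coeff N (eisSeries (n + 1))

/-- The generating series `E_2 + ∑ E_n' / n * (a * x) ^ n`, the sum being over `n ≥ 1`, as a power
series in `q` whose coefficients are power series in `x`. -/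
def eisDerivGenSeries (a : ℂ) : ℂ⟦X⟧⟦X⟧ :=
  mk fun N => mk fun n =>
    if n = 0 then coeff N (eisSeries 2) else a ^ n * ((n : ℂ)⁻¹ * coeff N (eisDerivSeries n))

/-- The exponential series `exp (a * x)`. -/
def expSeries (a : ℂ) : ℂ⟦X⟧ := rescale a (exp ℂ)

theorem eisSeries_of_odd {k : ℕ} (hk : Odd k) : eisSeries k = 0 :=
  if_neg fun h => Nat.not_even_iff_odd.mpr hk h.1

theorem constantCoeff_eisSeries {k : ℕ} (hk : Even k) (hk' : 2 ≤ k) :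
    constantCoeff (eisSeries k) = -(bernoulli k : ℂ) / k.factorial := by
  obtain ⟨m, rfl⟩ := Nat.exists_eq_add_one_of_ne_zero (by omega : k ≠ 0)
  rw [eisSeries, if_pos ⟨hk, hk'⟩, map_mul, map_add, constantCoeff_C, constantCoeff_C,
    ← coeff_zero_eq_constantCoeff_apply, coeff_mk, Nat.divisors_zero, sum_empty, add_zero,
    Nat.add_sub_cancel, Nat.factorial_succ]
  push_cast
  field_simp

theorem coeff_eisDerivSeries (k N : ℕ) :
    coeff N (eisDerivSeries k) = N * coeff N (eisSeries k) := by
  cases N with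
  | zero => simp [eisDerivSeries]
  | succ N => rw [eisDerivSeries, coeff_succ_X_mul, coeff_derivative, mul_comm, Nat.cast_succ]

theorem coeff_eisSeries_succ (n N : ℕ) :
    coeff N (eisSeries (n + 1)) = coeff N (C (constantCoeff (eisSeries (n + 1)))) +
      ∑ d ∈ N.divisors, ((d : ℂ) ^ n - (-d) ^ n) / n.factorial := by
  rcases n.even_or_odd with hn | hn
  · simp [eisSeries_of_odd hn.add_one, hn.neg_pow]
  · have hk : Even (n + 1) ∧ 2 ≤ n + 1 := ⟨hn.add_one, by have := hn.pos; omega⟩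
    have hcoeff (M : ℕ) : coeff M (eisSeries (n + 1)) = 2 / n.factorial *
        (coeff M (C (-(bernoulli (n + 1) : ℂ) / (2 * (n + 1 : ℕ)))) +
          ∑ d ∈ M.divisors, (d : ℂ) ^ n) := by
      rw [eisSeries, if_pos hk, coeff_C_mul, map_add, coeff_mk, Nat.add_sub_cancel]
    rw [← coeff_zero_eq_constantCoeff_apply, hcoeff, hcoeff, Nat.divisors_zero, sum_empty, add_zero,
      mul_add, coeff_C, coeff_C, coeff_C, if_pos rfl, mul_ite, mul_zero, mul_sum]
    simp only [hn.neg_pow]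
    congr 1
    exact sum_congr rfl fun d _ => by ring

theorem inv_mul_coeff_eisDerivSeries {n : ℕ} (hn : n ≠ 0) (N : ℕ) :
    (n : ℂ)⁻¹ * coeff N (eisDerivSeries n) =
      ∑ p ∈ N.divisorsAntidiagonal, p.1 * (((p.2 : ℂ) ^ n + (-p.2) ^ n) / n.factorial) := by
  obtain ⟨m, rfl⟩ := Nat.exists_eq_add_one_of_ne_zero hn
  have hconst : (N : ℂ) * coeff N (C (constantCoeff (eisSeries (m + 1)))) = 0 := by
    rcases eq_or_ne N 0 with rfl | hN
    · simp
    · rw [coeff_C, if_neg hN, mul_zero]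
  rw [coeff_eisDerivSeries, coeff_eisSeries_succ, mul_add, hconst, zero_add, mul_sum, mul_sum,
    ← Nat.sum_divisorsAntidiagonal' fun _ d => ((m + 1 : ℕ) : ℂ)⁻¹ *
      (N * (((d : ℂ) ^ m - (-d) ^ m) / m.factorial))]
  refine sum_congr rfl fun p hp => ?_
  have hm : (m.factorial : ℂ) ≠ 0 := Nat.cast_ne_zero.mpr m.factorial_ne_zero
  have hm' : (m : ℂ) + 1 ≠ 0 := Nat.cast_add_one_ne_zero m
  rw [← (Nat.mem_divisorsAntidiagonal.mp hp).1, Nat.factorial_succ]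
  push_cast
  field_simp
  ring

theorem two_mul_one_sub_X_mul_mk_constantCoeff_eisSeries :
    2 * (1 - X * PowerSeries.mk fun n => constantCoeff (eisSeries (n + 1))) =
      2 * bernoulliPowerSeries ℂ + X := by
  rw [show (2 : ℂ⟦X⟧) = C 2 from rfl]
  ext n
  rcases n with _ | n
  · simp [bernoulliPowerSeries]
  · simp only [coeff_C_mul, map_add, map_sub, coeff_succ_X_mul, coeff_mk, bernoulliPowerSeries,
      coeff_one, coeff_X]
    rcases (n + 1).even_or_odd with hn | hn
    · rw [constantCoeff_eisSeries hn (by grind), if_neg (by grind), if_neg (by grind)]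
      simp
      ring
    · rw [eisSeries_of_odd hn]
      rcases eq_or_ne n 0 with rfl | hn0
      · norm_num [bernoulli_one]
      · simp [bernoulli_eq_zero_of_odd hn (by omega), hn0]

theorem coeff_expSeries (a : ℂ) (n : ℕ) : coeff n (expSeries a) = a ^ n / n.factorial := by
  simp [expSeries, coeff_rescale, coeff_exp, div_eq_mul_inv]

theorem expSeries_zero : expSeries 0 = 1 := by simp [expSeries]

theorem expSeries_mul (a b : ℂ) : expSeries a * expSeries b = expSeries (a + b) :=
  exp_mul_exp_eq_exp_add a b

theorem expSeries_pow (a : ℂ) (d : ℕ) : expSeries a ^ d = expSeries (d * a) := by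
  rw [expSeries, ← map_pow, exp_pow_eq_rescale_exp, rescale_rescale]
  rfl

theorem eisGenSeries_eq (a : ℂ) :
    eisGenSeries a = C (coeff 0 (eisGenSeries a)) + mk fun N =>
      divisorPowSum N (expSeries a) - divisorPowSum N (expSeries (-a)) := by
  ext N n
  simp only [eisGenSeries, map_add, coeff_mk, divisorPowSum, expSeries_pow, map_sub, map_sum,
    coeff_expSeries, coeff_eisSeries_succ n N, mul_add, mul_sum, ← sum_sub_distrib]
  congr 1
  · simp only [coeff_C, coeff_zero_eq_constantCoeff_apply]
    split_ifs <;> simp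
  · refine sum_congr rfl fun d _ => ?_
    rw [neg_pow (d : ℂ), mul_neg, neg_pow (d * a : ℂ), mul_pow]
    ring

theorem expSeries_sub_one_mul_coeff_eisGenSeries (a : ℂ) :
    2 * (expSeries a - 1) * (1 - C a * X * coeff 0 (eisGenSeries a)) =
      C a * X * (1 + expSeries a) := by
  have hgen : coeff 0 (eisGenSeries a) =
      rescale a (PowerSeries.mk fun n => constantCoeff (eisSeries (n + 1))) := by
    ext n
    simp [eisGenSeries, coeff_rescale]
  have h := congrArg (rescale a) two_mul_one_sub_X_mul_mk_constantCoeff_eisSeries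
  have hB := congrArg (rescale a) (bernoulliPowerSeries_mul_exp_sub_one ℂ)
  simp only [map_mul, map_sub, map_add, map_one, map_ofNat, rescale_X, ← hgen] at h hB
  rw [← expSeries] at hB
  linear_combination (expSeries a - 1) * h + 2 * hB

theorem eisDerivGenSeries_eq (a : ℂ) :
    eisDerivGenSeries a = C (C (-1 / 12)) + mk fun N => ∑ p ∈ N.divisorsAntidiagonal,
      p.1 * (expSeries a ^ p.2 + expSeries (-a) ^ p.2) := by
  ext N n
  simp only [eisDerivGenSeries, map_add, coeff_mk, map_sum, ← nsmul_eq_mul, map_nsmul,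
    expSeries_pow, coeff_expSeries]
  simp only [nsmul_eq_mul]
  split_ifs with hn
  · subst hn
    rw [coeff_eisSeries_succ 1 N, one_add_one_eq_two, constantCoeff_eisSeries even_two le_rfl,
      bernoulli_two, coeff_C, coeff_C, apply_ite (coeff 0), coeff_zero_C, map_zero,
      ← Nat.sum_divisorsAntidiagonal fun d _ => ((d : ℂ) ^ 1 - (-d) ^ 1) / Nat.factorial 1]
    congr 1
    · norm_num
    · exact sum_congr rfl fun p _ => by norm_num; ring
  · have hconst : coeff n (coeff N (C (C (-1 / 12 : ℂ)))) = 0 := by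
      rw [coeff_C]
      split_ifs
      · rw [coeff_C, if_neg hn]
      · rw [map_zero]
    rw [inv_mul_coeff_eisDerivSeries hn, hconst, zero_add, mul_sum]
    refine sum_congr rfl fun p _ => ?_
    rw [mul_neg, neg_pow (p.2 : ℂ), neg_pow (p.2 * a : ℂ), mul_pow]
    ring

end FormalEisensteinSeries

section FormalIdentity

open PowerSeries

section Specialization

variable {L : Type*} [Field L] (φ : ℂ⟦X⟧ →+* L)

theorem map_expSeries_neg (a : ℂ) : φ (expSeries (-a)) = (φ (expSeries a))⁻¹ :=
  eq_inv_of_mul_eq_one_left <| by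
    rw [← map_mul, expSeries_mul, neg_add_cancel, expSeries_zero, map_one]

theorem map_eisDerivGenSeries (a : ℂ) :
    map φ (eisDerivGenSeries a) = thetaLogDerivQ (φ (expSeries a)) := by
  have hconst : φ (C (-1 / 12)) = -1 / 12 := by
    rw [← RingHom.comp_apply, map_div₀, map_neg, map_one, map_ofNat]
  rw [eisDerivGenSeries_eq, map_add, map_C, hconst, thetaLogDerivQ]
  congr 1
  ext N
  simp [map_expSeries_neg]

theorem expSeries_ne_one {a : ℂ} (ha : a ≠ 0) : expSeries a ≠ 1 := fun h => by
  simpa [coeff_expSeries, coeff_one, ha] using congrArg (coeff 1) h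

variable {φ}

theorem halfCot_map_expSeries (hφ : Function.Injective φ) {a : ℂ} (ha : a ≠ 0) :
    halfCot (φ (expSeries a)) = φ (coeff 0 (eisGenSeries a)) - (φ (C a * X))⁻¹ := by
  have hX : φ X ≠ 0 := (map_ne_zero_iff φ hφ).mpr X_ne_zero
  have hC : φ (C a) ≠ 0 := (map_ne_zero (φ.comp C)).mpr ha
  have h2 : (2 : L) ≠ 0 := map_ofNat (φ.comp C) 2 ▸ (map_ne_zero _).mpr two_ne_zero
  have hu : 1 - φ (expSeries a) ≠ 0 :=
    sub_ne_zero.mpr fun h => expSeries_ne_one ha (hφ (h.symm.trans (map_one φ).symm))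
  have h := congrArg φ (expSeries_sub_one_mul_coeff_eisGenSeries a)
  simp only [map_mul φ, map_sub, map_add, map_one, map_ofNat] at h ⊢
  rw [halfCot]
  field_simp
  linear_combination -h

theorem map_eisGenSeries (hφ : Function.Injective φ) {a : ℂ} (ha : a ≠ 0) :
    map φ (eisGenSeries a) = thetaLogDerivU (φ (expSeries a)) + C (φ (C a * X))⁻¹ := by
  rw [eisGenSeries_eq, thetaLogDerivU, halfCot_map_expSeries hφ ha, map_add, map_C, map_sub,
    add_right_comm, sub_add_cancel]
  congr 1
  ext N
  simp [oddDivisorSeries, divisorPowSum, map_expSeries_neg]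

end Specialization

theorem cyclic_of_sub_poles {R : Type*} [CommRing R] {a b c t A B C x y z p : R}
    (h : a + b + c = 0) (hA : a * t * A = 1) (hB : b * t * B = 1) (hC : c * t * C = 1)
    (hp : (x - A) * (y - B) + (y - B) * (z - C) + (z - C) * (x - A) = p) :
    a * b * c * t * (x * y + y * z + z * x - p) = -(a ^ 2 * x + b ^ 2 * y + c ^ 2 * z) := by
  have poles : A * B + B * C + C * A = 0 := by
    linear_combination t * A * B * C * h - A * B * hC - B * C * hA - C * A * hB
  linear_combination a * b * c * t * (hp - poles) + x * a * (h + c * hB + b * hC) +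
    y * b * (h + a * hC + c * hA) + z * c * (h + b * hA + a * hB)

theorem eisGenSeries_mul_cyclic {a b c : ℂ} (h : a + b + c = 0) (ha : a ≠ 0) (hb : b ≠ 0)
    (hc : c ≠ 0) :
    C (C (a * b * c) * X) * (eisGenSeries a * eisGenSeries b + eisGenSeries b * eisGenSeries c +
        eisGenSeries c * eisGenSeries a -
        (eisDerivGenSeries a + eisDerivGenSeries b + eisDerivGenSeries c)) =
      -(C (C (a ^ 2)) * eisGenSeries a + C (C (b ^ 2)) * eisGenSeries b +
        C (C (c ^ 2)) * eisGenSeries c) := by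
  let φ : ℂ⟦X⟧ →+* FractionRing ℂ⟦X⟧ := algebraMap _ _
  have hφ : Function.Injective φ := IsFractionRing.injective _ _
  have : CharZero (FractionRing ℂ⟦X⟧) :=
    charZero_of_injective_algebraMap (algebraMap ℂ (FractionRing ℂ⟦X⟧)).injective
  have hexp {z : ℂ} (hz : z ≠ 0) : φ (expSeries z) ≠ 1 := fun h =>
    expSeries_ne_one hz (hφ (h.trans (map_one φ).symm))
  have hprod : φ (expSeries a) * φ (expSeries b) * φ (expSeries c) = 1 := by
    rw [← map_mul, ← map_mul, expSeries_mul, expSeries_mul, h, expSeries_zero, map_one]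
  have hcyclic := thetaLogDerivU_mul_cyclic hprod (hexp ha) (hexp hb) (hexp hc)
  simp only [← map_eisDerivGenSeries, eq_sub_of_add_eq (map_eisGenSeries hφ ha).symm,
    eq_sub_of_add_eq (map_eisGenSeries hφ hb).symm,
    eq_sub_of_add_eq (map_eisGenSeries hφ hc).symm] at hcyclic
  have hpole {z : ℂ} (hz : z ≠ 0) :
      C (φ (C z)) * C (φ X) * C (φ (C z * X))⁻¹ = 1 := by
    rw [← map_mul, ← map_mul, ← map_mul φ, mul_inv_cancel₀, map_one]
    exact (map_ne_zero_iff φ hφ).mpr (mul_ne_zero (by simpa using hz) X_ne_zero)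
  have hsum : C (φ (C a)) + C (φ (C b)) + C (φ (C c)) = 0 := by
    simp only [← map_add, h, map_zero]
  apply map_injective φ hφ
  simp only [map_mul, map_sub, map_add, map_neg, map_pow, map_C]
  exact cyclic_of_sub_poles hsum (hpole ha) (hpole hb) (hpole hc) hcyclic

end FormalIdentity

section AntidiagonalSums

theorem sum_Icc_eq_sum_antidiagonal {M : Type*} [AddCommMonoid M] (n : ℕ) (f : ℕ → ℕ → M) :
    ∑ i ∈ Icc 1 (n + 1), f i (n + 2 - i) = ∑ x ∈ antidiagonal n, f (x.1 + 1) (x.2 + 1) := by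
  refine sum_nbij' (fun i => (i - 1, n + 1 - i)) (fun x => x.1 + 1) ?_ ?_ ?_ ?_ ?_ <;>
    grind [HasAntidiagonal.mem_antidiagonal]

theorem sum_antidiagonal_sum_choose_mul {R : Type*} [CommSemiring R] (n : ℕ) (f : ℕ × ℕ → R)
    (a b : R) :
    ∑ y ∈ antidiagonal n, (∑ x ∈ antidiagonal n, x.1.choose y.1 * f x) * a ^ y.1 * b ^ y.2 =
      ∑ x ∈ antidiagonal n, f x * (a + b) ^ x.1 * b ^ x.2 := by
  simp only [sum_mul]
  rw [sum_comm]
  refine sum_congr rfl fun x hx => ?_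
  rw [HasAntidiagonal.mem_antidiagonal] at hx
  rw [Nat.sum_antidiagonal_eq_sum_range_succ_mk, ← hx, add_pow, mul_sum, sum_mul]
  symm
  refine sum_subset_zero_on_sdiff (range_mono (by omega)) (fun p hp => ?_) fun p hp => ?_
  · rw [Finset.mem_sdiff, mem_range, mem_range] at hp
    rw [Nat.choose_eq_zero_of_lt (by omega), Nat.cast_zero, zero_mul, zero_mul, zero_mul]
  · rw [mem_range] at hp
    rw [show x.1 + x.2 - p = x.1 - p + x.2 by omega, pow_add]
    ring

variable {R : Type*} [CommRing R]

theorem sub_mul_sum_antidiagonal (n : ℕ) (x y : R) :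
    (x - y) * ∑ p ∈ antidiagonal n, x ^ p.1 * y ^ p.2 = x ^ (n + 1) - y ^ (n + 1) := by
  rw [Nat.sum_antidiagonal_eq_sum_range_succ fun i j => x ^ i * y ^ j, mul_comm, ← geom_sum₂_mul,
    Nat.add_sub_cancel]

theorem eq_zero_of_sum_antidiagonal_mul_pow_eq_zero [IsDomain R] {n : ℕ} {f : ℕ × ℕ → R} {s : Set R}
    (hs : s.Infinite) (hf : ∀ a ∈ s, ∑ x ∈ antidiagonal n, f x * a ^ x.1 = 0) {y : ℕ × ℕ}
    (hy : y ∈ antidiagonal n) : f y = 0 := by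
  set P : Polynomial R := ∑ x ∈ antidiagonal n, Polynomial.monomial x.1 (f x) with hP
  have hP0 : P = 0 := Polynomial.eq_zero_of_infinite_isRoot P <| hs.mono fun a ha => by
    simpa [hP, Polynomial.IsRoot, Polynomial.eval_finsetSum] using hf a ha
  have hcoeff := congrArg (Polynomial.coeff · y.1) hP0
  simp only [hP, Polynomial.finsetSum_coeff, Polynomial.coeff_zero, Polynomial.coeff_monomial]
    at hcoeff
  rwa [sum_eq_single y, if_pos rfl] at hcoeff
  · intro x hx hxy
    exact if_neg fun h => hxy <| by grind [HasAntidiagonal.mem_antidiagonal]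
  · exact fun h => absurd hy h

end AntidiagonalSums

noncomputable section FormalRelation

open PowerSeries

/-- The polynomial `∑ E_{i+1} * E_{j+1} * a ^ i * b ^ j`, the sum being over `i + j = n`. -/
def eisPairPoly (n : ℕ) (a b : ℂ⟦X⟧) : ℂ⟦X⟧ :=
  ∑ x ∈ antidiagonal n, eisSeries (x.1 + 1) * eisSeries (x.2 + 1) * a ^ x.1 * b ^ x.2

theorem eisPairPoly_comm (n : ℕ) (a b : ℂ⟦X⟧) : eisPairPoly n a b = eisPairPoly n b a := by
  rw [eisPairPoly, ← Nat.sum_antidiagonal_swap]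
  exact sum_congr rfl fun x _ => by simp only [Prod.fst_swap, Prod.snd_swap]; ring

theorem eisPairPoly_neg_right (n : ℕ) (a b : ℂ⟦X⟧) :
    eisPairPoly n a (-b) = -eisPairPoly n a b := by
  rw [eisPairPoly, eisPairPoly, ← sum_neg_distrib]
  refine sum_congr rfl fun x _ => ?_
  rcases x.2.even_or_odd with hx | hx
  · simp [eisSeries_of_odd hx.add_one]
  · rw [hx.neg_pow, mul_neg]

theorem coeff_eisGenSeries_mul_eisGenSeries (a b : ℂ) (n N : ℕ) :
    coeff n (coeff N (eisGenSeries a * eisGenSeries b)) =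
      coeff N (eisPairPoly n (C a) (C b)) := by
  have hterm (x : ℕ × ℕ) :
      coeff N (eisSeries (x.1 + 1) * eisSeries (x.2 + 1) * C a ^ x.1 * C b ^ x.2) =
        ∑ p ∈ antidiagonal N, a ^ x.1 * coeff p.1 (eisSeries (x.1 + 1)) *
          (b ^ x.2 * coeff p.2 (eisSeries (x.2 + 1))) := by
    rw [← map_pow, ← map_pow, coeff_mul_C, coeff_mul_C, coeff_mul, sum_mul, sum_mul]
    exact sum_congr rfl fun p _ => by ring
  simp only [eisPairPoly, map_sum, hterm]
  rw [coeff_mul, map_sum, sum_comm]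
  simp only [coeff_mul, eisGenSeries, coeff_mk]

theorem coeff_eisDerivGenSeries (a : ℂ) {n : ℕ} (hn : n ≠ 0) (N : ℕ) :
    coeff n (coeff N (eisDerivGenSeries a)) =
      coeff N (C a ^ n * (C (n : ℂ)⁻¹ * eisDerivSeries n)) := by
  rw [← map_pow, coeff_C_mul, coeff_C_mul, eisDerivGenSeries, coeff_mk, coeff_mk, if_neg hn]

theorem eisPairPoly_cyclic {a b c : ℂ} (h : a + b + c = 0) (ha : a ≠ 0) (hb : b ≠ 0) (hc : c ≠ 0)
    {n : ℕ} (hn : n ≠ 0) :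
    C (a * b * c) * (eisPairPoly n (C a) (C b) + eisPairPoly n (C b) (C c) +
        eisPairPoly n (C c) (C a) -
        (C a ^ n + C b ^ n + C c ^ n) * (C (n : ℂ)⁻¹ * eisDerivSeries n)) =
      -(C a ^ (n + 3) + C b ^ (n + 3) + C c ^ (n + 3)) * eisSeries (n + 2) := by
  ext N
  have hN := congrArg (fun F => coeff (n + 1) (coeff N F)) (eisGenSeries_mul_cyclic h ha hb hc)
  have hgen (z : ℂ) : z ^ 2 * coeff (n + 1) (coeff N (eisGenSeries z)) =
      coeff N (C z ^ (n + 3) * eisSeries (n + 2)) := by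
    rw [← map_pow, coeff_C_mul, eisGenSeries, coeff_mk, coeff_mk]
    ring
  simp only [coeff_C_mul, mul_assoc (C (a * b * c)), coeff_succ_X_mul, map_add, map_sub, map_neg,
    coeff_eisGenSeries_mul_eisGenSeries, coeff_eisDerivGenSeries _ hn, hgen] at hN
  simpa only [coeff_C_mul, map_add, map_sub, map_neg, add_mul, neg_mul] using hN

/-- The `q`-expansion of `Pf r s`. -/
def popaSeries (r s : ℕ) : ℂ⟦X⟧ :=
  eisSeries r * eisSeries s + (if r = 2 then C (s : ℂ)⁻¹ * eisDerivSeries s else 0) +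
    if s = 2 then C (r : ℂ)⁻¹ * eisDerivSeries r else 0

/-- The `q`-expansion of the right-hand side of Popa's relation for `r = y.1 + 1` and
`s = y.2 + 1`, where `n = y.1 + y.2`. -/
def popaDefect (n : ℕ) (y : ℕ × ℕ) : ℂ⟦X⟧ :=
  ∑ x ∈ antidiagonal n, (x.1.choose y.1 + x.1.choose y.2 : ℕ) *
      (popaSeries (x.1 + 1) (x.2 + 1) - eisSeries (n + 2)) -
    popaSeries (y.1 + 1) (y.2 + 1) + (-1) ^ (y.2 + 1) * eisSeries (n + 2)

theorem sum_popaSeries (n : ℕ) (hn : n ≠ 0) (a b : ℂ⟦X⟧) :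
    ∑ x ∈ antidiagonal n, popaSeries (x.1 + 1) (x.2 + 1) * a ^ x.1 * b ^ x.2 =
      eisPairPoly n a b +
        (a * b ^ (n - 1) + b * a ^ (n - 1)) * (C (n : ℂ)⁻¹ * eisDerivSeries n) := by
  obtain ⟨m, rfl⟩ := Nat.exists_eq_add_one_of_ne_zero hn
  have hsingle (c : ℂ⟦X⟧) (d : ℂ⟦X⟧) : ∑ x ∈ antidiagonal (m + 1),
      (if x.1 + 1 = 2 then C ((x.2 + 1 : ℕ) : ℂ)⁻¹ * eisDerivSeries (x.2 + 1) else 0) * c ^ x.1 *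
        d ^ x.2 = c * d ^ m * (C ((m + 1 : ℕ) : ℂ)⁻¹ * eisDerivSeries (m + 1)) := by
    rw [sum_eq_single (1, m)]
    · simp
      ring
    · rintro ⟨i, j⟩ hx hne
      rw [if_neg (by grind [HasAntidiagonal.mem_antidiagonal]), zero_mul, zero_mul]
    · exact fun h => absurd (by simp [add_comm]) h
  have hsingle' := hsingle b a
  rw [← Nat.sum_antidiagonal_swap] at hsingle'
  simp only [popaSeries, add_mul, sum_add_distrib, hsingle, eisPairPoly, Nat.add_sub_cancel,
    add_assoc]
  congr 2
  rw [← hsingle']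
  exact sum_congr rfl fun x _ => by simp only [Prod.fst_swap, Prod.snd_swap]; ring

theorem popaDefect_eq (n : ℕ) (y : ℕ × ℕ) :
    popaDefect n y =
      (∑ x ∈ antidiagonal n, x.1.choose y.1 * (popaSeries (x.1 + 1) (x.2 + 1) - eisSeries (n + 2)) +
        ∑ x ∈ antidiagonal n,
          x.1.choose y.2 * (popaSeries (x.1 + 1) (x.2 + 1) - eisSeries (n + 2))) -
      popaSeries (y.1 + 1) (y.2 + 1) - eisSeries (n + 2) * (-1) ^ y.2 := by
  simp only [popaDefect, Nat.cast_add, add_mul, sum_add_distrib, pow_succ]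
  ring

theorem sum_popaDefect (n : ℕ) (a b : ℂ⟦X⟧) :
    ∑ y ∈ antidiagonal n, popaDefect n y * a ^ y.1 * b ^ y.2 =
      ∑ x ∈ antidiagonal n, (popaSeries (x.1 + 1) (x.2 + 1) - eisSeries (n + 2)) *
          (a + b) ^ x.1 * b ^ x.2 +
        ∑ x ∈ antidiagonal n, (popaSeries (x.1 + 1) (x.2 + 1) - eisSeries (n + 2)) *
          (a + b) ^ x.1 * a ^ x.2 -
        ∑ x ∈ antidiagonal n, popaSeries (x.1 + 1) (x.2 + 1) * a ^ x.1 * b ^ x.2 -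
        eisSeries (n + 2) * ∑ x ∈ antidiagonal n, a ^ x.1 * (-b) ^ x.2 := by
  have hswap := sum_antidiagonal_sum_choose_mul n
    (fun x => popaSeries (x.1 + 1) (x.2 + 1) - eisSeries (n + 2)) b a
  rw [← Nat.sum_antidiagonal_swap, add_comm b a] at hswap
  rw [← hswap, ← sum_antidiagonal_sum_choose_mul, mul_sum, ← sum_add_distrib, ← sum_sub_distrib,
    ← sum_sub_distrib]
  refine sum_congr rfl fun y _ => ?_
  rw [popaDefect_eq, neg_pow b, Prod.fst_swap, Prod.snd_swap]
  ring

theorem sum_popaDefect_eq_zero {n : ℕ} (hn : n ≠ 0) (heven : Even n) {a b : ℂ} (ha : a ≠ 0)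
    (hb : b ≠ 0) (hab : a + b ≠ 0) :
    ∑ y ∈ antidiagonal n, popaDefect n y * C a ^ y.1 * C b ^ y.2 = 0 := by
  have key := eisPairPoly_cyclic (by ring) ha hb (neg_ne_zero.mpr hab) hn
  have geom := sub_mul_sum_antidiagonal n (C a) (-C b)
  have geom₁ := sub_mul_sum_antidiagonal n (C a + C b) (C b)
  have geom₂ := sub_mul_sum_antidiagonal n (C a + C b) (C a)
  have hodd : Odd (n + 3) := by grind
  rw [map_neg, map_add, eisPairPoly_neg_right, eisPairPoly_comm n _ (C a), eisPairPoly_neg_right,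
    heven.neg_pow, hodd.neg_pow, eisPairPoly_comm n (C b), eisPairPoly_comm n (C a) (C a + _)]
    at key
  rw [heven.add_one.neg_pow] at geom
  rw [sum_popaDefect]
  simp only [sub_mul, sum_sub_distrib, sum_popaSeries n hn, mul_assoc (eisSeries (n + 2)),
    ← mul_sum]
  obtain ⟨m, rfl⟩ := Nat.exists_eq_add_one_of_ne_zero hn
  have hne : C a * C b * (C a + C b) ≠ 0 := by
    rw [← map_add, ← map_mul, ← map_mul]
    exact (map_ne_zero_iff C C_injective).mpr (mul_ne_zero (mul_ne_zero ha hb) hab)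
  apply mul_left_cancel₀ hne
  simp only [map_mul, map_neg, map_add] at key
  rw [Nat.add_sub_cancel]
  linear_combination key - eisSeries (m + 1 + 2) * (
    (C a + C b) * C b * geom₁ + (C a + C b) * C a * geom₂ + C a * C b * geom)

theorem popaDefect_eq_zero {n : ℕ} (hn : n ≠ 0) (heven : Even n) {y : ℕ × ℕ}
    (hy : y ∈ antidiagonal n) : popaDefect n y = 0 := by
  have hinf : (C '' ({0, -1}ᶜ : Set ℂ)).Infinite :=
    (Set.toFinite _).infinite_compl.image C_injective.injOn
  refine eq_zero_of_sum_antidiagonal_mul_pow_eq_zero hinf ?_ hy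
  rintro _ ⟨a, ha, rfl⟩
  have ha : a ≠ 0 ∧ a ≠ -1 := by simpa using ha
  simpa using sum_popaDefect_eq_zero hn heven ha.1 one_ne_zero fun h =>
    ha.2 (eq_neg_of_add_eq_zero_left h)

end FormalRelation

section QExpansions

open PowerSeries

/-- The power series `F` converges at `q` to the sum `z`. -/
def HasPowerSeriesSum (F : ℂ⟦X⟧) (q z : ℂ) : Prop := HasSum (fun N => coeff N F * q ^ N) z

section HasPowerSeriesSum

variable {F G : ℂ⟦X⟧} {q z w : ℂ}

theorem hasPowerSeriesSum_C (c q : ℂ) : HasPowerSeriesSum (C c) q c := by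
  unfold HasPowerSeriesSum
  convert! hasSum_ite_eq 0 c using 2 with N
  rw [coeff_C]
  split_ifs with hN <;> simp [hN]

theorem hasPowerSeriesSum_natCast (k : ℕ) (q : ℂ) : HasPowerSeriesSum k q k := by
  simpa using hasPowerSeriesSum_C k q

theorem HasPowerSeriesSum.add (hF : HasPowerSeriesSum F q z) (hG : HasPowerSeriesSum G q w) :
    HasPowerSeriesSum (F + G) q (z + w) := by
  simpa only [HasPowerSeriesSum, map_add, add_mul] using HasSum.add hF hG

theorem HasPowerSeriesSum.sub (hF : HasPowerSeriesSum F q z) (hG : HasPowerSeriesSum G q w) :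
    HasPowerSeriesSum (F - G) q (z - w) := by
  simpa only [HasPowerSeriesSum, map_sub, sub_mul] using HasSum.sub hF hG

theorem hasPowerSeriesSum_sum {ι : Type*} {s : Finset ι} {F : ι → ℂ⟦X⟧} {z : ι → ℂ}
    (h : ∀ i ∈ s, HasPowerSeriesSum (F i) q (z i)) :
    HasPowerSeriesSum (∑ i ∈ s, F i) q (∑ i ∈ s, z i) := by
  simpa only [HasPowerSeriesSum, map_sum, sum_mul] using hasSum_sum h

theorem HasPowerSeriesSum.mul (hF : HasPowerSeriesSum F q z) (hG : HasPowerSeriesSum G q w) :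
    HasPowerSeriesSum (F * G) q (z * w) := by
  have hF' := hF.summable.norm
  have hG' := hG.summable.norm
  have hsum := (summable_norm_sum_mul_antidiagonal_of_summable_norm hF' hG').of_norm.hasSum
  rw [← tsum_mul_tsum_eq_tsum_sum_antidiagonal_of_summable_norm hF' hG', HasSum.tsum_eq hF,
    HasSum.tsum_eq hG] at hsum
  refine hsum.congr_fun fun N => ?_
  rw [coeff_mul, sum_mul]
  refine sum_congr rfl fun p hp => ?_
  rw [← HasAntidiagonal.mem_antidiagonal.mp hp, pow_add]
  ring

end HasPowerSeriesSum

theorem norm_cexp_two_pi_I_mul (τ : ℂ) :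
    ‖cexp (2 * Real.pi * I * τ)‖ = Real.exp (-(2 * Real.pi * τ.im)) := by
  simp [Complex.norm_exp]

theorem norm_cexp_two_pi_I_mul_lt_one {τ : ℂ} (hτ : 0 < τ.im) :
    ‖cexp (2 * Real.pi * I * τ)‖ < 1 := by
  rw [norm_cexp_two_pi_I_mul, Real.exp_lt_one_iff, neg_lt_zero]
  positivity

theorem isBigO_coeff_eisSeries (k : ℕ) :
    (fun N => coeff N (eisSeries k)) =O[atTop] fun N => ((N ^ k : ℕ) : ℂ) := by
  by_cases hk : Even k ∧ 2 ≤ k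
  · refine Asymptotics.IsBigO.of_bound ‖(2 / (k - 1).factorial : ℂ)‖ ?_
    filter_upwards [eventually_ne_atTop 0] with N hN
    have hσ := ArithmeticFunction.sigma_le_pow_succ (k - 1) N
    rw [ArithmeticFunction.sigma_apply, Nat.sub_add_cancel (by omega)] at hσ
    have hcoeff : coeff N (eisSeries k) =
        2 / (k - 1).factorial * (∑ d ∈ N.divisors, d ^ (k - 1) : ℕ) := by
      simp [eisSeries, hk, coeff_C, hN]
    rw [hcoeff, norm_mul, Complex.norm_natCast, Complex.norm_natCast]
    gcongr
  · simp [eisSeries, hk, Asymptotics.isBigO_zero]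

theorem summable_coeff_eisSeries_mul_pow (k : ℕ) {q : ℂ} (hq : ‖q‖ < 1) :
    Summable fun N => ‖coeff N (eisSeries k) * q ^ N‖ :=
  summable_norm_mul_geometric_of_norm_lt_one' hq (isBigO_coeff_eisSeries k)

theorem hasPowerSeriesSum_eisSeries (k : ℕ) {τ : ℂ} (hτ : 0 < τ.im) :
    HasPowerSeriesSum (eisSeries k) (cexp (2 * Real.pi * I * τ)) (Eis k τ) := by
  have hsum :=
    (summable_coeff_eisSeries_mul_pow k (norm_cexp_two_pi_I_mul_lt_one hτ)).of_norm
  have hEis : Eis k τ = ∑' N, coeff N (eisSeries k) * cexp (2 * Real.pi * I * τ) ^ N := by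
    rw [hsum.tsum_eq_zero_add, Eis]
    split_ifs with hk
    · simp [eisSeries, hk, mul_add, mul_assoc, tsum_mul_left]
    · simp [eisSeries, hk]
  rw [hEis]
  exact hsum.hasSum

theorem hasPowerSeriesSum_eisDerivSeries (k : ℕ) {τ : ℂ} (hτ : 0 < τ.im) :
    HasPowerSeriesSum (eisDerivSeries k) (cexp (2 * Real.pi * I * τ)) (Eis' k τ) := by
  let U : Set ℂ := {z | τ.im / 2 < z.im}
  have hU : IsOpen U := isOpen_lt continuous_const continuous_im
  have hτU : τ ∈ U := half_lt_self hτ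
  have hq : ‖cexp (2 * Real.pi * I * (τ / 2))‖ < 1 :=
    norm_cexp_two_pi_I_mul_lt_one (by simpa using hτ)
  have hterm (N : ℕ) (z : ℂ) :
      HasDerivAt (fun z => coeff N (eisSeries k) * cexp (2 * Real.pi * I * z) ^ N)
        (2 * Real.pi * I * (coeff N (eisDerivSeries k) * cexp (2 * Real.pi * I * z) ^ N)) z := by
    simp only [← Complex.exp_nat_mul, coeff_eisDerivSeries]
    have harg : HasDerivAt (fun z : ℂ => N * (2 * Real.pi * I * z)) (N * (2 * Real.pi * I)) z := by
      simpa using ((hasDerivAt_id z).const_mul (2 * Real.pi * I)).const_mul (N : ℂ)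
    convert! harg.cexp.const_mul (coeff N (eisSeries k)) using 1
    ring
  have hbound (N : ℕ) (z : ℂ) (hz : z ∈ U) :
      ‖coeff N (eisSeries k) * cexp (2 * Real.pi * I * z) ^ N‖ ≤
        ‖coeff N (eisSeries k) * cexp (2 * Real.pi * I * (τ / 2)) ^ N‖ := by
    rw [norm_mul, norm_mul, norm_pow, norm_pow, norm_cexp_two_pi_I_mul, norm_cexp_two_pi_I_mul]
    gcongr
    simpa using hz.le
  have heq : Eis k =ᶠ[nhds τ] fun z =>
      ∑' N, coeff N (eisSeries k) * cexp (2 * Real.pi * I * z) ^ N := by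
    filter_upwards [hU.mem_nhds hτU] with z hz
    exact (HasSum.tsum_eq (hasPowerSeriesSum_eisSeries k ((half_pos hτ).trans hz))).symm
  have hsum := hasSum_deriv_of_summable_norm (summable_coeff_eisSeries_mul_pow k hq)
    (fun N z _ => (hterm N z).differentiableAt.differentiableWithinAt) hU hbound hτU
  rw [← heq.deriv_eq] at hsum
  simp only [(hterm _ τ).deriv] at hsum
  simpa [HasPowerSeriesSum, Eis', ← mul_assoc, Complex.two_pi_I_ne_zero] using
    hsum.mul_left (2 * Real.pi * I)⁻¹

theorem hasPowerSeriesSum_popaSeries (r s : ℕ) {τ : ℂ} (hτ : 0 < τ.im) :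
    HasPowerSeriesSum (popaSeries r s) (cexp (2 * Real.pi * I * τ)) (Pf r s τ) := by
  have hdelta (i j : ℕ) : HasPowerSeriesSum
      (if i = 2 then C (j : ℂ)⁻¹ * eisDerivSeries j else 0) (cexp (2 * Real.pi * I * τ))
      (if i = 2 then Eis' j τ / j else 0) := by
    split_ifs
    · rw [div_eq_inv_mul]
      exact (hasPowerSeriesSum_C _ _).mul (hasPowerSeriesSum_eisDerivSeries j hτ)
    · simpa using hasPowerSeriesSum_C 0 (cexp (2 * Real.pi * I * τ))
  exact (((hasPowerSeriesSum_eisSeries r hτ).mul (hasPowerSeriesSum_eisSeries s hτ)).add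
    (hdelta r s)).add (hdelta s r)

theorem hasPowerSeriesSum_popaDefect (n : ℕ) (y : ℕ × ℕ) {τ : ℂ} (hτ : 0 < τ.im) :
    HasPowerSeriesSum (popaDefect n y) (cexp (2 * Real.pi * I * τ))
      (∑ x ∈ antidiagonal n, (x.1.choose y.1 + x.1.choose y.2 : ℕ) *
          (Pf (x.1 + 1) (x.2 + 1) τ - Eis (n + 2) τ) -
        Pf (y.1 + 1) (y.2 + 1) τ + (-1) ^ (y.2 + 1) * Eis (n + 2) τ) := by
  have hE := hasPowerSeriesSum_eisSeries (n + 2) hτ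
  have hsign : HasPowerSeriesSum ((-1) ^ (y.2 + 1)) (cexp (2 * Real.pi * I * τ))
      ((-1) ^ (y.2 + 1)) := by
    simpa using hasPowerSeriesSum_C ((-1) ^ (y.2 + 1)) (cexp (2 * Real.pi * I * τ))
  exact ((hasPowerSeriesSum_sum fun x _ => (hasPowerSeriesSum_natCast _ _).mul
    ((hasPowerSeriesSum_popaSeries _ _ hτ).sub hE)).sub
      (hasPowerSeriesSum_popaSeries _ _ hτ)).add (hsign.mul hE)

theorem popa_relation_antidiagonal {n : ℕ} (hn : n ≠ 0) (heven : Even n) {y : ℕ × ℕ}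
    (hy : y ∈ antidiagonal n) {τ : ℂ} (hτ : 0 < τ.im) :
    ∑ x ∈ antidiagonal n, (x.1.choose y.1 + x.1.choose y.2 : ℕ) *
          (Pf (x.1 + 1) (x.2 + 1) τ - Eis (n + 2) τ) -
        Pf (y.1 + 1) (y.2 + 1) τ + (-1) ^ (y.2 + 1) * Eis (n + 2) τ = 0 := by
  have hsum := hasPowerSeriesSum_popaDefect n y hτ
  rw [popaDefect_eq_zero hn heven hy, ← map_zero C] at hsum
  exact HasSum.unique hsum (hasPowerSeriesSum_C 0 _)

end QExpansions

/-- The identity (A.3) of Popa / equation (5) of Hirose–Sato–Tasaka: for `r, s ≥ 1`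
with `r + s ≥ 4` even and `τ` in the upper half-plane,
`0 = Σ_{i+j=r+s} (C(i-1,r-1) + C(i-1,s-1)) (P_{i,j} - E_{i+j}) - P_{r,s} + (-1)^s E_{r+s}`. -/
theorem popa_relation (r s : ℕ) (hr : 1 ≤ r) (hs : 1 ≤ s) (h4 : 4 ≤ r + s)
    (he : Even (r + s)) (τ : ℂ) (hτ : 0 < τ.im) :
    0 = (∑ i ∈ Finset.Icc 1 (r + s - 1),
          (((i - 1).choose (r - 1) + (i - 1).choose (s - 1) : ℕ) : ℂ) *
            (Pf i (r + s - i) τ - Eis (i + (r + s - i)) τ))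
      - Pf r s τ + (-1) ^ s * Eis (r + s) τ := by
  obtain ⟨p, rfl⟩ := Nat.exists_eq_add_of_le' hr
  obtain ⟨t, rfl⟩ := Nat.exists_eq_add_of_le' hs
  obtain ⟨n, hn⟩ : ∃ n, p + t = n := ⟨_, rfl⟩
  have hrs : p + 1 + (t + 1) = n + 2 := by omega
  have heven : Even n := by simpa [hrs, Nat.even_add] using he
  have hpt : (p, t) ∈ antidiagonal n := HasAntidiagonal.mem_antidiagonal.mpr hn
  rw [hrs, show n + 2 - 1 = n + 1 from rfl, Nat.add_sub_cancel, Nat.add_sub_cancel,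
    ← popa_relation_antidiagonal (by omega) heven hpt hτ,
    sum_Icc_eq_sum_antidiagonal n fun i j =>
      (((i - 1).choose p + (i - 1).choose t : ℕ) : ℂ) * (Pf i j τ - Eis (i + j) τ)]
  congr 2
  refine sum_congr rfl fun x hx => ?_
  rw [show x.1 + 1 + (x.2 + 1) = n + 2 by grind [HasAntidiagonal.mem_antidiagonal],
    Nat.add_sub_cancel]
end

section
/- For all even integers r, s ≥ 2, the function P_{r,s}(τ) = E_r(τ)E_s(τ) + δ_{r,2} E_s'(τ)/s + δ_{s,2} E_r'(τ)/r is (the underlying function of) a modular form of weight r + s on SL₂(ℤ). -/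
open Complex Finset Filter

/-!
Write `D = (2πi)⁻¹ d/dτ` and `ρ = (2πi)⁻¹ c / (cτ + d)` for `γ = (a, b; c, d)`. The normalization
of `E_k` is such that `E_k ∣[k] γ = E_k - δ_{k,2} ρ`. Since
`D (F ∣[k] γ) = D F ∣[k + 2] γ - k ρ F ∣[k] γ` and `D ρ = -ρ²`, it follows that
`(D E_k / k) ∣[k + 2] γ = D E_k / k + ρ E_k - δ_{k,2} ρ² / 2`. In `P_{r,s} ∣[r + s] γ` the terms
linear in `ρ` cancel, and the coefficient of `ρ²` is `δ_{r,2} δ_{s,2} (1 - 1/2 - 1/2) = 0`.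
-/

section QuasimodularForms

open UpperHalfPlane hiding I
open Real EisensteinSeries Derivative
open scoped Manifold MatrixGroups ModularForm Topology ArithmeticFunction.sigma

/-- The normalized logarithmic derivative `D j / j` of the automorphy factor
`j(γ, z) = c z + d`, for `D = (2πi)⁻¹ d/dz`. -/
noncomputable def denomLogDeriv (γ : SL(2, ℤ)) (z : ℍ) : ℂ :=
  (2 * π * I)⁻¹ * (γ 1 0 / denom γ z)

lemma hasDerivAt_denomLogDeriv (γ : SL(2, ℤ)) (z : ℍ) :
    HasDerivAt (denomLogDeriv γ ∘ ofComplex) (-(2 * π * I) * denomLogDeriv γ z ^ 2) z := by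
  have hdenom : denom γ z ≠ 0 := denom_ne_zero γ z
  have hderiv := (hasDerivAt_denom_zpow (γ : GL (Fin 2) ℝ) (-1) z).const_mul
    ((2 * π * I)⁻¹ * (γ 1 0 : ℂ))
  refine (hderiv.congr_of_eventuallyEq ?_).congr_deriv ?_
  · filter_upwards [isOpen_upperHalfPlaneSet.mem_nhds z.im_pos] with w hw
    simp [denomLogDeriv, ofComplex_apply_of_im_pos hw, div_eq_mul_inv, mul_assoc]
  · have hcoe : ((γ : GL (Fin 2) ℝ) 1 0 : ℂ) = γ 1 0 := by simp
    rw [hcoe, denomLogDeriv, Int.cast_neg, Int.cast_one, zpow_sub_one₀ hdenom, zpow_neg_one]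
    field_simp [two_pi_I_ne_zero]

lemma mdifferentiable_denomLogDeriv (γ : SL(2, ℤ)) : MDiff (denomLogDeriv γ) := fun z ↦
  mdifferentiableAt_iff.2 (hasDerivAt_denomLogDeriv γ z).differentiableAt

lemma normalizedDerivOfComplex_denomLogDeriv (γ : SL(2, ℤ)) :
    D (denomLogDeriv γ) = -denomLogDeriv γ ^ 2 := by
  ext z
  rw [normalizedDerivOfComplex, (hasDerivAt_denomLogDeriv γ z).deriv, neg_mul, mul_neg,
    inv_mul_cancel_left₀ two_pi_I_ne_zero, Pi.neg_apply, Pi.pow_apply]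

lemma E2_slash_eq_sub_denomLogDeriv (γ : SL(2, ℤ)) :
    E2 ∣[(2 : ℤ)] γ = E2 - (-12 : ℂ) • denomLogDeriv γ := by
  have hD2 : D2 γ = (2 * π * I : ℂ) ^ 2 • denomLogDeriv γ := by
    ext z
    rw [D2, Pi.smul_apply, denomLogDeriv, smul_eq_mul]
    field_simp [two_pi_I_ne_zero]
  have hconst : 1 / (2 * riemannZeta 2) * (2 * π * I) ^ 2 = -12 := by
    rw [riemannZeta_two, mul_pow, I_sq]
    field
  rw [E2_slash_action, hD2, smul_smul, hconst]

lemma isBoundedAtImInfty_normalizedDerivOfComplex {F : ℍ → ℂ} (hF : MDiff F)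
    (hbdd : IsBoundedAtImInfty F) : IsBoundedAtImInfty (D F) := by
  rw [isBoundedAtImInfty_iff] at hbdd ⊢
  obtain ⟨M, A, hM⟩ := hbdd
  refine ⟨‖(2 * π * I : ℂ)⁻¹‖ * M, max A 0 + 2, fun z hz ↦ ?_⟩
  have him {w : ℂ} (hw : w ∈ Metric.closedBall (z : ℂ) 1) : max A 0 < w.im := by
    have hdist : |(w - z).im| ≤ 1 :=
      (Complex.abs_im_le_norm _).trans (by simpa [dist_eq_norm] using hw)
    have := (abs_le.1 hdist).1
    simp only [Complex.sub_im, coe_im] at this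
    linarith
  have hdiff : DifferentiableOn ℂ (F ∘ ofComplex) (Metric.closedBall z 1) :=
    (UpperHalfPlane.mdifferentiable_iff.1 hF).mono fun w hw ↦ (le_max_right A 0).trans_lt (him hw)
  have hsphere (w) (hw : w ∈ Metric.sphere (z : ℂ) 1) : ‖(F ∘ ofComplex) w‖ ≤ M := by
    have him := him (Metric.sphere_subset_closedBall hw)
    rw [Function.comp_apply, ofComplex_apply_of_im_pos ((le_max_right A 0).trans_lt him)]
    exact hM _ ((le_max_left A 0).trans him.le)
  have hcauchy : ‖deriv (F ∘ ofComplex) z‖ ≤ M := by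
    simpa using Complex.norm_deriv_le_of_forall_mem_sphere_norm_le one_pos
      (hdiff.diffContOnCl_ball subset_rfl) hsphere
  rw [normalizedDerivOfComplex, norm_mul]
  gcongr

/-- Quasimodular forms `F` of weight `k` and level one whose defect `F - F ∣[k] γ` is a constant
multiple `a` of `denomLogDeriv γ`. The constant is `0` for modular forms and `-12` for `E2`. -/
structure IsQuasimodular (k : ℤ) (a : ℂ) (F : ℍ → ℂ) : Prop where
  mdifferentiable : MDiff F
  slash_eq (γ : SL(2, ℤ)) : F ∣[k] γ = F - a • denomLogDeriv γ
  isBoundedAtImInfty : IsBoundedAtImInfty F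

lemma isQuasimodular_E2 : IsQuasimodular 2 (-12) E2 where
  mdifferentiable := E2_mdifferentiable
  slash_eq := E2_slash_eq_sub_denomLogDeriv
  isBoundedAtImInfty := isBoundedAtImInfty_E2

lemma isQuasimodular_modularForm {k : ℤ} (f : ModularForm 𝒮ℒ k) : IsQuasimodular k 0 f where
  mdifferentiable := f.holo'
  slash_eq γ := by
    rw [zero_smul, sub_zero]
    exact f.slash_action_eq' _ ⟨γ, rfl⟩
  isBoundedAtImInfty := ModularFormClass.bdd_at_infty f

/-- The product of quasimodular forms `F` of weight `k` and defect constant `a`, and `G` of weight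
`l` and defect constant `b`, with the derivative terms that make it modular. It specializes to
`P_{r,s}` for `a = δ_{r,2}` and `b = δ_{s,2}`. -/
noncomputable def correctedMul (k l : ℤ) (a b : ℂ) (F G : ℍ → ℂ) : ℍ → ℂ :=
  F * G + (a / l) • D G + (b / k) • D F

namespace IsQuasimodular

variable {k l : ℤ} {a b : ℂ} {F G : ℍ → ℂ}

lemma const_smul (hF : IsQuasimodular k a F) (c : ℂ) : IsQuasimodular k (c * a) (c • F) where
  mdifferentiable := hF.mdifferentiable.const_smul c
  slash_eq γ := by rw [ModularForm.SL_smul_slash, hF.slash_eq, smul_sub, smul_smul]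
  isBoundedAtImInfty := BoundedAtFilter.smul c hF.isBoundedAtImInfty

lemma exists_modularForm (hF : IsQuasimodular k 0 F) :
    ∃ f : ModularForm (CongruenceSubgroup.Gamma 1) k, ⇑f = F := by
  have hslash (γ : SL(2, ℤ)) : F ∣[k] γ = F := by simpa using hF.slash_eq γ
  refine ⟨⟨⟨F, ?_⟩, hF.mdifferentiable, fun {c} hc ↦ ?_⟩, rfl⟩
  · rintro _ ⟨γ, -, rfl⟩
    exact hslash γ
  · rw [CongruenceSubgroup.Gamma_one_coe_eq_SL] at hc
    rw [OnePoint.isBoundedAt_iff_forall_SL2Z hc]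
    intro γ _
    rw [hslash]
    exact hF.isBoundedAtImInfty

lemma normalizedDerivOfComplex_slash (hF : IsQuasimodular k a F) (γ : SL(2, ℤ)) :
    D F ∣[k + 2] γ =
      D F + (k : ℂ) • (denomLogDeriv γ * F) + (a * (1 - k)) • denomLogDeriv γ ^ 2 := by
  have hρ := mdifferentiable_denomLogDeriv γ
  have hD := normalizedDerivOfComplex_SL_slash hF.mdifferentiable (k := k) (γ := γ)
  rw [hF.slash_eq, normalizedDerivOfComplex_sub _ _ hF.mdifferentiable (hρ.const_smul a),
    normalizedDerivOfComplex_smul _ _ hρ, normalizedDerivOfComplex_denomLogDeriv,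
    eq_sub_iff_add_eq] at hD
  rw [← hD]
  ext z
  simp only [Pi.add_apply, Pi.sub_apply, Pi.smul_apply, Pi.neg_apply, Pi.pow_apply, Pi.mul_apply,
    smul_eq_mul, denomLogDeriv]
  ring

lemma correctedMul_slash (hF : IsQuasimodular k a F) (hG : IsQuasimodular l b G)
    (hk : k ≠ 0) (hl : l ≠ 0) (ha : a ≠ 0 → k = 2) (hb : b ≠ 0 → l = 2) (γ : SL(2, ℤ)) :
    correctedMul k l a b F G ∣[k + l] γ = correctedMul k l a b F G := by
  have hDG : ((a / l) • D G) ∣[k + l] γ = (a / l) • (D G ∣[l + 2] γ) := by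
    rcases eq_or_ne a 0 with rfl | ha'
    · simp
    · rw [ModularForm.SL_smul_slash, ha ha', add_comm 2 l]
  have hDF : ((b / k) • D F) ∣[k + l] γ = (b / k) • (D F ∣[k + 2] γ) := by
    rcases eq_or_ne b 0 with rfl | hb'
    · simp
    · rw [ModularForm.SL_smul_slash, hb hb']
  have hab : a * b * (1 + (1 - l) / l + (1 - k) / k) = 0 := by
    rcases eq_or_ne a 0 with rfl | ha'
    · simp
    rcases eq_or_ne b 0 with rfl | hb'
    · simp
    rw [ha ha', hb hb']
    norm_num
  rw [correctedMul, SlashAction.add_slash, SlashAction.add_slash, ModularForm.mul_slash_SL2,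
    hDG, hDF, hF.slash_eq, hG.slash_eq, hF.normalizedDerivOfComplex_slash,
    hG.normalizedDerivOfComplex_slash]
  ext z
  simp only [Pi.add_apply, Pi.sub_apply, Pi.smul_apply, Pi.pow_apply, Pi.mul_apply, smul_eq_mul]
  have hk' : (k : ℂ) ≠ 0 := mod_cast hk
  have hl' : (l : ℂ) ≠ 0 := mod_cast hl
  linear_combination denomLogDeriv γ z ^ 2 * hab
    + a * denomLogDeriv γ z * G z * div_self hl' + b * denomLogDeriv γ z * F z * div_self hk'

lemma correctedMul (hF : IsQuasimodular k a F) (hG : IsQuasimodular l b G)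
    (hk : k ≠ 0) (hl : l ≠ 0) (ha : a ≠ 0 → k = 2) (hb : b ≠ 0 → l = 2) :
    IsQuasimodular (k + l) 0 (correctedMul k l a b F G) where
  mdifferentiable := ((hF.mdifferentiable.mul hG.mdifferentiable).add
    ((normalizedDerivOfComplex_mdifferentiable hG.mdifferentiable).const_smul _)).add
    ((normalizedDerivOfComplex_mdifferentiable hF.mdifferentiable).const_smul _)
  slash_eq γ := by
    rw [zero_smul, sub_zero, hF.correctedMul_slash hG hk hl ha hb]
  isBoundedAtImInfty := ((hF.isBoundedAtImInfty.mul hG.isBoundedAtImInfty).add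
    (BoundedAtFilter.smul _
      (isBoundedAtImInfty_normalizedDerivOfComplex hG.mdifferentiable hG.isBoundedAtImInfty))).add
    (BoundedAtFilter.smul _
      (isBoundedAtImInfty_normalizedDerivOfComplex hF.mdifferentiable hF.isBoundedAtImInfty))

end IsQuasimodular

lemma bernoulli_ne_zero_of_even {k : ℕ} (hk : Even k) : bernoulli k ≠ 0 := by
  obtain ⟨m, rfl⟩ := hk.two_dvd
  rcases eq_or_ne m 0 with rfl | hm
  · simp
  intro hB
  have hre : 1 < (2 * m : ℂ).re := by
    simpa using mod_cast (by lia : 1 < 2 * m)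
  apply riemannZeta_ne_zero_of_one_lt_re hre
  simp [riemannZeta_two_mul_nat hm, hB]

lemma tsum_sum_divisors_pow_mul_pow {R : Type*} [Semiring R] [TopologicalSpace R] (j : ℕ)
    (q : R) :
    ∑' n : ℕ, (∑ d ∈ (n + 1).divisors, (d : R) ^ j) * q ^ (n + 1) =
      ∑' n : ℕ+, (σ j n : R) * q ^ (n : ℕ) := by
  rw [tsum_pnat_eq_tsum_succ (f := fun n : ℕ ↦ (σ j n : R) * q ^ n)]
  simp [ArithmeticFunction.sigma_apply]

/-- The restriction of `Eis k` to the upper half-plane, on which the slash action is defined. -/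
noncomputable def eisensteinUHP (k : ℕ) (z : ℍ) : ℂ := Eis k z

lemma Eis'_eq_normalizedDerivOfComplex (k : ℕ) (z : ℍ) : Eis' k z = D (eisensteinUHP k) z := by
  have heq : Eis k =ᶠ[𝓝 (z : ℂ)] eisensteinUHP k ∘ ofComplex := by
    filter_upwards [isOpen_upperHalfPlaneSet.mem_nhds z.im_pos] with w hw
    simp [eisensteinUHP, ofComplex_apply_of_im_pos hw]
  rw [Eis', normalizedDerivOfComplex, heq.deriv_eq]

lemma eisensteinUHP_two : eisensteinUHP 2 = (-1 / 12 : ℂ) • E2 := by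
  ext z
  rw [eisensteinUHP, Eis, if_pos ⟨even_two, le_rfl⟩, tsum_sum_divisors_pow_mul_pow, Pi.smul_apply,
    E2_eq_tsum_cexp, bernoulli_two, Nat.factorial_one, smul_eq_mul]
  push_cast
  ring

lemma eisensteinUHP_eq_smul_E {k : ℕ} (hk : 3 ≤ k) (hk2 : Even k) :
    eisensteinUHP k = (-(bernoulli k : ℂ) / k.factorial) • ⇑(ModularForm.E hk) := by
  have hB : (bernoulli k : ℂ) ≠ 0 := mod_cast bernoulli_ne_zero_of_even hk2
  have hk0 : (k : ℂ) ≠ 0 := mod_cast (by lia : k ≠ 0)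
  have hfact : (k.factorial : ℂ) = k * (k - 1).factorial :=
    mod_cast (Nat.mul_factorial_pred (by lia)).symm
  have hfact0 : ((k - 1).factorial : ℂ) ≠ 0 := mod_cast (k - 1).factorial_ne_zero
  ext z
  rw [eisensteinUHP, Eis, if_pos ⟨hk2, by lia⟩, tsum_sum_divisors_pow_mul_pow, Pi.smul_apply,
    q_expansion_bernoulli hk hk2, hfact]
  simp only [zpow_natCast, smul_eq_mul]
  field_simp
  ring

lemma isQuasimodular_eisensteinUHP {k : ℕ} (hk : 2 ≤ k) (hk2 : Even k) :
    IsQuasimodular k (if k = 2 then 1 else 0) (eisensteinUHP k) := by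
  rcases hk.eq_or_lt with rfl | hk
  · simpa [eisensteinUHP_two] using isQuasimodular_E2.const_smul (-1 / 12)
  · simpa [eisensteinUHP_eq_smul_E hk hk2, hk.ne'] using
      (isQuasimodular_modularForm (ModularForm.E hk)).const_smul (-(bernoulli k : ℂ) / k.factorial)

lemma Pf_eq_correctedMul (r s : ℕ) (z : ℍ) :
    Pf r s z = correctedMul r s (if r = 2 then 1 else 0) (if s = 2 then 1 else 0)
      (eisensteinUHP r) (eisensteinUHP s) z := by
  simp only [Pf, correctedMul, Pi.add_apply, Pi.mul_apply, Pi.smul_apply, smul_eq_mul,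
    Eis'_eq_normalizedDerivOfComplex, Int.cast_natCast]
  split_ifs <;> simp [eisensteinUHP, div_eq_inv_mul]

end QuasimodularForms

open UpperHalfPlane in
/-- For even `r, s ≥ 2`, the function `P_{r,s}` is (the underlying function of)
a modular form of weight `r + s` on `SL₂(ℤ)`. -/
theorem Pf_is_modular_form (r s : ℕ) (hre : Even r) (hse : Even s)
    (hr : 2 ≤ r) (hs : 2 ≤ s) :
    ∃ f : ModularForm (CongruenceSubgroup.Gamma 1) ((r : ℤ) + s),
      ∀ τ : UpperHalfPlane, f τ = Pf r s ↑τ := by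
  have hdefect (k : ℕ) : (if k = 2 then 1 else 0 : ℂ) ≠ 0 → (k : ℤ) = 2 := by grind
  have hP := (isQuasimodular_eisensteinUHP hr hre).correctedMul
    (isQuasimodular_eisensteinUHP hs hse) (by lia) (by lia) (hdefect r) (hdefect s)
  obtain ⟨f, hf⟩ := hP.exists_modularForm
  exact ⟨f, fun τ ↦ by rw [hf, Pf_eq_correctedMul]⟩
end

section
/- For every even integer k > 0, the dimension of the ℂ-vector space M_k of modular forms of weight k on SL₂(ℤ) equals ⌊k/4⌋ − ⌊(k−2)/6⌋. -/
open CongruenceSubgroup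
open scoped MatrixGroups

lemma rank_modularForm_congr {𝒢 ℋ : Subgroup (GL (Fin 2) ℝ)} [𝒢.HasDetOne] [ℋ.HasDetOne]
    (h : 𝒢 = ℋ) (k : ℤ) : Module.rank ℂ (ModularForm 𝒢 k) = Module.rank ℂ (ModularForm ℋ k) := by
  subst h
  rfl

/- Both sides agree for `k = 2, 4, …, 12` and grow by one when `k` grows by `12`, since
`12 / 4 - 12 / 6 = 1`. Neither subtraction truncates when `k` is even and positive. -/
lemma div_four_sub_sub_two_div_six {k : ℕ} (hk : Even k) (hpos : 0 < k) :
    k / 4 - (k - 2) / 6 = if k ≡ 2 [MOD 12] then k / 12 else k / 12 + 1 := by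
  obtain ⟨m, rfl⟩ := hk
  split_ifs with hmod <;> rw [Nat.ModEq] at hmod <;> omega

lemma rank_modularForm_Gamma_one_of_even {k : ℕ} (hk : Even k) (hpos : 0 < k) :
    Module.rank ℂ (ModularForm Γ(1) k) = (k / 4 - (k - 2) / 6 : ℕ) :=
  calc Module.rank ℂ (ModularForm Γ(1) k)
    _ = Module.rank ℂ (ModularForm 𝒮ℒ k) := rank_modularForm_congr Gamma_one_coe_eq_SL k
    _ = (if k ≡ 2 [MOD 12] then k / 12 else k / 12 + 1 : ℕ) :=
      mod_cast ModularForm.dimension_level_one k hk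
    _ = (k / 4 - (k - 2) / 6 : ℕ) := by rw [div_four_sub_sub_two_div_six hk hpos]

/-- For every even integer `k > 0`, the dimension of the space of modular forms of
weight `k` on `SL₂(ℤ)` equals `⌊k/4⌋ - ⌊(k-2)/6⌋`. -/
theorem dim_modular_forms (k : ℕ) (hk : Even k) (hpos : 0 < k) :
    Module.finrank ℂ (ModularForm (CongruenceSubgroup.Gamma 1) (k : ℤ))
      = k / 4 - (k - 2) / 6 :=
  Module.finrank_eq_of_rank_eq (rank_modularForm_Gamma_one_of_even hk hpos)
end
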